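/- Let d ≥ 3 be a fixed integer. There exists 𝔟₀ > 0 such that for every 𝔟 ≥ 𝔟₀ there exist constants C, c, N > 0 with the following property: for all n ≥ N with nd even and all primes p with gcd(p,d) = 1 and p ≤ c·n^{1/8}, let ℳ be the set of p×p symmetric matrices M = [m_{ij}]_{0≤i,j≤p−1} with nonnegative integer entries, every diagonal entry even, total sum Σ_{i,j} m_{ij} = dn, each row sum divisible by d with n_i(M) := (Σ_j m_{ij})/d and n_0(M) < n, and Σ_{j} j·m_{ij} ≡ 0 (mod p) for every i; and let ℰ_𝔟 = {M ∈ ℳ : Σ_{i,j=0}^{p−1} (m_{ij}/(dn) − 1/p²)² ≤ 𝔟·(ln n)/n}. Then | (2^{nd/2}(nd/2)!/(nd)!) · Σ_{M ∈ ℰ_𝔟} (n!/∏_{i=0}^{p−1} n_i(M)!) · (∏_{0≤i<j≤p−1} m_{ij}!) · (∏_{i=0}^{p−1} m_{ii}!/(2^{m_{ii}/2}(m_{ii}/2)!)) · ∏_{i=0}^{p−1} #{(a¹,…,a^{n_i(M)}) ∈ (Z_{d,p})^{n_i(M)} : Σ_k Φ(aᵏ) = (m_{i0},…,m_{i,p−1})}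 − (1 + 1_{p=2}) | ≤ C·p⁴·(ln n)^{3/2}/√n, where 1_{p=2} equals 1 if p = 2 and 0 otherwise. -/

import Mathlib

open Finset

/-- The counting map `Φ` : the `j`-th coordinate of `Φ(a)` is `#{r : a r = j}`. -/
def Phi {d p : ℕ} (a : Fin d → ZMod p) (j : ZMod p) : ℕ :=
  (Finset.univ.filter (fun r : Fin d => a r = j)).card

/-!
An admissible matrix is the edge matrix of some words `f` of `n d / 2` pairs of elements of `𝔽_p`.
Counting these words turns the normalized sum into `∑ p ^ p * P(f) * ∏ᵢ ρᵢ(f)` over the words whose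
edge matrix satisfies the constraints. Here `P` is the law of the following random word: its degree
vector is `d` times the type of a uniform `a ∈ 𝔽_p ^ n`, and the word is uniform given its degrees.
The factor `ρᵢ` compares the number of ways to fill row `i` by zero-sum letters with its heuristic
value.

By Fourier inversion, `p ^ p` times the probability of the linear constraints is the sum over all
`u : 𝔽_p → 𝔽_p` of the expectation of the product of `e((u x * y + u y * x) / p)` over the edges
`(x, y)`. If `u` is constant or `p = 2`, the product only depends on the degrees and has mean `1` or
`0` according to whether `u 0 = 0`. For every other `u` there is an `x` such that the phases of the
edges `(x, x)`, `(x, 0)` and `(0, 0)` do not cancel under any weighting of the vertices, so the mean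
is exponentially small as long as all degrees are of order `n / p`.

Each `ρᵢ` is a Fourier sum over frequency words. Those near a constant word are controlled by a
recursion on the number of exceptional letters, all others by Plancherel and Gibbs' inequality,
where `d ≥ 3` leaves a spare factor. Words with far from uniform edge matrix are negligible because
the entropy of an edge is at most twice that of its endpoints.
-/

/-! ### Types of words -/

/-- The number of positions at which the word `a` takes the value `j`; as a function of `j` this is
the *type* of `a`. `Phi` is the case of words in `ZMod p` of length `d`. -/
def fiberCard {ι κ : Type*} [Fintype ι] [DecidableEq κ] (a : ι → κ) (j : κ) : ℕ :=
  #{l | a l = j}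

/-- The type class of `m`: the words `a : ι → κ` taking each value `j` exactly `m j` times. -/
def typeClass {κ : Type*} [Fintype κ] [DecidableEq κ] (ι : Type*) [Fintype ι] [DecidableEq ι]
    (m : κ → ℕ) : Finset (ι → κ) :=
  {a | fiberCard a = m}

section TypeClass

variable {ι κ : Type*} [Fintype ι]

theorem fiberCard_le_card [DecidableEq κ] (a : ι → κ) (j : κ) : fiberCard a j ≤ Fintype.card ι :=
  card_le_univ _

theorem fiberCard_comp_perm [DecidableEq κ] (a : ι → κ) (σ : Equiv.Perm ι) :
    fiberCard (a ∘ σ) = fiberCard a := by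
  ext j
  exact card_bij (fun l _ => σ l) (by simp) (fun _ _ _ _ h => σ.injective h)
    fun l hl => ⟨σ.symm l, by simpa using hl, by simp⟩

variable [Fintype κ] [DecidableEq κ]

theorem sum_fiberCard (a : ι → κ) : ∑ j, fiberCard a j = Fintype.card ι :=
  (card_eq_sum_card_fiberwise fun _ _ => mem_coe.2 (mem_univ _)).symm

theorem prod_comp_eq_prod_pow_fiberCard {R : Type*} [CommMonoid R] (a : ι → κ) (x : κ → R) :
    ∏ l, x (a l) = ∏ j, x j ^ fiberCard a j := by
  simp only [fiberCard, ← prod_const]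
  exact (prod_fiberwise' univ a x).symm

theorem sum_comp_eq_sum_fiberCard_mul {R : Type*} [CommSemiring R] (a : ι → κ) (x : κ → R) :
    ∑ l, x (a l) = ∑ j, (fiberCard a j : R) * x j := by
  simp only [fiberCard, ← nsmul_eq_mul, ← sum_const]
  exact (sum_fiberwise' univ a x).symm

variable [DecidableEq ι]

theorem mem_typeClass {m : κ → ℕ} {a : ι → κ} : a ∈ typeClass ι m ↔ fiberCard a = m := by
  simp [typeClass]

-- Both sides are the coefficient of `X ^ m` in `(∑ j, X j) ^ card ι`.
theorem card_typeClass_eq_multinomial {m : κ → ℕ} (hm : ∑ j, m j = Fintype.card ι) :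
    #(typeClass ι m) = Nat.multinomial univ m := by
  have coeff_monomial (k : κ → ℕ) : MvPolynomial.coeff (Finsupp.equivFunOnFinite.symm m)
      (∏ j, (MvPolynomial.X j : MvPolynomial κ ℕ) ^ k j) = if k = m then 1 else 0 := by
    have : ∏ j, (MvPolynomial.X j : MvPolynomial κ ℕ) ^ k j
        = MvPolynomial.monomial (Finsupp.equivFunOnFinite.symm k) 1 := by
      simp [MvPolynomial.monomial_eq, Finsupp.prod_fintype]
    rw [this, MvPolynomial.coeff_monomial]
    simp only [EmbeddingLike.apply_eq_iff_eq]
  have expand : ∑ a : ι → κ, ∏ j, (MvPolynomial.X j : MvPolynomial κ ℕ) ^ fiberCard a j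
      = ∑ k ∈ piAntidiag univ (Fintype.card ι),
          (Nat.multinomial univ k : MvPolynomial κ ℕ) * ∏ j, MvPolynomial.X j ^ k j := by
    rw [← sum_pow_eq_sum_piAntidiag, ← card_univ, ← prod_const, Fintype.prod_sum]
    exact sum_congr rfl fun a _ => (prod_comp_eq_prod_pow_fiberCard a _).symm
  have := congrArg (MvPolynomial.coeff (Finsupp.equivFunOnFinite.symm m)) expand
  simp only [← map_natCast (MvPolynomial.C (σ := κ) (R := ℕ)), MvPolynomial.coeff_sum,
    MvPolynomial.coeff_C_mul, coeff_monomial, mul_ite, mul_one, mul_zero] at this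
  rw [sum_ite_eq_of_mem' _ _ _ (by simp [hm])] at this
  rw [typeClass, card_filter]
  exact this

theorem card_typeClass_mul_prod_factorial {m : κ → ℕ} (hm : ∑ j, m j = Fintype.card ι) :
    #(typeClass ι m) * ∏ j, (m j).factorial = (Fintype.card ι).factorial := by
  rw [card_typeClass_eq_multinomial hm, mul_comm, ← hm]
  exact Nat.multinomial_spec _ _

theorem card_typeClass_pos {m : κ → ℕ} (hm : ∑ j, m j = Fintype.card ι) :
    0 < #(typeClass ι m) := by
  rw [card_typeClass_eq_multinomial hm]
  exact Nat.multinomial_pos _ _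

-- The left-hand side is the probability of the type class under the product law `q ^ ι`.
theorem card_typeClass_mul_prod_pow_le_one (m : κ → ℕ) {q : κ → ℝ} (hq : ∀ j, 0 ≤ q j)
    (hs : ∑ j, q j = 1) : (#(typeClass ι m) : ℝ) * ∏ j, q j ^ m j ≤ 1 :=
  calc (#(typeClass ι m) : ℝ) * ∏ j, q j ^ m j = ∑ a ∈ typeClass ι m, ∏ l, q (a l) := by
        rw [← nsmul_eq_mul, ← sum_const]
        refine sum_congr rfl fun a ha => ?_
        rw [prod_comp_eq_prod_pow_fiberCard, mem_typeClass.1 ha]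
    _ ≤ ∑ a : ι → κ, ∏ l, q (a l) := sum_le_sum_of_subset_of_nonneg (subset_univ _)
        fun a _ _ => prod_nonneg fun l _ => hq _
    _ = 1 := by rw [← Fintype.prod_sum fun _ => q, prod_const, hs, one_pow]

theorem pow_mul_factorial_le_pow_self_mul_factorial (m k : ℕ) :
    m ^ k * m.factorial ≤ m ^ m * k.factorial := by
  rcases le_total m k with h | h
  · calc m ^ k * m.factorial = m ^ m * (m.factorial * m ^ (k - m)) := by
          rw [mul_left_comm, ← pow_add, Nat.add_sub_cancel' h, mul_comm]
      _ ≤ m ^ m * k.factorial := by gcongr; exact Nat.factorial_mul_pow_sub_le_factorial h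
  · calc m ^ k * m.factorial = m ^ k * (k.factorial * m.descFactorial (m - k)) := by
          rw [← Nat.factorial_mul_descFactorial (Nat.sub_le m k), Nat.sub_sub_self h]
      _ ≤ m ^ k * (k.factorial * m ^ (m - k)) := by gcongr; exact Nat.descFactorial_le_pow _ _
      _ = m ^ m * k.factorial := by
          rw [mul_left_comm, ← pow_add, Nat.add_sub_cancel' h, mul_comm]

theorem multinomial_mul_prod_pow_le {κ : Type*} [Fintype κ] (k m : κ → ℕ)
    (h : ∑ j, k j = ∑ j, m j) :
    Nat.multinomial univ k * ∏ j, m j ^ k j ≤ Nat.multinomial univ m * ∏ j, m j ^ m j := by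
  have hpos : 0 < (∏ j, (k j).factorial) * ∏ j, (m j).factorial := by positivity
  refine le_of_mul_le_mul_left ?_ hpos
  calc (∏ j, (k j).factorial) * (∏ j, (m j).factorial)
        * (Nat.multinomial univ k * ∏ j, m j ^ k j)
      = (∑ j, k j).factorial * ∏ j, m j ^ k j * (m j).factorial := by
        rw [← Nat.multinomial_spec univ k, prod_mul_distrib]; ring
    _ ≤ (∑ j, k j).factorial * ∏ j, m j ^ m j * (k j).factorial := by
        exact Nat.mul_le_mul_left _
          (prod_le_prod' fun j _ => pow_mul_factorial_le_pow_self_mul_factorial _ _)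
    _ = (∏ j, (k j).factorial) * (∏ j, (m j).factorial)
        * (Nat.multinomial univ m * ∏ j, m j ^ m j) := by
        rw [h, ← Nat.multinomial_spec univ m, prod_mul_distrib]; ring

theorem card_piAntidiag_univ_le (N : ℕ) :
    #(piAntidiag (univ : Finset κ) N) ≤ (N + 1) ^ Fintype.card κ := by
  have hsub : piAntidiag (univ : Finset κ) N ⊆ Fintype.piFinset fun _ => range (N + 1) := by
    intro k hk
    have hk : ∑ j, k j = N := by simpa using hk
    simp only [Fintype.mem_piFinset, mem_range, Nat.lt_succ_iff]
    exact fun j => hk ▸ single_le_sum (f := k) (fun _ _ => Nat.zero_le _) (mem_univ j)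
  simpa using card_le_card hsub

-- Under the product of the empirical law, the class of `m` itself is the most likely type class.
theorem one_le_mul_card_typeClass_mul_prod_pow {m : κ → ℕ} {N : ℕ} (hN : Fintype.card ι = N)
    (hN0 : 0 < N) (hm : ∑ j, m j = N) :
    1 ≤ ((N : ℝ) + 1) ^ Fintype.card κ
      * ((#(typeClass ι m) : ℝ) * ∏ j, ((m j : ℝ) / N) ^ m j) := by
  have hN' : (N : ℝ) ≠ 0 := by exact_mod_cast hN0.ne'
  have hprod {k : κ → ℕ} (hk : ∑ j, k j = N) :
      ∏ j, ((m j : ℝ) / N) ^ k j = (∏ j, (m j : ℝ) ^ k j) / (N : ℝ) ^ N := by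
    simp only [div_pow]
    rw [prod_div_distrib, prod_pow_eq_pow_sum, hk]
  have hmax : ∀ k ∈ piAntidiag (univ : Finset κ) N,
      (Nat.multinomial univ k : ℝ) * ∏ j, ((m j : ℝ) / N) ^ k j
        ≤ (#(typeClass ι m) : ℝ) * ∏ j, ((m j : ℝ) / N) ^ m j := by
    intro k hk
    have hk : ∑ j, k j = N := by simpa using hk
    rw [card_typeClass_eq_multinomial (hm.trans hN.symm), hprod hk, hprod hm, ← mul_div_assoc,
      ← mul_div_assoc]
    gcongr ?_ / _
    exact_mod_cast multinomial_mul_prod_pow_le k m (hk.trans hm.symm)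
  calc (1 : ℝ) = (∑ j, (m j : ℝ) / N) ^ N := by
        rw [← sum_div, ← Nat.cast_sum, hm, div_self hN', one_pow]
    _ = ∑ k ∈ piAntidiag (univ : Finset κ) N,
          (Nat.multinomial univ k : ℝ) * ∏ j, ((m j : ℝ) / N) ^ k j :=
        sum_pow_eq_sum_piAntidiag _ _ _
    _ ≤ #(piAntidiag (univ : Finset κ) N)
          * ((#(typeClass ι m) : ℝ) * ∏ j, ((m j : ℝ) / N) ^ m j) := by
        rw [← nsmul_eq_mul]; exact sum_le_card_nsmul _ _ _ hmax
    _ ≤ _ := by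
        gcongr
        exact_mod_cast card_piAntidiag_univ_le N

end TypeClass

section CoefficientExtraction

theorem sum_stdAddChar_mul {Q : ℕ} [NeZero Q] (c : ZMod Q) :
    ∑ t : ZMod Q, ZMod.stdAddChar (t * c) = if c = 0 then (Q : ℂ) else 0 := by
  rw [AddChar.sum_mulShift _ (ZMod.isPrimitive_stdAddChar Q), ZMod.card]
  split_ifs <;> simp

variable {κ : Type*} [Fintype κ]

theorem sum_prod_stdAddChar_mul [DecidableEq κ] {Q : ℕ} [NeZero Q] (c : κ → ZMod Q) :
    ∑ t : κ → ZMod Q, ∏ k, ZMod.stdAddChar (t k * c k)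
      = if ∀ k, c k = 0 then (Q : ℂ) ^ Fintype.card κ else 0 := by
  rw [← Fintype.prod_sum fun k (t : ZMod Q) => (ZMod.stdAddChar (t * c k) : ℂ)]
  simp only [sum_stdAddChar_mul]
  split_ifs with h
  · simp [h]
  · obtain ⟨k, hk⟩ := not_forall.1 h
    exact prod_eq_zero (mem_univ k) (if_neg hk)

theorem sum_prod_stdAddChar_eq_ite [DecidableEq κ] {Q : ℕ} [NeZero Q] {r m : κ → ℕ}
    (hr : ∀ j, r j < Q) (hm : ∀ j, m j < Q) :
    ∑ θ : κ → ZMod Q, (∏ j, ZMod.stdAddChar (-(θ j * (m j : ZMod Q))))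
        * ∏ j, ZMod.stdAddChar (θ j) ^ r j
      = if r = m then (Q : ℂ) ^ Fintype.card κ else 0 := by
  have hmerge (θ : κ → ZMod Q) :
      (∏ j, ZMod.stdAddChar (-(θ j * (m j : ZMod Q)))) * ∏ j, ZMod.stdAddChar (θ j) ^ r j
        = ∏ j, ZMod.stdAddChar (θ j * ((r j : ZMod Q) - (m j : ZMod Q))) := by
    rw [← prod_mul_distrib]
    refine prod_congr rfl fun j _ => ?_
    rw [← AddChar.map_nsmul_eq_pow, ← AddChar.map_add_eq_mul, nsmul_eq_mul]
    ring_nf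
  have hcast (j : κ) : (r j : ZMod Q) - (m j : ZMod Q) = 0 ↔ r j = m j := by
    rw [sub_eq_zero, ZMod.natCast_eq_natCast_iff', Nat.mod_eq_of_lt (hr j), Nat.mod_eq_of_lt (hm j)]
  simp only [hmerge, sum_prod_stdAddChar_mul, hcast, funext_iff]

-- Average the generating function over the `Q`-th roots of unity, `Q` exceeding all exponents.
theorem norm_sum_filter_le_of_norm_generating_le {Ω : Type*} [Fintype Ω] (r : Ω → κ → ℕ)
    (m : κ → ℕ) (F : Ω → ℂ) (C : ℝ)
    (h : ∀ x : κ → ℂ, (∀ j, ‖x j‖ = 1) → ‖∑ ω, F ω * ∏ j, x j ^ r ω j‖ ≤ C) :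
    ‖∑ ω with r ω = m, F ω‖ ≤ C := by
  classical
  set Q : ℕ := ∑ ω, ∑ j, r ω j + ∑ j, m j + 1
  have hr (ω : Ω) (j : κ) : r ω j < Q := by
    have hj := single_le_sum (f := r ω) (fun _ _ => Nat.zero_le _) (mem_univ j)
    have hω := single_le_sum (f := fun ω => ∑ j, r ω j) (fun _ _ => Nat.zero_le _) (mem_univ ω)
    omega
  have hm (j : κ) : m j < Q := by
    have hj := single_le_sum (f := m) (fun _ _ => Nat.zero_le _) (mem_univ j)
    omega
  have hinv : (Q : ℂ) ^ Fintype.card κ * ∑ ω with r ω = m, F ω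
      = ∑ θ : κ → ZMod Q, (∏ j, ZMod.stdAddChar (-(θ j * (m j : ZMod Q))))
          * ∑ ω, F ω * ∏ j, ZMod.stdAddChar (θ j) ^ r ω j := by
    simp only [mul_sum, sum_filter]
    rw [sum_comm]
    refine sum_congr rfl fun ω _ => ?_
    simp only [mul_left_comm _ (F ω), ← mul_sum, sum_prod_stdAddChar_eq_ite (hr ω) hm]
    split_ifs <;> ring
  have hbound : (Q : ℝ) ^ Fintype.card κ * ‖∑ ω with r ω = m, F ω‖
      ≤ (Q : ℝ) ^ Fintype.card κ * C :=
    calc (Q : ℝ) ^ Fintype.card κ * ‖∑ ω with r ω = m, F ω‖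
        = ‖(Q : ℂ) ^ Fintype.card κ * ∑ ω with r ω = m, F ω‖ := by simp
      _ ≤ ∑ _θ : κ → ZMod Q, C := by
          rw [hinv]
          refine norm_sum_le_of_le _ fun _ _ => ?_
          rw [norm_mul, norm_prod]
          simp only [AddChar.norm_apply, prod_const_one, one_mul]
          exact h _ fun j => AddChar.norm_apply _ _
      _ = (Q : ℝ) ^ Fintype.card κ * C := by simp [ZMod.card]
  exact le_of_mul_le_mul_left hbound (by positivity)

end CoefficientExtraction

/-! ### Character sums over type classes -/

section TypeCharSum

variable {ι : Type*} [Fintype ι] [DecidableEq ι]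

theorem prod_add_single_mul {R M : Type*} [AddMonoid R] [CommMonoid M] (θ : R → M) (s : ι → R)
    (l : ι) (σ : R) :
    (∏ x, θ ((s + Pi.single l σ : ι → R) x)) * θ (s l) = (∏ x, θ (s x)) * θ (s l + σ) := by
  have herase : ∏ x ∈ univ.erase l, θ ((s + Pi.single l σ : ι → R) x)
      = ∏ x ∈ univ.erase l, θ (s x) :=
    prod_congr rfl fun x hx => by simp [ne_of_mem_erase hx]
  rw [← mul_prod_erase univ _ (mem_univ l), herase,
    ← mul_prod_erase univ (fun x => θ (s x)) (mem_univ l), Pi.add_apply, Pi.single_eq_same]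
  ac_rfl

theorem hammingNorm_add_single_le {M : Type*} [AddMonoid M] [DecidableEq M] {s : ι → M} {l : ι}
    (hl : s l ≠ 0) (σ : M) :
    hammingNorm (s + Pi.single l σ) ≤ hammingNorm s := by
  refine card_le_card fun x hx => ?_
  rcases eq_or_ne x l with rfl | h
  · simpa using hl
  · simpa [h] using hx

theorem hammingNorm_add_single {M : Type*} [AddMonoid M] [DecidableEq M] {s : ι → M} {l : ι}
    (hl : s l = 0) {σ : M} (hσ : σ ≠ 0) :
    hammingNorm (s + Pi.single l σ) = hammingNorm s + 1 := by
  rw [hammingNorm, hammingNorm, ← card_insert_of_notMem (a := l) (by simpa using hl)]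
  congr 1
  ext x
  rcases eq_or_ne x l with rfl | h
  · simpa [hl] using hσ
  · simp [h]

variable {p : ℕ} [NeZero p]

/-- The character sum `∑ₐ e(⟨s, a⟩ / p)` over the words `a` of type `m`. -/
noncomputable def typeCharSum (m : ZMod p → ℕ) (s : ι → ZMod p) : ℂ :=
  ∑ a ∈ typeClass ι m, ZMod.stdAddChar (∑ l, s l * a l)

/-- The (unnormalised) Fourier transform on `ZMod p` of a count vector `m`. -/
noncomputable def countFourier (m : ZMod p → ℕ) (σ : ZMod p) : ℂ :=
  ∑ j, (m j : ℂ) * ZMod.stdAddChar (σ * j)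

theorem norm_typeCharSum_le_card (m : ZMod p → ℕ) (s : ι → ZMod p) :
    ‖typeCharSum m s‖ ≤ #(typeClass ι m) :=
  (norm_sum_le _ _).trans (by simp)

theorem typeCharSum_comp_perm (m : ZMod p → ℕ) (s : ι → ZMod p) (σ : Equiv.Perm ι) :
    typeCharSum m (s ∘ σ) = typeCharSum m s := by
  refine sum_equiv (σ.arrowCongr (Equiv.refl _)) (fun a => ?_) fun a _ => ?_
  · rw [mem_typeClass, mem_typeClass, ← fiberCard_comp_perm a σ.symm]
    rfl
  · exact congrArg _ (Fintype.sum_equiv σ _ _ fun l => by simp)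

theorem sum_typeCharSum_add_single (m : ZMod p → ℕ) (s : ι → ZMod p) (σ : ZMod p) :
    ∑ l, typeCharSum m (s + Pi.single l σ) = countFourier m σ * typeCharSum m s := by
  simp only [typeCharSum]
  rw [sum_comm, mul_sum]
  refine sum_congr rfl fun a ha => ?_
  have hsplit (l : ι) : ZMod.stdAddChar (∑ x, (s + Pi.single l σ : ι → ZMod p) x * a x)
      = ZMod.stdAddChar (σ * a l) * ZMod.stdAddChar (∑ x, s x * a x) := by
    rw [← AddChar.map_add_eq_mul]
    simp only [Pi.add_apply, add_mul, sum_add_distrib]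
    rw [add_comm, Fintype.sum_eq_single l fun x hx => by simp [hx], Pi.single_eq_same]
  simp only [hsplit]
  rw [← sum_mul, sum_comp_eq_sum_fiberCard_mul a fun j => ZMod.stdAddChar (σ * j),
    mem_typeClass.1 ha, countFourier]

theorem typeCharSum_add_single_congr (m : ZMod p → ℕ) {s : ι → ZMod p} (σ : ZMod p) {l l₀ : ι}
    (h : s l = 0) (h₀ : s l₀ = 0) :
    typeCharSum m (s + Pi.single l σ) = typeCharSum m (s + Pi.single l₀ σ) := by
  refine Eq.trans ?_ (typeCharSum_comp_perm m _ (Equiv.swap l l₀))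
  congr 1
  funext x
  simp only [Pi.add_apply, Function.comp_apply]
  rcases eq_or_ne x l with rfl | hx
  · simp [h, h₀]
  rcases eq_or_ne x l₀ with rfl | hx₀
  · simp [h, h₀, hx, hx.symm]
  · simp [Equiv.swap_apply_of_ne_of_ne hx hx₀, hx, hx₀]

theorem card_sub_hammingNorm_mul_typeCharSum (m : ZMod p → ℕ) {s : ι → ZMod p} (σ : ZMod p)
    {l₀ : ι} (h₀ : s l₀ = 0) :
    ((Fintype.card ι : ℂ) - hammingNorm s) * typeCharSum m (s + Pi.single l₀ σ)
      = countFourier m σ * typeCharSum m s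
        - ∑ l with s l ≠ 0, typeCharSum m (s + Pi.single l σ) := by
  have hzero : ∑ l with ¬ s l ≠ 0, typeCharSum m (s + Pi.single l σ)
      = ((Fintype.card ι : ℂ) - hammingNorm s) * typeCharSum m (s + Pi.single l₀ σ) := by
    have hcard : (#{l | ¬ s l ≠ 0} : ℂ) = Fintype.card ι - hammingNorm s := by
      rw [eq_sub_iff_add_eq', ← card_univ, hammingNorm]
      exact_mod_cast card_filter_add_card_filter_not (s := univ) fun l => s l ≠ 0
    rw [← hcard, ← nsmul_eq_mul, ← sum_const]
    exact sum_congr rfl fun l hl =>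
      typeCharSum_add_single_congr m σ (not_not.1 (mem_filter.1 hl).2) h₀
  rw [← sum_typeCharSum_add_single, ← sum_filter_add_sum_filter_not univ fun l => s l ≠ 0, hzero,
    add_sub_cancel_left]

theorem card_sub_hammingNorm_mul_norm_typeCharSum_le (m : ZMod p → ℕ) (σ : ZMod p)
    {s : ι → ZMod p} {l₀ : ι} (h₀ : s l₀ = 0) {B : ℝ}
    (hB : ∀ l, s l ≠ 0 → ‖typeCharSum m (s + Pi.single l σ)‖ ≤ B) :
    ((Fintype.card ι : ℝ) - hammingNorm s) * ‖typeCharSum m (s + Pi.single l₀ σ)‖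
      ≤ ‖countFourier m σ‖ * ‖typeCharSum m s‖ + hammingNorm s * B := by
  have herr : ‖∑ l with s l ≠ 0, typeCharSum m (s + Pi.single l σ)‖ ≤ hammingNorm s * B :=
    (norm_sum_le_of_le _ fun l hl => hB l (mem_filter.1 hl).2).trans_eq
      (by rw [sum_const, nsmul_eq_mul]; rfl)
  have hn : (0 : ℝ) ≤ Fintype.card ι - hammingNorm s :=
    sub_nonneg.2 (Nat.cast_le.2 hammingNorm_le_card_fintype)
  calc _ = ‖((Fintype.card ι : ℂ) - hammingNorm s) * typeCharSum m (s + Pi.single l₀ σ)‖ := by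
        rw [norm_mul, ← Complex.ofReal_natCast, ← Complex.ofReal_natCast, ← Complex.ofReal_sub,
          Complex.norm_real, Real.norm_of_nonneg hn]
    _ ≤ ‖countFourier m σ‖ * ‖typeCharSum m s‖ + hammingNorm s * B := by
        rw [card_sub_hammingNorm_mul_typeCharSum m σ h₀, ← norm_mul]
        exact (norm_sub_le _ _).trans (by gcongr)

omit [NeZero p] in
theorem prod_add_single_le_div {θ : ZMod p → ℝ} {κ : ℝ} (hκ : 0 < κ) (hκθ : ∀ σ, κ ≤ θ σ)
    (hθ : ∀ σ, θ σ ≤ 1) (s : ι → ZMod p) (l : ι) (σ : ZMod p) :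
    ∏ x, θ ((s + Pi.single l σ : ι → ZMod p) x) ≤ (∏ x, θ (s x)) / κ := by
  have hprod (t : ι → ZMod p) : 0 ≤ ∏ x, θ (t x) := prod_nonneg fun x _ => hκ.le.trans (hκθ _)
  rw [le_div_iff₀ hκ]
  calc _ ≤ (∏ x, θ ((s + Pi.single l σ : ι → ZMod p) x)) * θ (s l) :=
        mul_le_mul_of_nonneg_left (hκθ _) (hprod _)
    _ = (∏ x, θ (s x)) * θ (s l + σ) := prod_add_single_mul θ s l σ
    _ ≤ ∏ x, θ (s x) := mul_le_of_le_one_right (hprod s) (hθ _)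

-- The recursion expresses the sum at `s` through sums at vectors of smaller Hamming norm, with main
-- term `countFourier m (s l₀) / card ι`; `κ` absorbs the error terms, of which there are
-- at most `hammingNorm s`.
theorem norm_typeCharSum_le_card_mul_prod {m : ZMod p → ℕ} {θ : ZMod p → ℝ} {κ : ℝ} (hκ0 : 0 < κ)
    (hκ1 : κ ≤ 1) (hθ0 : θ 0 = 1) (hθ1 : ∀ σ, θ σ ≤ 1)
    (hθ : ∀ σ ≠ 0, 2 * ‖countFourier m σ‖ / Fintype.card ι + κ ≤ θ σ) {s : ι → ZMod p}
    (hs : 2 * (hammingNorm s : ℝ) ≤ κ ^ 2 * Fintype.card ι) :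
    ‖typeCharSum m s‖ ≤ #(typeClass ι m) * ∏ l, θ (s l) := by
  have hκθ (σ : ZMod p) : κ ≤ θ σ := by
    rcases eq_or_ne σ 0 with rfl | hσ
    · rwa [hθ0]
    · exact le_trans (le_add_of_nonneg_left (by positivity)) (hθ σ hσ)
  induction hk : hammingNorm s using Nat.strong_induction_on generalizing s with
  | _ k ih =>
  subst hk
  by_cases hzero : s = 0
  · simpa [hzero, hθ0] using norm_typeCharSum_le_card m (0 : ι → ZMod p)
  obtain ⟨l₀, hl₀⟩ : ∃ l₀, s l₀ ≠ 0 := Function.ne_iff.1 hzero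
  obtain ⟨t, σ, ht, hσ, rfl⟩ : ∃ t σ, t l₀ = 0 ∧ σ ≠ 0 ∧ s = t + Pi.single l₀ σ :=
    ⟨s - Pi.single l₀ (s l₀), s l₀, by simp, hl₀, by simp⟩
  rw [hammingNorm_add_single ht hσ] at ih hs
  push_cast at hs
  set A : ℝ := #(typeClass ι m) * ∏ l, θ (t l) with hA
  have hA0 : 0 ≤ A := mul_nonneg (Nat.cast_nonneg _) (prod_nonneg fun l _ => hκ0.le.trans (hκθ _))
  have ih' {u : ι → ZMod p} (hu : hammingNorm u ≤ hammingNorm t) :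
      ‖typeCharSum m u‖ ≤ #(typeClass ι m) * ∏ l, θ (u l) := by
    refine ih _ (Nat.lt_succ_of_le hu) ?_ rfl
    have : (hammingNorm u : ℝ) ≤ hammingNorm t := by exact_mod_cast hu
    linarith
  have hrec := card_sub_hammingNorm_mul_norm_typeCharSum_le m σ ht (B := A / κ) fun l hl => by
    rw [hA, mul_div_assoc]
    exact (ih' (hammingNorm_add_single_le hl σ)).trans
      (mul_le_mul_of_nonneg_left (prod_add_single_le_div hκ0 hκθ hθ1 t l σ) (Nat.cast_nonneg _))
  have hmain : ‖typeCharSum m t‖ ≤ A := ih' le_rfl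
  set n : ℝ := (Fintype.card ι : ℝ)
  set k := hammingNorm t
  have hn : 0 < n := Nat.cast_pos.2 (Fintype.card_pos_iff.2 ⟨l₀⟩)
  have hprod : ∏ l, θ ((t + Pi.single l₀ σ : ι → ZMod p) l) = (∏ l, θ (t l)) * θ σ := by
    simpa [ht, hθ0] using prod_add_single_mul θ t l₀ σ
  have hk_half : n / 2 ≤ n - k := by nlinarith [pow_le_one₀ hκ0.le hκ1 (n := 2)]
  have hk_div : k / κ ≤ κ * n / 2 := by rw [div_le_iff₀ hκ0]; linarith
  rw [hprod, ← mul_assoc, ← hA]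
  refine le_of_mul_le_mul_left ?_ (half_pos hn)
  calc n / 2 * ‖typeCharSum m (t + Pi.single l₀ σ)‖
      ≤ (n - k) * ‖typeCharSum m (t + Pi.single l₀ σ)‖ := by gcongr
    _ ≤ ‖countFourier m σ‖ * A + k * (A / κ) := by
        refine hrec.trans ?_
        gcongr
    _ = ‖countFourier m σ‖ * A + A * (k / κ) := by ring
    _ ≤ ‖countFourier m σ‖ * A + A * (κ * n / 2) := by gcongr
    _ = n / 2 * (A * (2 * ‖countFourier m σ‖ / n + κ)) := by field_simp
    _ ≤ n / 2 * (A * θ σ) := by gcongr; exact hθ σ hσ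

end TypeCharSum

section SelfProb

variable {ι κ : Type*} [Fintype ι] [DecidableEq κ]

/-- The probability of the word `t` under the product of its own empirical law. -/
noncomputable def selfProb (t : ι → κ) : ℝ :=
  ∏ l, (fiberCard t (t l) : ℝ) / Fintype.card ι

theorem selfProb_nonneg (t : ι → κ) : 0 ≤ selfProb t :=
  prod_nonneg fun _ _ => by positivity

theorem fiberCard_add_hammingDist_const (t : ι → κ) (c : κ) :
    fiberCard t c + hammingDist t (Function.const ι c) = Fintype.card ι :=
  card_filter_add_card_filter_not fun l => t l = c

theorem selfProb_le_half_pow {t : ι → κ} {K : ℕ} (hK : K ≤ Fintype.card ι)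
    (ht : ∀ c, K ≤ hammingDist t (Function.const ι c)) : selfProb t ≤ (1 / 2) ^ K := by
  have hprob (l : ι) : (fiberCard t (t l) : ℝ) / Fintype.card ι ≤ 1 :=
    div_le_one_of_le₀ (by exact_mod_cast fiberCard_le_card t (t l)) (Nat.cast_nonneg _)
  obtain ⟨S, hS, hhalf⟩ : ∃ S : Finset ι, K ≤ #S ∧
      ∀ l ∈ S, 2 * fiberCard t (t l) ≤ Fintype.card ι := by
    by_cases h : ∃ c, Fintype.card ι < 2 * fiberCard t c
    · obtain ⟨c, hc⟩ := h
      refine ⟨({l | t l ≠ c} : Finset ι), ht c, fun l hl => ?_⟩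
      have hle : fiberCard t (t l) ≤ hammingDist t (Function.const ι c) :=
        card_le_card fun x hx => by
          rw [mem_filter] at hx hl ⊢
          exact ⟨hx.1, hx.2 ▸ hl.2⟩
      have := fiberCard_add_hammingDist_const t c
      omega
    · push Not at h
      exact ⟨univ, hK, fun l _ => h _⟩
  calc selfProb t ≤ ∏ l ∈ S, (fiberCard t (t l) : ℝ) / Fintype.card ι :=
        prod_le_prod_of_subset_of_le_one (subset_univ S) (fun _ _ => by positivity)
          fun l _ _ => hprob l
    _ ≤ ∏ _l ∈ S, (1 / 2 : ℝ) := by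
        refine prod_le_prod (fun _ _ => by positivity) fun l hl => ?_
        refine div_le_of_le_mul₀ (Nat.cast_nonneg _) (by norm_num) ?_
        have : (2 * fiberCard t (t l) : ℝ) ≤ Fintype.card ι := by exact_mod_cast hhalf l hl
        linarith
    _ ≤ (1 / 2) ^ K := by
        rw [prod_const]
        exact pow_le_pow_of_le_one (by norm_num) (by norm_num) hS

variable [Fintype κ]

-- Group the words by their type: each type class has total mass at most `1`.
theorem sum_selfProb_le [DecidableEq ι] [Nonempty ι] :
    ∑ t : ι → κ, selfProb t ≤ ((Fintype.card ι : ℝ) + 1) ^ Fintype.card κ := by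
  have hmaps : ∀ t ∈ (univ : Finset (ι → κ)), fiberCard t ∈ piAntidiag univ (Fintype.card ι) :=
    fun t _ => by simp [sum_fiberCard]
  have hclass : ∀ ν ∈ piAntidiag (univ : Finset κ) (Fintype.card ι),
      ∑ t : ι → κ with fiberCard t = ν, selfProb t ≤ 1 := by
    intro ν hν
    have hν : ∑ j, ν j = Fintype.card ι := by simpa using hν
    refine Eq.trans_le ?_ (card_typeClass_mul_prod_pow_le_one (ι := ι) ν
      (q := fun j => (ν j : ℝ) / Fintype.card ι) (fun j => by positivity) ?_)
    · rw [← nsmul_eq_mul, ← sum_const]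
      refine sum_congr rfl fun t ht => ?_
      rw [selfProb, prod_comp_eq_prod_pow_fiberCard t fun j =>
        (fiberCard t j : ℝ) / Fintype.card ι, mem_typeClass.1 ht]
    · rw [← sum_div, ← Nat.cast_sum, hν, div_self (by positivity)]
  rw [← sum_fiberwise_of_maps_to hmaps]
  refine (sum_le_card_nsmul _ _ 1 hclass).trans ?_
  rw [nsmul_eq_mul, mul_one]
  exact_mod_cast card_piAntidiag_univ_le _

-- Gibbs' inequality, obtained from AM-GM for the ratios of `y` to the empirical law of `t`.
theorem prod_comp_le_sum_pow_mul_selfProb [Nonempty ι] (t : ι → κ) {y : κ → ℝ}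
    (hy : ∀ j, 0 ≤ y j) :
    ∏ l, y (t l) ≤ (∑ j, y j) ^ Fintype.card ι * selfProb t := by
  set n := Fintype.card ι
  have hn : (0 : ℝ) < n := by simp only [n]; positivity
  have hpos (l : ι) : (0 : ℝ) < fiberCard t (t l) := by
    exact_mod_cast card_pos.2 ⟨l, by simp⟩
  set z : κ → ℝ := fun j => y j / ((fiberCard t j : ℝ) / n) with hz
  have hz0 (l : ι) : 0 ≤ z (t l) := div_nonneg (hy _) (by positivity)
  have hmean : (∑ l, z (t l)) / n ≤ ∑ j, y j := by
    rw [sum_comp_eq_sum_fiberCard_mul, sum_div]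
    refine sum_le_sum fun j _ => ?_
    rcases eq_or_ne (fiberCard t j : ℝ) 0 with h | h
    · simpa [h] using hy j
    · simp only [hz]
      field_simp
      exact le_rfl
  have hgeom : ∏ l, z (t l) ≤ (∑ j, y j) ^ n := by
    have hamgm := Real.geom_mean_le_arith_mean univ (fun _ => 1) (fun l => z (t l))
      (fun _ _ => zero_le_one) (by simp [Fintype.card_pos]) fun l _ => hz0 l
    simp only [Real.rpow_one, one_mul, sum_const, card_univ, nsmul_eq_mul, mul_one] at hamgm
    calc ∏ l, z (t l) = ((∏ l, z (t l)) ^ (n : ℝ)⁻¹) ^ n :=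
          (Real.rpow_inv_natCast_pow (prod_nonneg fun l _ => hz0 l) Fintype.card_ne_zero).symm
      _ ≤ (∑ j, y j) ^ n := by
          gcongr
          · exact Real.rpow_nonneg (prod_nonneg fun l _ => hz0 l) _
          · exact hamgm.trans hmean
  calc ∏ l, y (t l) = (∏ l, z (t l)) * selfProb t := by
        rw [selfProb, ← prod_mul_distrib]
        refine prod_congr rfl fun l _ => ?_
        have := (hpos l).ne'
        simp only [hz, n]
        field_simp
    _ ≤ _ := by gcongr; exact selfProb_nonneg t

end SelfProb

section RowCount

theorem addChar_sum_eq_prod {ι A M : Type*} [AddCommMonoid A] [CommMonoid M] (ψ : AddChar A M)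
    (s : Finset ι) (f : ι → A) : ψ (∑ i ∈ s, f i) = ∏ i ∈ s, ψ (f i) :=
 map_prod ψ.toMonoidHom (fun i => Multiplicative.ofAdd (f i)) s

variable {p : ℕ}

theorem sum_Phi_curry {d N : ℕ} (a : Fin N × Fin d → ZMod p) (j : ZMod p) :
    ∑ k, Phi (fun r => a (k, r)) j = fiberCard a j := by
  simp only [Phi, fiberCard, card_filter, Fintype.sum_prod_type]

variable [NeZero p]

/-- The number of words `a¹ ⋯ a^N` of zero-sum letters `aᵏ ∈ Z_{d,p}` with `∑ₖ Φ(aᵏ) = m`. -/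
def rowCount (d N : ℕ) (m : ZMod p → ℕ) : ℕ :=
  #{a : Fin N → Fin d → ZMod p | (∀ k, ∑ r, a k r = 0) ∧ ∀ j : ZMod p, ∑ k, Phi (a k) j = m j}

theorem rowCount_eq_card_filter_typeClass (d N : ℕ) (m : ZMod p → ℕ) :
    rowCount d N m = #{a ∈ typeClass (Fin N × Fin d) m | ∀ k, ∑ r, a (k, r) = 0} := by
  refine (card_equiv (Equiv.curry _ _ _) fun a => ?_).symm
  simp only [mem_filter, mem_typeClass, mem_univ, true_and, funext_iff, ← sum_Phi_curry]
  exact and_comm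

theorem sum_stdAddChar_fst_eq_ite {ι κ : Type*} [Fintype ι] [DecidableEq ι] [Fintype κ]
    (a : ι × κ → ZMod p) [Decidable (∀ k, ∑ r, a (k, r) = 0)] :
    ∑ t : ι → ZMod p, ZMod.stdAddChar (∑ l : ι × κ, (t ∘ Prod.fst) l * a l)
      = if ∀ k, ∑ r, a (k, r) = 0 then (p : ℂ) ^ Fintype.card ι else 0 := by
  have hfactor (t : ι → ZMod p) : (ZMod.stdAddChar (∑ l : ι × κ, (t ∘ Prod.fst) l * a l) : ℂ)
      = ∏ k, ZMod.stdAddChar (t k * ∑ r, a (k, r)) := by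
    simp only [Fintype.sum_prod_type, addChar_sum_eq_prod, Function.comp_apply, ← mul_sum]
  simp only [hfactor, sum_prod_stdAddChar_mul]
  congr

theorem pow_mul_rowCount_eq_sum_typeCharSum (d N : ℕ) (m : ZMod p → ℕ) :
    (p : ℂ) ^ N * rowCount d N m
      = ∑ t : Fin N → ZMod p, typeCharSum m (t ∘ Prod.fst : Fin N × Fin d → ZMod p) := by
  simp only [typeCharSum]
  rw [sum_comm]
  simp only [sum_stdAddChar_fst_eq_ite, Fintype.card_fin]
  rw [← sum_filter, sum_const, rowCount_eq_card_filter_typeClass, nsmul_eq_mul, mul_comm]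

end RowCount

/-! ### Zero-sum rows -/

section ChiSq

variable {κ : Type*} [Fintype κ]

/-- The `χ²`-divergence from the uniform law of the probability vector proportional to `q`. -/
noncomputable def chiSq (q : κ → ℝ) : ℝ :=
  Fintype.card κ * ∑ j, (q j / ∑ i, q i - 1 / Fintype.card κ) ^ 2

theorem chiSq_nonneg (q : κ → ℝ) : 0 ≤ chiSq q := by
  unfold chiSq; positivity

theorem card_mul_sum_div_sum_sq {q : κ → ℝ} (hq : ∑ j, q j ≠ 0) :
    Fintype.card κ * ∑ j, (q j / ∑ i, q i) ^ 2 = 1 + chiSq q := by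
  have hκ : (Fintype.card κ : ℝ) ≠ 0 := by
    obtain ⟨j, -, -⟩ := exists_ne_zero_of_sum_ne_zero hq
    exact_mod_cast (Fintype.card_pos_iff.2 ⟨j⟩).ne'
  have hsum : ∑ j, q j / ∑ i, q i = 1 := by rw [← sum_div, div_self hq]
  simp only [chiSq, sub_sq, sum_add_distrib, sum_sub_distrib, mul_one_div, ← sum_div,
    ← mul_sum, hsum, sum_const, card_univ, nsmul_eq_mul]
  field_simp
  ring

end ChiSq

section Fourier

variable {p : ℕ} [NeZero p]

theorem sum_norm_sum_mul_stdAddChar_sq (c : ZMod p → ℂ) :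
    ∑ σ : ZMod p, ‖∑ j, c j * ZMod.stdAddChar (σ * j)‖ ^ 2 = p * ∑ j, ‖c j‖ ^ 2 := by
  have hexpand (σ : ZMod p) : (‖∑ j, c j * ZMod.stdAddChar (σ * j)‖ : ℂ) ^ 2
      = ∑ j, ∑ k, c j * (starRingEnd ℂ) (c k) * ZMod.stdAddChar (σ * (j - k)) := by
    rw [← Complex.mul_conj', map_sum, sum_mul_sum]
    refine sum_congr rfl fun j _ => sum_congr rfl fun k _ => ?_
    rw [map_mul (starRingEnd ℂ), ← AddChar.map_neg_eq_conj, mul_sub, sub_eq_add_neg,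
      AddChar.map_add_eq_mul]
    ring
  have hcomplex : ((∑ σ : ZMod p, ‖∑ j, c j * ZMod.stdAddChar (σ * j)‖ ^ 2 : ℝ) : ℂ)
      = (p * ∑ j, ‖c j‖ ^ 2 : ℝ) := by
    push_cast
    simp only [hexpand]
    rw [sum_comm, mul_sum]
    refine sum_congr rfl fun j _ => ?_
    rw [sum_comm]
    simp only [← mul_sum, sum_stdAddChar_mul, sub_eq_zero, mul_ite, mul_zero, sum_ite_eq, mem_univ,
      if_true, ← Complex.mul_conj']
    ring
  exact_mod_cast hcomplex

theorem sum_norm_countFourier_div_sq {m : ZMod p → ℕ} {M : ℕ} (hM : 0 < M) (hm : ∑ j, m j = M) :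
    ∑ σ ∈ univ.erase 0, (‖countFourier m σ‖ / M) ^ 2 = chiSq (fun j => (m j : ℝ)) := by
  have hM' : (M : ℝ) ≠ 0 := by exact_mod_cast hM.ne'
  have hsum : ∑ j, (m j : ℝ) = M := by exact_mod_cast hm
  have hzero : ‖countFourier m (0 : ZMod p)‖ / M = 1 := by
    rw [countFourier]
    simp only [zero_mul, AddChar.map_zero_eq_one, mul_one, ← Nat.cast_sum, hm, Complex.norm_natCast]
    exact div_self hM'
  have hall : ∑ σ : ZMod p, (‖countFourier m σ‖ / M) ^ 2 = 1 + chiSq fun j => (m j : ℝ) := by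
    rw [← card_mul_sum_div_sum_sq (by rwa [hsum])]
    simp only [div_pow, ← sum_div, countFourier, sum_norm_sum_mul_stdAddChar_sq, hsum, ZMod.card,
      Complex.norm_natCast, mul_div_assoc]
  rw [← add_sum_erase _ _ (mem_univ 0), hzero] at hall
  linarith

variable {ι : Type*} [Fintype ι] [DecidableEq ι]

theorem typeCharSum_zero (m : ZMod p → ℕ) : typeCharSum m (0 : ι → ZMod p) = #(typeClass ι m) := by
  simp [typeCharSum]

theorem typeCharSum_add_const {m : ZMod p → ℕ} (hc : ∑ j : ZMod p, j * (m j : ZMod p) = 0)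
    (s : ι → ZMod p) (c : ZMod p) :
    typeCharSum m (s + Function.const ι c) = typeCharSum m s := by
  refine sum_congr rfl fun a ha => ?_
  have hsum : ∑ l, a l = 0 := by
    rw [sum_comp_eq_sum_fiberCard_mul a fun j => j, mem_typeClass.1 ha, ← hc]
    exact sum_congr rfl fun j _ => mul_comm _ _
  simp only [Pi.add_apply, Function.const_apply, add_mul, sum_add_distrib, ← mul_sum, hsum,
    mul_zero, add_zero]

-- Weighting the words by the law `m / card ι` only costs the polynomial factor, by
-- `one_le_mul_card_typeClass_mul_prod_pow`.
theorem norm_typeCharSum_le_of_prod_norm_le {m : ZMod p → ℕ} [Nonempty ι]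
    (hm : ∑ j, m j = Fintype.card ι) (s : ι → ZMod p) {V : ℝ}
    (hV : ∀ x : ZMod p → ℂ, (∀ j, ‖x j‖ = 1) →
      ∏ l, ‖∑ j, ((m j / Fintype.card ι : ℝ) : ℂ) * x j * ZMod.stdAddChar (s l * j)‖ ≤ V) :
    ‖typeCharSum m s‖ ≤ #(typeClass ι m) * (((Fintype.card ι : ℝ) + 1) ^ p * V) := by
  set r : ZMod p → ℝ := fun j => m j / Fintype.card ι
  set ρ : ℝ := ∏ j, r j ^ m j
  have hρ : 0 < ρ := by
    refine prod_pos fun j _ => ?_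
    rcases Nat.eq_zero_or_pos (m j) with h | h
    · simp [h]
    · simp only [r]; positivity
  have hweight : (ρ : ℂ) * typeCharSum m s
      = ∑ a : ι → ZMod p with fiberCard a = m,
          ∏ l, ((r (a l) : ℂ) * ZMod.stdAddChar (s l * a l)) := by
    rw [typeCharSum, mul_sum]
    refine sum_congr rfl fun a ha => ?_
    rw [prod_mul_distrib, addChar_sum_eq_prod, prod_comp_eq_prod_pow_fiberCard a fun j => (r j : ℂ),
      mem_typeClass.1 ha]
    simp [ρ]
  have hextract : ρ * ‖typeCharSum m s‖ ≤ V := by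
    rw [← Real.norm_of_nonneg hρ.le, ← Complex.norm_real, ← norm_mul, hweight]
    refine norm_sum_filter_le_of_norm_generating_le _ m _ V fun x hx =>
      le_trans (le_of_eq ?_) (hV x hx)
    rw [← norm_prod, Fintype.prod_sum]
    congr 1
    refine sum_congr rfl fun a _ => ?_
    rw [← prod_comp_eq_prod_pow_fiberCard a x, ← prod_mul_distrib]
    exact prod_congr rfl fun l _ => by ring
  have hV0 : 0 ≤ V := le_trans (by positivity) hextract
  have htype := one_le_mul_card_typeClass_mul_prod_pow (ι := ι) rfl Fintype.card_pos hm
  rw [ZMod.card] at htype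
  refine le_of_mul_le_mul_left ?_ hρ
  calc ρ * ‖typeCharSum m s‖ ≤ V * 1 := by rwa [mul_one]
    _ ≤ V * (((Fintype.card ι : ℝ) + 1) ^ p * (#(typeClass ι m) * ρ)) := by gcongr
    _ = _ := by ring

end Fourier

section FarSum

variable {p : ℕ} [NeZero p]

theorem prod_fst_eq_prod_pow {ι R : Type*} [Fintype ι] [CommMonoid R] (d : ℕ) (x : ι → R) :
    ∏ l : ι × Fin d, x l.1 = (∏ k, x k) ^ d := by
  simp [Fintype.prod_prod_type, prod_pow]

-- Each factor below is repeated `d ≥ 3` times while Plancherel and Gibbs control its square; the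
-- spare third power gives the factor `selfProb t ^ (1 / 2)`.
theorem prod_norm_le_sqrt_pow_mul_selfProb {ι : Type*} [Fintype ι] [Nonempty ι] {d K : ℕ}
    (hd : 3 ≤ d) {t : ι → ZMod p} (hK : K ≤ Fintype.card ι)
    (ht : ∀ c, K ≤ hammingDist t (Function.const ι c)) (c : ZMod p → ℂ) :
    ∏ l : ι × Fin d, ‖∑ j, c j * ZMod.stdAddChar (t l.1 * j)‖
      ≤ √((p * ∑ j, ‖c j‖ ^ 2) ^ Fintype.card ι) ^ d * (selfProb t * √((1 / 2) ^ K)) := by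
  set L : ZMod p → ℝ := fun σ => ‖∑ j, c j * ZMod.stdAddChar (σ * j)‖
  set G : ℝ := (p * ∑ j, ‖c j‖ ^ 2) ^ Fintype.card ι
  have hq0 := selfProb_nonneg t
  have hqK := selfProb_le_half_pow hK ht
  have hq1 : √(selfProb t) ≤ 1 :=
    Real.sqrt_le_one.2 (hqK.trans (pow_le_one₀ (by norm_num) (by norm_num)))
  have hgibbs : (∏ k, L (t k)) ^ 2 ≤ G * selfProb t := by
    rw [← prod_pow]
    have := prod_comp_le_sum_pow_mul_selfProb t (y := fun σ => L σ ^ 2) fun _ => sq_nonneg _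
    rwa [sum_norm_sum_mul_stdAddChar_sq] at this
  have hroot : ∏ k, L (t k) ≤ √G * √(selfProb t) := by
    rw [← Real.sqrt_mul (by positivity)]
    exact Real.le_sqrt_of_sq_le hgibbs
  calc ∏ l : ι × Fin d, L (t l.1) = (∏ k, L (t k)) ^ d := prod_fst_eq_prod_pow d fun k => L (t k)
    _ ≤ (√G * √(selfProb t)) ^ d :=
        pow_le_pow_left₀ (prod_nonneg fun _ _ => norm_nonneg _) hroot d
    _ = √G ^ d * √(selfProb t) ^ d := mul_pow _ _ _
    _ ≤ √G ^ d * √(selfProb t) ^ 3 := by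
        gcongr ?_ * ?_; exact pow_le_pow_of_le_one (by positivity) hq1 hd
    _ = √G ^ d * (selfProb t * √(selfProb t)) := by rw [pow_succ √(selfProb t), Real.sq_sqrt hq0]
    _ ≤ _ := by gcongr

theorem norm_typeCharSum_le_of_far_from_const {d N K : ℕ} (hd : 3 ≤ d) (hN : 0 < N) (hK : K ≤ N)
    {m : ZMod p → ℕ} (hm : ∑ j, m j = d * N) {t : Fin N → ZMod p}
    (ht : ∀ c, K ≤ hammingDist t (Function.const _ c)) :
    ‖typeCharSum m (t ∘ Prod.fst : Fin N × Fin d → ZMod p)‖ ≤ #(typeClass (Fin N × Fin d) m) *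
      (((d * N : ℕ) + 1 : ℝ) ^ p *
        (√((1 + chiSq fun j => (m j : ℝ)) ^ N) ^ d * (selfProb t * √((1 / 2) ^ K)))) := by
  have : NeZero N := ⟨hN.ne'⟩
  have : NeZero d := ⟨by omega⟩
  have hcard : Fintype.card (Fin N × Fin d) = d * N := by simp [mul_comm]
  have hsum : ∑ j, (m j : ℝ) = (d * N : ℕ) := by exact_mod_cast hm
  rw [← hcard]
  refine norm_typeCharSum_le_of_prod_norm_le (hm.trans hcard.symm) _ fun x hx => ?_
  have hchi : p * ∑ j, ‖((m j / (d * N : ℕ) : ℝ) : ℂ) * x j‖ ^ 2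
      = 1 + chiSq fun j => (m j : ℝ) := by
    rw [← card_mul_sum_div_sum_sq (by rw [hsum]; positivity), hsum, ZMod.card]
    simp only [norm_mul, hx, mul_one, Complex.norm_real, Real.norm_eq_abs, sq_abs]
  have := prod_norm_le_sqrt_pow_mul_selfProb hd (by simpa using hK) ht
    fun j => ((m j / (d * N : ℕ) : ℝ) : ℂ) * x j
  rw [hchi, Fintype.card_fin] at this
  simpa only [hcard, Function.comp_apply] using this

end FarSum

section SparseWords

variable {ι R : Type*} [Fintype ι] [DecidableEq ι] [Fintype R] [DecidableEq R] [Zero R]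

theorem sum_prod_mul_pow_hammingNorm {S : Type*} [CommSemiring S] {w : R → S} (hw0 : w 0 = 1)
    (z : S) :
    ∑ t : ι → R, (∏ l, w (t l)) * z ^ hammingNorm t
      = (1 + (∑ σ ∈ univ.erase 0, w σ) * z) ^ Fintype.card ι := by
  have hletter : 1 + (∑ σ ∈ univ.erase 0, w σ) * z = ∑ σ, w σ * if σ ≠ 0 then z else 1 := by
    rw [← add_sum_erase _ _ (mem_univ 0), hw0, sum_mul]
    rw [if_neg (not_not_intro rfl), one_mul]
    exact congr_arg (1 + ·) (sum_congr rfl fun σ hσ => by rw [if_pos (ne_of_mem_erase hσ)])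
  rw [hletter, ← card_univ, ← prod_const, Fintype.prod_sum]
  refine sum_congr rfl fun t _ => ?_
  rw [prod_mul_distrib, prod_ite, prod_const, prod_const_one, mul_one, hammingNorm]

theorem sum_prod_hammingNorm_eq_le [Nonempty ι] {k : ℕ} (hk : 0 < k) {w : R → ℝ}
    (hw : ∀ σ, 0 ≤ w σ) (hw0 : w 0 = 1) {B : ℝ} (hB0 : 0 < B)
    (hB : ∑ σ ∈ univ.erase 0, w σ ≤ B) :
    ∑ t : ι → R with hammingNorm t = k, ∏ l, w (t l) ≤ (3 * Fintype.card ι * B / k) ^ k := by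
  set N := Fintype.card ι
  have hN : 0 < N := Fintype.card_pos
  set z : ℝ := k / (N * B) with hz
  have : 0 < z := by positivity
  have hgen : (∑ t : ι → R with hammingNorm t = k, ∏ l, w (t l)) * z ^ k ≤ 3 ^ k :=
    calc (∑ t : ι → R with hammingNorm t = k, ∏ l, w (t l)) * z ^ k
        = ∑ t : ι → R with hammingNorm t = k, (∏ l, w (t l)) * z ^ hammingNorm t := by
          rw [sum_mul]
          exact sum_congr rfl fun t ht => by rw [(mem_filter.1 ht).2]
      _ ≤ ∑ t : ι → R, (∏ l, w (t l)) * z ^ hammingNorm t :=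
          sum_le_sum_of_subset_of_nonneg (filter_subset _ _) fun t _ _ =>
            mul_nonneg (prod_nonneg fun _ _ => hw _) (by positivity)
      _ = (1 + (∑ σ ∈ univ.erase 0, w σ) * z) ^ N := sum_prod_mul_pow_hammingNorm hw0 z
      _ ≤ Real.exp (B * z) ^ N := by
          have : 0 ≤ ∑ σ ∈ univ.erase 0, w σ := sum_nonneg fun σ _ => hw σ
          gcongr
          rw [add_comm]
          exact le_trans (by gcongr) (Real.add_one_le_exp _)
      _ = Real.exp 1 ^ k := by
          rw [← Real.exp_nat_mul, ← Real.exp_nat_mul, hz]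
          congr 1
          field_simp
      _ ≤ 3 ^ k := by gcongr; exact Real.exp_one_lt_three.le
  rw [← le_div_iff₀ (by positivity), ← div_pow] at hgen
  refine hgen.trans_eq (congr_arg (· ^ k) ?_)
  rw [hz]
  field_simp

end SparseWords

section NearSum

variable {p : ℕ} [NeZero p]

/-- The factor by which each occurrence of the frequency `σ` in a word `s` damps
`typeCharSum m s`, with slack `κ` for the dependence between letters. -/
noncomputable def decayRate (m : ZMod p → ℕ) (κ : ℝ) (σ : ZMod p) : ℝ :=
  if σ = 0 then 1 else 2 * (‖countFourier m σ‖ / (∑ j, m j : ℕ)) + κ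

theorem decayRate_nonneg (m : ZMod p → ℕ) {κ : ℝ} (hκ : 0 ≤ κ) (σ : ZMod p) :
    0 ≤ decayRate m κ σ := by
  unfold decayRate
  split_ifs <;> positivity

theorem norm_countFourier_div_le_sqrt_chiSq {m : ZMod p → ℕ} (hm : 0 < ∑ j, m j) {σ : ZMod p}
    (hσ : σ ≠ 0) :
    ‖countFourier m σ‖ / (∑ j, m j : ℕ) ≤ √(chiSq fun j => (m j : ℝ)) := by
  refine Real.le_sqrt_of_sq_le ?_
  rw [← sum_norm_countFourier_div_sq hm rfl]
  exact single_le_sum (f := fun σ => (‖countFourier m σ‖ / (∑ j, m j : ℕ)) ^ 2)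
    (fun _ _ => sq_nonneg _) (mem_erase.2 ⟨hσ, mem_univ _⟩)

theorem decayRate_le_one {m : ZMod p → ℕ} (hm : 0 < ∑ j, m j) {κ : ℝ}
    (hκ : 2 * √(chiSq fun j => (m j : ℝ)) + κ ≤ 1) (σ : ZMod p) : decayRate m κ σ ≤ 1 := by
  unfold decayRate
  split_ifs with hσ
  · exact le_rfl
  · linarith [norm_countFourier_div_le_sqrt_chiSq hm hσ]

theorem sum_decayRate_pow_le {m : ZMod p → ℕ} (hm : 0 < ∑ j, m j) {κ : ℝ} (hκ0 : 0 ≤ κ)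
    (hκ : 2 * √(chiSq fun j => (m j : ℝ)) + κ ≤ 1) {d : ℕ} (hd : 3 ≤ d) :
    ∑ σ ∈ univ.erase 0, decayRate m κ σ ^ d
      ≤ 32 * √(chiSq fun j => (m j : ℝ)) ^ 3 + 4 * (p * κ ^ 3) := by
  set X := √(chiSq fun j => (m j : ℝ))
  have hX : X ^ 2 = chiSq fun j => (m j : ℝ) := Real.sq_sqrt (chiSq_nonneg _)
  have hterm : ∀ σ ∈ univ.erase (0 : ZMod p), decayRate m κ σ ^ d
      ≤ 32 * X * (‖countFourier m σ‖ / (∑ j, m j : ℕ)) ^ 2 + 4 * κ ^ 3 := by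
    intro σ hσ
    have hη := norm_countFourier_div_le_sqrt_chiSq hm (ne_of_mem_erase hσ)
    have hη0 : 0 ≤ ‖countFourier m σ‖ / (∑ j, m j : ℕ) := by positivity
    refine (pow_le_pow_of_le_one (decayRate_nonneg m hκ0 σ) (decayRate_le_one hm hκ σ) hd).trans ?_
    rw [decayRate, if_neg (ne_of_mem_erase hσ)]
    set η := ‖countFourier m σ‖ / (∑ j, m j : ℕ)
    calc (2 * η + κ) ^ 3 ≤ 2 ^ (3 - 1) * ((2 * η) ^ 3 + κ ^ 3) := add_pow_le (by positivity) hκ0 3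
      _ = 32 * η * η ^ 2 + 4 * κ ^ 3 := by ring
      _ ≤ 32 * X * η ^ 2 + 4 * κ ^ 3 := by gcongr
  have hcard : (#(univ.erase (0 : ZMod p)) : ℝ) ≤ p := by
    exact_mod_cast (card_le_univ _).trans (ZMod.card p).le
  calc ∑ σ ∈ univ.erase 0, decayRate m κ σ ^ d
      ≤ 32 * X * X ^ 2 + #(univ.erase (0 : ZMod p)) * (4 * κ ^ 3) := by
        refine (sum_le_sum hterm).trans_eq ?_
        rw [sum_add_distrib, ← mul_sum, sum_norm_countFourier_div_sq hm rfl, hX, sum_const,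
          nsmul_eq_mul]
    _ ≤ 32 * X * X ^ 2 + p * (4 * κ ^ 3) := by gcongr
    _ = _ := by ring

theorem hammingNorm_comp_fst {ι κ R : Type*} [Fintype ι] [Fintype κ] [Zero R] [DecidableEq R]
    (t : ι → R) :
    hammingNorm (t ∘ Prod.fst : ι × κ → R) = Fintype.card κ * hammingNorm t := by
  rw [hammingNorm, hammingNorm, mul_comm, ← card_univ, ← card_product]
  congr 1
  ext x
  simp

theorem norm_typeCharSum_comp_fst_le {d N : ℕ} (hdN : 0 < d * N) {m : ZMod p → ℕ}
    (hm : ∑ j, m j = d * N) {κ : ℝ} (hκ0 : 0 < κ)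
    (hκ : 2 * √(chiSq fun j => (m j : ℝ)) + κ ≤ 1) {t : Fin N → ZMod p}
    (ht : 2 * (hammingNorm t : ℝ) ≤ κ ^ 2 * N) :
    ‖typeCharSum m (t ∘ Prod.fst : Fin N × Fin d → ZMod p)‖
      ≤ #(typeClass (Fin N × Fin d) m) * ∏ k, decayRate m κ (t k) ^ d := by
  have hm0 : 0 < ∑ j, m j := hm ▸ hdN
  have hcard : Fintype.card (Fin N × Fin d) = d * N := by simp [mul_comm]
  have hκ1 : κ ≤ 1 := by linarith [Real.sqrt_nonneg (chiSq fun j => (m j : ℝ))]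
  refine (norm_typeCharSum_le_card_mul_prod hκ0 hκ1 (if_pos rfl) (decayRate_le_one hm0 hκ)
    (fun σ hσ => ?_) ?_).trans_eq ?_
  · rw [decayRate, if_neg hσ, hm, hcard, mul_div_assoc]
  · rw [hammingNorm_comp_fst, hcard, Fintype.card_fin]
    push_cast
    nlinarith
  · rw [prod_pow]
    exact congr_arg _ (prod_fst_eq_prod_pow d fun k => decayRate m κ (t k))

theorem pow_le_mul_half_pow {a c : ℝ} {k : ℕ} (hk : 0 < k) (ha0 : 0 ≤ a) (ha : a ≤ 1 / 4)
    (hac : a ≤ k * c) : a ^ k ≤ c * (1 / 2) ^ (k - 1) := by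
  obtain ⟨r, rfl⟩ := Nat.exists_eq_succ_of_ne_zero hk.ne'
  have hc : 0 ≤ c := nonneg_of_mul_nonneg_right (ha0.trans hac) (by positivity)
  have hr : ((r + 1 : ℕ) : ℝ) ≤ 2 ^ r := by exact_mod_cast Nat.lt_two_pow_self
  calc a ^ (r + 1) = a ^ r * a := pow_succ a r
    _ ≤ (1 / 4) ^ r * (2 ^ r * c) := by gcongr; exact hac.trans (by gcongr)
    _ = c * (1 / 2) ^ r := by
        rw [← mul_assoc, ← mul_pow]
        norm_num [mul_comm]

theorem sum_prod_decayRate_hammingNorm_eq_le {d N k : ℕ} (hd : 3 ≤ d) (hN : 0 < N) (hk : 0 < k)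
    {m : ZMod p → ℕ} (hm : 0 < ∑ j, m j)
    (hκ : 2 * √(chiSq fun j => (m j : ℝ)) + 2 * √(k / N) ≤ 1) :
    ∑ t : Fin N → ZMod p with hammingNorm t = k, ∏ i, decayRate m (2 * √(k / N)) (t i) ^ d
      ≤ (96 * (N * √(chiSq fun j => (m j : ℝ)) ^ 3 / k + p * √(k / N))) ^ k := by
  have : NeZero N := ⟨hN.ne'⟩
  have hp : 0 < p := Nat.pos_of_ne_zero (NeZero.ne p)
  set g : ℝ := √(k / N)
  have hg0 : 0 < g := Real.sqrt_pos.2 (by positivity)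
  have hg : g ^ 2 = k / N := Real.sq_sqrt (by positivity)
  have hsparse := sum_prod_hammingNorm_eq_le (ι := Fin N) hk
    (fun σ => pow_nonneg (decayRate_nonneg m (κ := 2 * g) (by positivity) σ) d)
    (by simp [decayRate]) (by positivity) (sum_decayRate_pow_le hm (by positivity) hκ hd)
  rw [Fintype.card_fin] at hsparse
  refine hsparse.trans_eq (congrArg (· ^ k) ?_)
  have : (N : ℝ) * g ^ 3 = k * g := by
    rw [pow_succ, hg]
    field_simp
  field_simp
  linear_combination 96 * p * this

theorem sum_norm_typeCharSum_hammingNorm_eq_le {d N k : ℕ} (hd : 3 ≤ d) (hN : 0 < N) (hk : 0 < k)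
    {m : ZMod p → ℕ} (hm : ∑ j, m j = d * N)
    (hchi : 768 * (N * √(chiSq fun j => (m j : ℝ)) ^ 3) ≤ 1) (hkN : (768 * (p : ℝ)) ^ 2 * k ≤ N) :
    ∑ t : Fin N → ZMod p with hammingNorm t = k,
        ‖typeCharSum m (t ∘ Prod.fst : Fin N × Fin d → ZMod p)‖
      ≤ #(typeClass (Fin N × Fin d) m) *
        (96 * (N * √(chiSq fun j => (m j : ℝ)) ^ 3 + p / √N) * (1 / 2) ^ (k - 1)) := by
  have : NeZero N := ⟨hN.ne'⟩
  have hN1 : (1 : ℝ) ≤ N := by exact_mod_cast hN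
  have hk1 : (1 : ℝ) ≤ k := by exact_mod_cast hk
  have hp1 : (1 : ℝ) ≤ p := by exact_mod_cast Nat.pos_of_ne_zero (NeZero.ne p)
  have hdN : 0 < d * N := by positivity
  have hbound := sum_prod_decayRate_hammingNorm_eq_le hd hN hk (hm ▸ hdN)
  set X := √(chiSq fun j => (m j : ℝ))
  have hX0 : 0 ≤ X := Real.sqrt_nonneg _
  set g : ℝ := √(k / N)
  have hg0 : 0 < g := Real.sqrt_pos.2 (by positivity)
  have hg2 : g ^ 2 = k / N := Real.sq_sqrt (by positivity)
  have hpg : 768 * p * g ≤ 1 := by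
    refine (sq_le_one_iff₀ (by positivity)).1 ?_
    rw [mul_pow, hg2, ← mul_div_assoc]
    exact (div_le_one (by positivity)).2 hkN
  have hX8 : X ≤ 1 / 8 := by
    refine le_of_pow_le_pow_left₀ three_ne_zero (by norm_num) ?_
    nlinarith [pow_nonneg hX0 3]
  have hκ : 2 * X + 2 * g ≤ 1 := by nlinarith
  have hgk : g ≤ k / √N := by
    refine (Real.sqrt_div' _ (Nat.cast_nonneg N)).trans_le ?_
    gcongr
    exact Real.sqrt_le_self_iff.2 (.inr hk1)
  have hXk : N * X ^ 3 / k ≤ N * X ^ 3 := div_le_self (by positivity) hk1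
  calc _ ≤ ∑ t : Fin N → ZMod p with hammingNorm t = k,
        #(typeClass (Fin N × Fin d) m) * ∏ i, decayRate m (2 * g) (t i) ^ d :=
        sum_le_sum fun t ht => norm_typeCharSum_comp_fst_le hdN hm (by positivity) hκ (by
          rw [(mem_filter.1 ht).2, mul_pow, hg2]
          field_simp
          norm_num)
    _ ≤ #(typeClass (Fin N × Fin d) m) * (96 * (N * X ^ 3 / k + p * g)) ^ k := by
        rw [← mul_sum]
        gcongr
        exact hbound hκ
    _ ≤ _ := by
        gcongr
        refine pow_le_mul_half_pow hk (by positivity) (by linarith) ?_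
        calc 96 * (N * X ^ 3 / k + p * g) ≤ 96 * (k * (N * X ^ 3) + p * (k / √N)) := by
              gcongr
              exact hXk.trans (le_mul_of_one_le_left (by positivity) hk1)
          _ = _ := by ring

end NearSum

section NearConst

variable {ι κ : Type*} [Fintype ι] [DecidableEq ι] [Fintype κ] [DecidableEq κ]

/-- The words that differ from the constant word `c` in at most `K` places. -/
def nearConst (ι : Type*) [Fintype ι] [DecidableEq ι] (K : ℕ) (c : κ) : Finset (ι → κ) :=
  {t | hammingDist t (Function.const ι c) ≤ K}

theorem mem_nearConst {K : ℕ} {c : κ} {t : ι → κ} :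
    t ∈ nearConst ι K c ↔ hammingDist t (Function.const ι c) ≤ K := by
  simp [nearConst]

theorem pairwiseDisjoint_nearConst {K : ℕ} (hK : 2 * K < Fintype.card ι) :
    (Set.univ : Set κ).PairwiseDisjoint (nearConst ι K) := by
  intro c _ c' _ hc
  refine disjoint_left.2 fun t ht ht' => ?_
  rw [mem_nearConst] at ht ht'
  have hdist : hammingDist (Function.const ι c) (Function.const ι c') = Fintype.card ι := by
    simp [hammingDist, hc]
  have := hammingDist_triangle_left (Function.const ι c) (Function.const ι c') t
  omega

theorem norm_sum_compl_nearConst_le [Nonempty ι] {E : Type*} [SeminormedAddCommGroup E]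
    {f : (ι → κ) → E} {K : ℕ} {C : ℝ} (hC : 0 ≤ C)
    (hf : ∀ t, (∀ c, K ≤ hammingDist t (Function.const ι c)) → ‖f t‖ ≤ C * selfProb t) :
    ‖∑ t ∈ (univ.biUnion (nearConst ι K))ᶜ, f t‖
      ≤ C * (Fintype.card ι + 1) ^ Fintype.card κ := by
  calc _ ≤ ∑ t ∈ (univ.biUnion (nearConst ι K))ᶜ, C * selfProb t := by
        refine norm_sum_le_of_le _ fun t ht => hf t fun c => ?_
        rw [mem_compl, mem_biUnion, not_exists] at ht
        have hc := ht c
        rw [mem_nearConst, and_iff_right (mem_univ c)] at hc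
        exact (not_le.1 hc).le
    _ ≤ ∑ t, C * selfProb t :=
        sum_le_sum_of_subset_of_nonneg (subset_univ _) fun t _ _ =>
          mul_nonneg hC (selfProb_nonneg t)
    _ ≤ _ := by
        rw [← mul_sum]
        exact mul_le_mul_of_nonneg_left sum_selfProb_le hC

theorem norm_sum_nearConst_zero_sub_le [Zero κ] {E : Type*} [SeminormedAddCommGroup E]
    {f : (ι → κ) → E} {K : ℕ} {C : ℝ} (hC : 0 ≤ C)
    (hf : ∀ k, 0 < k → k ≤ K → ∑ t : ι → κ with hammingNorm t = k, ‖f t‖ ≤ C * (1 / 2) ^ (k - 1)) :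
    ‖∑ t ∈ nearConst ι K 0, f t - f 0‖ ≤ 2 * C := by
  have hnear : nearConst ι K (0 : κ) = ({t | hammingNorm t ≤ K} : Finset (ι → κ)) := by
    ext t
    rw [mem_nearConst, mem_filter, and_iff_right (mem_univ t)]
    exact iff_of_eq (congr_arg (· ≤ K) (hammingDist_zero_right t))
  have h0 : (0 : ι → κ) ∈ nearConst ι K 0 := by simp [hnear]
  rw [← add_sum_erase _ _ h0, add_sub_cancel_left]
  have hmaps : ∀ t ∈ (nearConst ι K (0 : κ)).erase 0, hammingNorm t ∈ Ioc 0 K := by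
    intro t ht
    rw [mem_erase, hnear, mem_filter] at ht
    exact mem_Ioc.2 ⟨hammingNorm_pos_iff.2 ht.1, ht.2.2⟩
  calc _ ≤ ∑ t ∈ (nearConst ι K 0).erase 0, ‖f t‖ := norm_sum_le _ _
    _ ≤ ∑ k ∈ Ioc 0 K, ∑ t : ι → κ with hammingNorm t = k, ‖f t‖ := by
        rw [← sum_fiberwise_of_maps_to hmaps]
        exact sum_le_sum fun k _ => sum_le_sum_of_subset_of_nonneg
          (filter_subset_filter _ (subset_univ _)) fun _ _ _ => norm_nonneg _
    _ ≤ ∑ k ∈ Ioc 0 K, C * (1 / 2) ^ (k - 1) :=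
        sum_le_sum fun k hk => hf k (mem_Ioc.1 hk).1 (mem_Ioc.1 hk).2
    _ = C * ∑ k ∈ range K, (1 / 2) ^ k := by
        rw [← mul_sum, range_eq_Ico, ← sum_Ico_add_right_sub_eq 0 K 1]
        rfl
    _ ≤ C * 2 := by
        gcongr
        exact sum_geometric_two_le K
    _ = 2 * C := mul_comm _ _

end NearConst

section RowEstimate

variable {p : ℕ} [NeZero p]

/-- The contribution to the relative error of `rowCount d N m` of the frequency words that differ
from every constant word in more than `K` places. -/
noncomputable def farError (d N K : ℕ) (m : ZMod p → ℕ) : ℝ :=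
  ((d * N : ℕ) + 1 : ℝ) ^ p * (N + 1) ^ p * √((1 + chiSq fun j => (m j : ℝ)) ^ N) ^ d
    * √((1 / 2) ^ K)

theorem sum_nearConst_typeCharSum {d N : ℕ} {m : ZMod p → ℕ}
    (hc : ∑ j : ZMod p, j * (m j : ZMod p) = 0) (K : ℕ) (c : ZMod p) :
    ∑ t ∈ nearConst (Fin N) K c, typeCharSum m (t ∘ Prod.fst : Fin N × Fin d → ZMod p)
      = ∑ t ∈ nearConst (Fin N) K 0, typeCharSum m (t ∘ Prod.fst : Fin N × Fin d → ZMod p) := by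
  refine (sum_equiv (Equiv.addRight (Function.const _ c)) (fun t => ?_) fun t _ => ?_).symm
  · rw [mem_nearConst, mem_nearConst]
    simp only [hammingDist, Equiv.coe_addRight, Pi.add_apply, Function.const_apply, ne_eq,
      add_eq_right]
    rfl
  · exact (typeCharSum_add_const hc _ c).symm

theorem norm_sum_nearConst_zero_typeCharSum_sub_card_le {d N K : ℕ} (hd : 3 ≤ d) (hN : 0 < N)
    {m : ZMod p → ℕ} (hm : ∑ j, m j = d * N)
    (hchi : 768 * (N * √(chiSq fun j => (m j : ℝ)) ^ 3) ≤ 1) (hKN : (768 * (p : ℝ)) ^ 2 * K ≤ N) :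
    ‖∑ t ∈ nearConst (Fin N) K 0, typeCharSum m (t ∘ Prod.fst : Fin N × Fin d → ZMod p)
        - #(typeClass (Fin N × Fin d) m)‖
      ≤ #(typeClass (Fin N × Fin d) m) *
        (192 * (N * √(chiSq fun j => (m j : ℝ)) ^ 3 + p / √N)) := by
  rw [← typeCharSum_zero]
  refine (norm_sum_nearConst_zero_sub_le (C := #(typeClass (Fin N × Fin d) m) *
    (96 * (N * √(chiSq fun j => (m j : ℝ)) ^ 3 + p / √N))) (by positivity)
    fun k hk0 hk => ?_).trans_eq (by ring)
  rw [mul_assoc]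
  refine sum_norm_typeCharSum_hammingNorm_eq_le hd hN hk0 hm hchi (le_trans ?_ hKN)
  gcongr

theorem norm_sum_compl_nearConst_typeCharSum_le {d N K : ℕ} (hd : 3 ≤ d) (hN : 0 < N) (hK : K ≤ N)
    {m : ZMod p → ℕ} (hm : ∑ j, m j = d * N) :
    ‖∑ t ∈ (univ.biUnion (nearConst (Fin N) K))ᶜ,
        typeCharSum m (t ∘ Prod.fst : Fin N × Fin d → ZMod p)‖
      ≤ #(typeClass (Fin N × Fin d) m) * farError d N K m := by
  have : NeZero N := ⟨hN.ne'⟩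
  have := chiSq_nonneg fun j => (m j : ℝ)
  refine (norm_sum_compl_nearConst_le (C := #(typeClass (Fin N × Fin d) m) *
    (((d * N : ℕ) + 1 : ℝ) ^ p * (√((1 + chiSq fun j => (m j : ℝ)) ^ N) ^ d * √((1 / 2) ^ K))))
    (by positivity) fun t ht => ?_).trans_eq ?_
  · exact (norm_typeCharSum_le_of_far_from_const hd hN hK hm ht).trans_eq (by ring)
  · rw [farError, ZMod.card, Fintype.card_fin]
    ring

theorem abs_pow_mul_rowCount_div_sub_one_le {d N K : ℕ} (hd : 3 ≤ d) (hN : 0 < N)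
    {m : ZMod p → ℕ} (hm : ∑ j, m j = d * N) (hc : ∑ j : ZMod p, j * (m j : ZMod p) = 0)
    (hchi : 768 * (N * √(chiSq fun j => (m j : ℝ)) ^ 3) ≤ 1) (hKN : (768 * (p : ℝ)) ^ 2 * K ≤ N) :
    |(p : ℝ) ^ N * rowCount d N m / (p * #(typeClass (Fin N × Fin d) m)) - 1|
      ≤ 192 * (N * √(chiSq fun j => (m j : ℝ)) ^ 3 + p / √N) + farError d N K m := by
  have hp1 : (1 : ℝ) ≤ p := by exact_mod_cast Nat.pos_of_ne_zero (NeZero.ne p)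
  have hK : 2 * K < N := by
    rcases K.eq_zero_or_pos with rfl | hK
    · exact hN
    · have hK0 : (0 : ℝ) < K := by exact_mod_cast hK
      have h768 : (2 : ℝ) < (768 * p) ^ 2 := by nlinarith
      exact_mod_cast (mul_lt_mul_of_pos_right h768 hK0).trans_le hKN
  set A := #(typeClass (Fin N × Fin d) m) with hA_def
  have hA : 0 < A := card_typeClass_pos (by simpa [mul_comm] using hm)
  set f : (Fin N → ZMod p) → ℂ := fun t => typeCharSum m (t ∘ Prod.fst : Fin N × Fin d → ZMod p)
  set ε := 192 * (N * √(chiSq fun j => (m j : ℝ)) ^ 3 + p / √N)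
  set S := ∑ t ∈ nearConst (Fin N) K 0, f t
  have hnear : ‖S - A‖ ≤ A * ε := norm_sum_nearConst_zero_typeCharSum_sub_card_le hd hN hm hchi hKN
  have hfar := norm_sum_compl_nearConst_typeCharSum_le (p := p) hd hN (K := K) (by omega) hm
  have hsplit : (p : ℂ) ^ N * rowCount d N m
      = p * S + ∑ t ∈ (univ.biUnion (nearConst (Fin N) K))ᶜ, f t := by
    rw [pow_mul_rowCount_eq_sum_typeCharSum, ← sum_add_sum_compl (univ.biUnion (nearConst _ K)),
      sum_biUnion ((pairwiseDisjoint_nearConst (by simpa using hK)).subset (Set.subset_univ _))]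
    simp only [sum_nearConst_typeCharSum hc, sum_const, card_univ, ZMod.card, nsmul_eq_mul, S, f]
  have hmain : |(p : ℝ) ^ N * rowCount d N m - p * A| ≤ p * (A * ε) + A * farError d N K m := by
    rw [← Real.norm_eq_abs, ← Complex.norm_real]
    push_cast
    rw [hsplit, add_sub_right_comm, ← mul_sub]
    refine (norm_add_le _ _).trans (add_le_add ?_ hfar)
    rw [norm_mul, Complex.norm_natCast]
    gcongr
  have hfar0 : 0 ≤ A * farError d N K m := (norm_nonneg _).trans hfar
  rw [div_sub_one (by positivity), abs_div, abs_of_pos (by positivity : (0 : ℝ) < p * A),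
    div_le_iff₀ (by positivity)]
  nlinarith

end RowEstimate

/-! ### Edge words and their law -/

section EdgeWords

variable {V : Type*}

theorem fiberCard_sym2_mk [Fintype V] [DecidableEq V] (e : Sym2 V) :
    fiberCard (fun z : V × V => s(z.1, z.2)) e = if e.IsDiag then 1 else 2 := by
  induction e with | _ i j
  have fiber : ({z : V × V | s(z.1, z.2) = s(i, j)} : Finset (V × V)) = {(i, j), (j, i)} := by
    ext ⟨x, y⟩
    simp
  rw [fiberCard, fiber]
  split_ifs with h
  · rw [Sym2.mk_isDiag_iff.1 h, pair_eq_singleton, card_singleton]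
  · exact card_pair fun hij => h (congrArg Prod.fst hij)

theorem prod_sym2_eq_prod_lt_mul_prod_diag [Fintype V] {L R : Type*} [LinearOrder L]
    [CommMonoid R] {v : V → L} (hv : Function.Injective v) (F : Sym2 V → R) :
    ∏ e, F e = (∏ z : V × V with v z.1 < v z.2, F s(z.1, z.2)) * ∏ i, F s(i, i) := by
  classical
  rw [← prod_filter_not_mul_prod_filter univ (fun e : Sym2 V => e.IsDiag)]
  congr 1
  · refine (prod_bij (fun z _ => s(z.1, z.2)) ?_ ?_ ?_ fun _ _ => rfl).symm
    · simp only [mem_filter, mem_univ, true_and, Sym2.mk_isDiag_iff]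
      exact fun z hz h => hz.ne (congrArg v h)
    · simp only [mem_filter, mem_univ, true_and, Sym2.eq_iff]
      rintro ⟨x, y⟩ hxy ⟨z, w⟩ hzw (⟨rfl, rfl⟩ | ⟨rfl, rfl⟩)
      exacts [rfl, (hxy.not_gt hzw).elim]
    · intro e
      induction e with | _ x y
      simp only [mem_filter, mem_univ, true_and, Sym2.mk_isDiag_iff, Sym2.eq_iff]
      intro hxy
      rcases (hv.ne hxy).lt_or_gt with h | h
      exacts [⟨(x, y), h, .inl ⟨rfl, rfl⟩⟩, ⟨(y, x), h, .inr ⟨rfl, rfl⟩⟩]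
  · refine (prod_bij (fun i _ => s(i, i)) (by simp) (by simp) ?_ fun _ _ => rfl).symm
    intro e
    induction e with | _ x y
    simp +contextual

theorem prod_prod_eq_sq_mul_prod_diag [Fintype V] {L R : Type*} [LinearOrder L] [CommMonoid R]
    {v : V → L} (hv : Function.Injective v) {F : V → V → R} (hF : ∀ i j, F i j = F j i) :
    ∏ i, ∏ j, F i j = (∏ z : V × V with v z.1 < v z.2, F z.1 z.2) ^ 2 * ∏ i, F i i := by
  classical
  have off_diag (z : V × V) (hz : z ∈ ({z | v z.1 < v z.2} : Finset (V × V))) : z.1 ≠ z.2 :=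
    fun h => (mem_filter.1 hz).2.ne (congrArg v h)
  calc ∏ i, ∏ j, F i j
      = ∏ z : V × V, Sym2.lift ⟨F, hF⟩ s(z.1, z.2) := by
        simp only [Fintype.prod_prod_type, Sym2.lift_mk]
    _ = ∏ e : Sym2 V, Sym2.lift ⟨F, hF⟩ e ^ (if e.IsDiag then 1 else 2) := by
      simp only [prod_comp_eq_prod_pow_fiberCard (fun z : V × V => s(z.1, z.2)), fiberCard_sym2_mk]
    _ = _ := by
      rw [prod_sym2_eq_prod_lt_mul_prod_diag hv, ← prod_pow]
      refine congrArg₂ _ (prod_congr rfl fun z hz => ?_) (prod_congr rfl fun i _ => ?_)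
      · simp [off_diag z hz]
      · simp

variable [DecidableEq V]

/-- The symmetric matrix of a multigraph with `k e` edges joining the endpoints of `e`; a loop
contributes `2` to its diagonal entry. -/
def multigraphMatrix (k : Sym2 V → ℕ) (i j : V) : ℕ :=
  (if i = j then 2 else 1) * k s(i, j)

theorem multigraphMatrix_injective :
    Function.Injective (multigraphMatrix : (Sym2 V → ℕ) → V → V → ℕ) := by
  intro k l h
  ext e
  induction e with | _ i j
  refine Nat.eq_of_mul_eq_mul_left ?_ (congr_fun₂ h i j)
  split_ifs <;> decide

theorem exists_eq_multigraphMatrix {M : V → V → ℕ} (hsymm : ∀ i j, M i j = M j i)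
    (heven : ∀ i, Even (M i i)) : ∃ k, M = multigraphMatrix k := by
  refine ⟨Sym2.lift ⟨fun i j => if i = j then M i j / 2 else M i j, fun i j => ?_⟩, ?_⟩
  · simp only [eq_comm (a := i), hsymm i j]
  · ext i j
    by_cases hij : i = j
    · subst hij
      simp [multigraphMatrix, Nat.mul_div_cancel' (heven i).two_dvd]
    · simp [multigraphMatrix, hij]

variable [Fintype V]

theorem sum_multigraphMatrix (k : Sym2 V → ℕ) :
    ∑ i, ∑ j, multigraphMatrix k i j = 2 * ∑ e, k e := by
  calc ∑ i, ∑ j, multigraphMatrix k i j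
      = ∑ z : V × V, (if s(z.1, z.2).IsDiag then 2 else 1) * k s(z.1, z.2) := by
        simp only [multigraphMatrix, Sym2.mk_isDiag_iff, Fintype.sum_prod_type]
    _ = ∑ e : Sym2 V, (if e.IsDiag then 1 else 2) * ((if e.IsDiag then 2 else 1) * k e) := by
        rw [sum_comp_eq_sum_fiberCard_mul (fun z : V × V => s(z.1, z.2))
          fun e => (if e.IsDiag then 2 else 1) * k e]
        simp only [fiberCard_sym2_mk, Nat.cast_id]
    _ = 2 * ∑ e, k e := by
        rw [mul_sum]
        refine sum_congr rfl fun e _ => ?_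
        split_ifs <;> ring

variable {ι : Type*} [Fintype ι]

theorem card_filter_fiberCard_comp_eq [DecidableEq ι] {X Y : Type*} [Fintype X] [Fintype Y]
    [DecidableEq Y] (g : X → Y) (k : Y → ℕ) :
    #{f : ι → X | fiberCard (g ∘ f) = k} = #(typeClass ι k) * ∏ y, fiberCard g y ^ k y := by
  classical
  have card_lifts (w : ι → Y) (hw : w ∈ typeClass ι k) :
      #{f ∈ ({f | fiberCard (g ∘ f) = k} : Finset (ι → X)) | g ∘ f = w}
        = ∏ y, fiberCard g y ^ k y := by
    have : {f ∈ ({f | fiberCard (g ∘ f) = k} : Finset (ι → X)) | g ∘ f = w}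
        = Fintype.piFinset fun l => ({x | g x = w l} : Finset X) := by
      ext f
      simp only [mem_filter, mem_univ, true_and, Fintype.mem_piFinset, funext_iff (f := g ∘ f),
        Function.comp_apply, and_iff_right_iff_imp]
      intro h
      rw [show g ∘ f = w from funext h, mem_typeClass.1 hw]
    rw [this, Fintype.card_piFinset, ← mem_typeClass.1 hw, ← prod_comp_eq_prod_pow_fiberCard]
    rfl
  rw [card_eq_sum_card_fiberwise (f := fun f => g ∘ f) (t := typeClass ι k)
    (fun f hf => by simpa [mem_typeClass] using hf), sum_congr rfl card_lifts, sum_const,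
    smul_eq_mul]

/-- The symmetric matrix counting the edges of a word `f` of ordered pairs. -/
def edgeMatrix (f : ι → V × V) (i j : V) : ℕ :=
  fiberCard f (i, j) + fiberCard f (j, i)

/-- The number of half-edges of the edge word `f` at the vertex `i`. -/
def degreeVector (f : ι → V × V) (i : V) : ℕ :=
  fiberCard (Sum.elim (fun l => (f l).1) fun l => (f l).2) i

omit [Fintype V] in
theorem edgeMatrix_comm (f : ι → V × V) (i j : V) : edgeMatrix f i j = edgeMatrix f j i :=
  Nat.add_comm _ _

theorem sum_edgeMatrix (f : ι → V × V) (i : V) : ∑ j, edgeMatrix f i j = degreeVector f i := by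
  simp only [edgeMatrix, degreeVector, fiberCard, card_filter, sum_add_distrib,
    Fintype.sum_sum_type, Sum.elim_inl, Sum.elim_inr]
  rw [sum_comm, sum_comm (s := univ (α := V))]
  simp only [Prod.ext_iff, and_comm (b := _ = i), ite_and, sum_ite_irrel, sum_ite_eq, mem_univ,
    if_true, sum_const_zero]
  rfl

theorem sum_degreeVector (f : ι → V × V) : ∑ i, degreeVector f i = 2 * Fintype.card ι := by
  simp only [degreeVector, sum_fiberCard, Fintype.card_sum, two_mul]

theorem card_filter_degreeVector_eq [DecidableEq ι] (R : V → ℕ) :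
    #{f : ι → V × V | degreeVector f = R} = #(typeClass (ι ⊕ ι) R) := by
  refine card_equiv ((Equiv.arrowProdEquivProdArrow ι _ _).trans
    (Equiv.sumArrowEquivProdArrow ι ι V).symm) fun f => ?_
  rw [mem_typeClass, mem_filter_univ]
  rfl

omit [Fintype V] in
theorem edgeMatrix_eq_multigraphMatrix (f : ι → V × V) :
    edgeMatrix f = multigraphMatrix (fiberCard ((fun z => s(z.1, z.2)) ∘ f)) := by
  classical
  ext i j
  by_cases hij : i = j
  · subst hij
    simp [edgeMatrix, multigraphMatrix, fiberCard, Prod.ext_iff, two_mul]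
  · have disj : Disjoint ({l | f l = (i, j)} : Finset ι) ({l | f l = (j, i)} : Finset ι) :=
      disjoint_filter.2 fun l _ h h' => hij (congrArg Prod.fst (h.symm.trans h'))
    rw [edgeMatrix, multigraphMatrix, if_neg hij, one_mul, fiberCard, fiberCard,
      ← card_union_of_disjoint disj, ← filter_or]
    simp only [fiberCard, Function.comp_apply, Sym2.eq_iff, Prod.ext_iff]

theorem card_filter_edgeMatrix_eq_mul [DecidableEq ι] {L : Type*} [LinearOrder L] {v : V → L}
    (hv : Function.Injective v) {M : V → V → ℕ} (hsymm : ∀ i j, M i j = M j i)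
    (heven : ∀ i, Even (M i i)) (hsum : ∑ i, ∑ j, M i j = 2 * Fintype.card ι) :
    #{f : ι → V × V | edgeMatrix f = M}
        * ((∏ z : V × V with v z.1 < v z.2, (M z.1 z.2).factorial)
          * ∏ i, 2 ^ (M i i / 2) * (M i i / 2).factorial)
      = 2 ^ Fintype.card ι * (Fintype.card ι).factorial := by
  obtain ⟨k, rfl⟩ := exists_eq_multigraphMatrix hsymm heven
  have hk : ∑ e, k e = Fintype.card ι :=
    Nat.eq_of_mul_eq_mul_left two_pos ((sum_multigraphMatrix k).symm.trans hsum)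
  have count : #{f : ι → V × V | edgeMatrix f = multigraphMatrix k}
      = #(typeClass ι k) * ∏ e : Sym2 V, (if e.IsDiag then 1 else 2) ^ k e := by
    simp only [edgeMatrix_eq_multigraphMatrix, multigraphMatrix_injective.eq_iff,
      card_filter_fiberCard_comp_eq, fiberCard_sym2_mk]
  have weights : (∏ z : V × V with v z.1 < v z.2, (multigraphMatrix k z.1 z.2).factorial)
        * ∏ i, 2 ^ (multigraphMatrix k i i / 2) * (multigraphMatrix k i i / 2).factorial
      = ∏ e : Sym2 V, (if e.IsDiag then 2 else 1) ^ k e * (k e).factorial := by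
    rw [prod_sym2_eq_prod_lt_mul_prod_diag hv]
    refine congrArg₂ _ (prod_congr rfl fun z hz => ?_) (prod_congr rfl fun i _ => ?_)
    · have : z.1 ≠ z.2 := fun h => (mem_filter.1 hz).2.ne (congrArg v h)
      simp [multigraphMatrix, this]
    · simp [multigraphMatrix]
  have powers : (∏ e : Sym2 V, (if e.IsDiag then 1 else 2) ^ k e)
      * ∏ e : Sym2 V, (if e.IsDiag then 2 else 1) ^ k e = 2 ^ Fintype.card ι := by
    rw [← prod_mul_distrib, ← hk, ← prod_pow_eq_pow_sum]
    refine prod_congr rfl fun e _ => ?_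
    split_ifs <;> simp
  rw [count, weights, prod_mul_distrib, ← powers, ← card_typeClass_mul_prod_factorial hk]
  ring

end EdgeWords

section Density

variable {V ι : Type*} [DecidableEq V] [Fintype ι]

/-- The proportion of oriented edges of `f` leading from `z.1` to `z.2`, every edge being counted
in both orientations. -/
noncomputable def edgeDensity (f : ι → V × V) (z : V × V) : ℝ :=
  edgeMatrix f z.1 z.2 / (2 * Fintype.card ι : ℕ)

/-- The proportion of half-edges of `f` at the vertex `i`. -/
noncomputable def degreeDensity (f : ι → V × V) (i : V) : ℝ :=
  degreeVector f i / (2 * Fintype.card ι : ℕ)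

theorem edgeDensity_nonneg (f : ι → V × V) (z : V × V) : 0 ≤ edgeDensity f z := by
  unfold edgeDensity
  positivity

theorem degreeDensity_nonneg (f : ι → V × V) (i : V) : 0 ≤ degreeDensity f i := by
  unfold degreeDensity
  positivity

theorem edgeDensity_swap (f : ι → V × V) (z : V × V) : edgeDensity f z.swap = edgeDensity f z := by
  rw [edgeDensity, edgeDensity, Prod.fst_swap, Prod.snd_swap, edgeMatrix_comm]

variable [Fintype V]

theorem sum_edgeDensity_right (f : ι → V × V) (i : V) :
    ∑ j, edgeDensity f (i, j) = degreeDensity f i := by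
  simp only [edgeDensity, degreeDensity, ← sum_div, ← Nat.cast_sum, sum_edgeMatrix]

theorem sum_edgeDensity_left (f : ι → V × V) (j : V) :
    ∑ i, edgeDensity f (i, j) = degreeDensity f j := by
  rw [← sum_edgeDensity_right]
  exact sum_congr rfl fun i _ => edgeDensity_swap f (j, i)

theorem sum_degreeDensity [Nonempty ι] (f : ι → V × V) : ∑ i, degreeDensity f i = 1 := by
  simp only [degreeDensity, ← sum_div, ← Nat.cast_sum, sum_degreeVector]
  exact div_self (by positivity)

theorem sum_edgeDensity [Nonempty ι] (f : ι → V × V) : ∑ z, edgeDensity f z = 1 := by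
  simp only [Fintype.sum_prod_type, sum_edgeDensity_right, sum_degreeDensity]

end Density

section EdgeLaw

variable {V ι : Type*} [Fintype V] [DecidableEq V] [Fintype ι] [DecidableEq ι]

/-- The law of a random edge word: choose `a : Fin n → V` uniformly, then an edge word uniformly
among those in which every vertex `i` has degree `d` times its multiplicity in `a`. -/
noncomputable def edgeLaw (d n : ℕ) (f : ι → V × V) : ℝ :=
  #{a : Fin n → V | degreeVector f = d • fiberCard a}
    / (Fintype.card V ^ n * #(typeClass (ι ⊕ ι) (degreeVector f)))

theorem edgeLaw_nonneg (d n : ℕ) (f : ι → V × V) : 0 ≤ edgeLaw d n f := by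
  unfold edgeLaw
  positivity

theorem edgeLaw_eq {d : ℕ} (hd : 0 < d) (n : ℕ) {f : ι → V × V} (hf : ∀ i, d ∣ degreeVector f i) :
    edgeLaw d n f = #(typeClass (Fin n) fun i => degreeVector f i / d)
      / (Fintype.card V ^ n * #(typeClass (ι ⊕ ι) (degreeVector f))) := by
  have (a : Fin n → V) :
      degreeVector f = d • fiberCard a ↔ fiberCard a = fun i => degreeVector f i / d := by
    simp only [funext_iff, Pi.smul_apply, smul_eq_mul, Nat.eq_div_iff_mul_eq_left hd.ne' (hf _),
      mul_comm d]
  simp only [edgeLaw, typeClass, this]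

theorem dvd_degreeVector_of_edgeLaw_ne_zero {d n : ℕ} {f : ι → V × V} (hf : edgeLaw d n f ≠ 0)
    (i : V) : d ∣ degreeVector f i := by
  have : #{a : Fin n → V | degreeVector f = d • fiberCard a} ≠ 0 :=
    fun h => hf (by rw [edgeLaw, h, Nat.cast_zero, zero_div])
  obtain ⟨a, ha⟩ := card_ne_zero.1 this
  exact ⟨fiberCard a i, congr_fun (mem_filter.1 ha).2 i⟩

theorem prod_card_typeClass_mul_prod_factorial {L : Type*} [LinearOrder L] {v : V → L}
    (hv : Function.Injective v) {d : ℕ} {M : V → V → ℕ} (hsymm : ∀ i j, M i j = M j i)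
    (hdvd : ∀ i, d ∣ ∑ j, M i j) :
    (∏ i, #(typeClass (Fin ((∑ j, M i j) / d) × Fin d) (M i)))
        * ((∏ z : V × V with v z.1 < v z.2, (M z.1 z.2).factorial) ^ 2
          * ∏ i, (M i i).factorial)
      = ∏ i, (∑ j, M i j).factorial := by
  rw [← prod_prod_eq_sq_mul_prod_diag (F := fun i j => (M i j).factorial) hv
    fun i j => by rw [hsymm], ← prod_mul_distrib]
  refine prod_congr rfl fun i _ => ?_
  have hcard : ∑ j, M i j = Fintype.card (Fin ((∑ j, M i j) / d) × Fin d) := by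
    simp [Nat.div_mul_cancel (hdvd i)]
  rw [card_typeClass_mul_prod_factorial hcard, ← hcard]

end EdgeLaw

section MatrixWeight

variable {p : ℕ} [NeZero p]

/-- The proportion of words of type `M i` all of whose `N` letters in `F_p ^ d` have sum zero,
divided by `p / p ^ N`; the `N` sums add up to zero for every such word, so one expects `N - 1` of
these constraints to be independent. -/
noncomputable def rowFactor (d : ℕ) (M : ZMod p → ZMod p → ℕ) (i : ZMod p) : ℝ :=
  p ^ ((∑ j, M i j) / d) * rowCount d ((∑ j, M i j) / d) (M i)
    / (p * #(typeClass (Fin ((∑ j, M i j) / d) × Fin d) (M i)))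

theorem prod_rowFactor {d n : ℕ} {M : ZMod p → ZMod p → ℕ} (hn : ∑ i, (∑ j, M i j) / d = n) :
    ∏ i, rowFactor d M i = p ^ n * (∏ i, (rowCount d ((∑ j, M i j) / d) (M i) : ℝ))
      / (p ^ p * ∏ i, (#(typeClass (Fin ((∑ j, M i j) / d) × Fin d) (M i)) : ℝ)) := by
  simp only [rowFactor, prod_div_distrib, prod_mul_distrib, prod_pow_eq_pow_sum, hn, prod_const,
    card_univ, ZMod.card]

/-- The summand of the local limit sum at the matrix `M`, without its normalization. -/
noncomputable def matrixWeight (d n : ℕ) (M : ZMod p → ZMod p → ℕ) : ℝ :=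
  (n.factorial / ∏ i, (((∑ j, M i j) / d).factorial : ℝ))
    * (∏ z : ZMod p × ZMod p with z.1.val < z.2.val, ((M z.1 z.2).factorial : ℝ))
    * (∏ i, ((M i i).factorial : ℝ) / (2 ^ (M i i / 2) * (M i i / 2).factorial))
    * ∏ i, (rowCount d ((∑ j, M i j) / d) (M i) : ℝ)

theorem mul_matrixWeight_eq {d n E : ℕ} (hE : 2 * E = d * n) {M : ZMod p → ZMod p → ℕ}
    (hsymm : ∀ i j, M i j = M j i) (heven : ∀ i, Even (M i i)) (hsum : ∑ i, ∑ j, M i j = d * n)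
    (hdvd : ∀ i, d ∣ ∑ j, M i j) (hn : ∑ i, (∑ j, M i j) / d = n) :
    2 ^ E * E.factorial / (d * n).factorial * matrixWeight d n M
      = #{f : Fin E → ZMod p × ZMod p | edgeMatrix f = M}
        * (#(typeClass (Fin n) fun i => (∑ j, M i j) / d)
          / #(typeClass (Fin E ⊕ Fin E) fun i => ∑ j, M i j))
        * ((∏ i, (rowCount d ((∑ j, M i j) / d) (M i) : ℝ))
          / ∏ i, (#(typeClass (Fin ((∑ j, M i j) / d) × Fin d) (M i)) : ℝ)) := by
  have words : (#{f : Fin E → ZMod p × ZMod p | edgeMatrix f = M} : ℝ)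
      * ((∏ z : ZMod p × ZMod p with z.1.val < z.2.val, ((M z.1 z.2).factorial : ℝ))
        * ∏ i, 2 ^ (M i i / 2) * ((M i i / 2).factorial : ℝ)) = 2 ^ E * E.factorial := by
    have := card_filter_edgeMatrix_eq_mul (ι := Fin E) (ZMod.val_injective p) hsymm heven
      (by rw [hsum, ← hE, Fintype.card_fin])
    rw [Fintype.card_fin] at this
    exact_mod_cast this
  have rows := congrArg (Nat.cast (R := ℝ))
    (prod_card_typeClass_mul_prod_factorial (ZMod.val_injective p) hsymm hdvd)
  have vertices := congrArg (Nat.cast (R := ℝ))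
    (card_typeClass_mul_prod_factorial (ι := Fin n) (hn.trans (Fintype.card_fin n).symm))
  have degrees := congrArg (Nat.cast (R := ℝ)) (card_typeClass_mul_prod_factorial
    (ι := Fin E ⊕ Fin E) (m := fun i => ∑ j, M i j) (by simp [hsum, ← hE, two_mul]))
  rw [Fintype.card_fin] at vertices
  rw [Fintype.card_sum, Fintype.card_fin, ← two_mul, hE] at degrees
  push_cast at rows vertices degrees
  have degrees_ne : (#(typeClass (Fin E ⊕ Fin E) fun i => ∑ j, M i j) : ℝ) ≠ 0 :=
    left_ne_zero_of_mul (degrees.trans_ne (by positivity))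
  have rows_ne : ∏ i, (#(typeClass (Fin ((∑ j, M i j) / d) × Fin d) (M i)) : ℝ) ≠ 0 :=
    left_ne_zero_of_mul (rows.trans_ne (by positivity))
  rw [matrixWeight, prod_div_distrib, ← words, ← vertices, ← degrees, ← rows]
  field_simp

theorem mul_matrixWeight_eq_sum {d n E : ℕ} (hd : 0 < d) (hE : 2 * E = d * n)
    {M : ZMod p → ZMod p → ℕ} (hsymm : ∀ i j, M i j = M j i) (heven : ∀ i, Even (M i i))
    (hsum : ∑ i, ∑ j, M i j = d * n) (hdvd : ∀ i, d ∣ ∑ j, M i j) :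
    2 ^ E * E.factorial / (d * n).factorial * matrixWeight d n M
      = ∑ f : Fin E → ZMod p × ZMod p with edgeMatrix f = M,
          p ^ p * edgeLaw d n f * ∏ i, rowFactor d (edgeMatrix f) i := by
  have hp : (p : ℝ) ≠ 0 := Nat.cast_ne_zero.2 (NeZero.ne p)
  have hn : ∑ i, (∑ j, M i j) / d = n := by
    rw [← Nat.sum_div fun i _ => hdvd i, hsum, Nat.mul_div_cancel_left _ hd]
  have summand (f : Fin E → ZMod p × ZMod p) (hf : f ∈ ({f | edgeMatrix f = M} : Finset _)) :
      p ^ p * edgeLaw d n f * ∏ i, rowFactor d (edgeMatrix f) i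
        = #(typeClass (Fin n) fun i => (∑ j, M i j) / d)
            / #(typeClass (Fin E ⊕ Fin E) fun i => ∑ j, M i j)
          * ((∏ i, (rowCount d ((∑ j, M i j) / d) (M i) : ℝ))
            / ∏ i, (#(typeClass (Fin ((∑ j, M i j) / d) × Fin d) (M i)) : ℝ)) := by
    obtain rfl := (mem_filter.1 hf).2
    have hdeg : degreeVector f = fun i => ∑ j, edgeMatrix f i j :=
      funext fun i => (sum_edgeMatrix f i).symm
    rw [edgeLaw_eq hd n (by simpa only [hdeg] using hdvd), hdeg, ZMod.card, prod_rowFactor hn]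
    field_simp
  rw [sum_congr rfl summand, sum_const, nsmul_eq_mul,
    mul_matrixWeight_eq hE hsymm heven hsum hdvd hn, mul_assoc]

theorem mul_finsum_matrixWeight_eq_sum {d n E : ℕ} (hd : 0 < d) (hE : 2 * E = d * n)
    (Q : (ZMod p → ZMod p → ℕ) → Prop) [DecidablePred Q] :
    2 ^ E * E.factorial / (d * n).factorial
        * ∑ᶠ M ∈ {M : ZMod p → ZMod p → ℕ | (∀ i j, M i j = M j i) ∧ (∀ i, Even (M i i)) ∧
            ∑ i, ∑ j, M i j = d * n ∧ (∀ i, d ∣ ∑ j, M i j) ∧ Q M}, matrixWeight d n M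
      = ∑ f : Fin E → ZMod p × ZMod p with Q (edgeMatrix f),
          p ^ p * edgeLaw d n f * ∏ i, rowFactor d (edgeMatrix f) i := by
  classical
  set S := {M : ZMod p → ZMod p → ℕ | (∀ i j, M i j = M j i) ∧ (∀ i, Even (M i i)) ∧
    ∑ i, ∑ j, M i j = d * n ∧ (∀ i, d ∣ ∑ j, M i j) ∧ Q M}
  set w := fun f : Fin E → ZMod p × ZMod p =>
    p ^ p * edgeLaw d n f * ∏ i, rowFactor d (edgeMatrix f) i
  have fibre (M : ZMod p → ZMod p → ℕ) :
      S.indicator (fun M => 2 ^ E * E.factorial / (d * n).factorial * matrixWeight d n M) M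
        = ∑ f with edgeMatrix f = M, if edgeMatrix f ∈ S then w f else 0 := by
    rw [sum_congr rfl fun f hf => by rw [(mem_filter.1 hf).2], Set.indicator_apply]
    split_ifs with hM
    · exact mul_matrixWeight_eq_sum hd hE hM.1 hM.2.1 hM.2.2.1 hM.2.2.2.1
    · rw [sum_const_zero]
  have mem_S_of_weight_ne_zero (f : Fin E → ZMod p × ZMod p) (hQ : Q (edgeMatrix f))
      (hw : w f ≠ 0) : edgeMatrix f ∈ S := by
    refine ⟨fun i j => add_comm _ _, fun i => ⟨_, rfl⟩, ?_, fun i => ?_, hQ⟩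
    · simp only [sum_edgeMatrix, sum_degreeVector, Fintype.card_fin, hE]
    · rw [sum_edgeMatrix]
      exact dvd_degreeVector_of_edgeLaw_ne_zero
        (right_ne_zero_of_mul (left_ne_zero_of_mul hw)) i
  rw [mul_finsum_mem, finsum_mem_def, finsum_eq_sum_of_support_subset
    (s := univ.image (edgeMatrix (ι := Fin E)))]
  · simp only [fibre]
    rw [sum_fiberwise_of_maps_to (f := fun f => if edgeMatrix f ∈ S then w f else 0)
      fun f _ => mem_image_of_mem _ (mem_univ f),
      sum_filter]
    refine sum_congr rfl fun f _ => ?_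
    split_ifs with hS hQ hQ
    · rfl
    · exact absurd hS.2.2.2.2 hQ
    · by_contra hw
      exact hS (mem_S_of_weight_ne_zero f hQ (Ne.symm hw))
    · rfl
  · intro M hM
    rw [Function.mem_support, fibre] at hM
    obtain ⟨f, hf, -⟩ := exists_ne_zero_of_sum_ne_zero hM
    exact mem_coe.2 (mem_image.2 ⟨f, mem_univ f, (mem_filter.1 hf).2⟩)

end MatrixWeight

/-! ### The linear constraints -/

section EdgeLawSums

variable {V ι : Type*} [Fintype V] [DecidableEq V] [Fintype ι] [DecidableEq ι]

theorem sum_edgeLaw_mul (d n : ℕ) (g : (ι → V × V) → ℂ) :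
    ∑ f, (edgeLaw d n f : ℂ) * g f = (∑ a : Fin n → V,
      (∑ f with degreeVector f = d • fiberCard a, g f) / #(typeClass (ι ⊕ ι) (d • fiberCard a)))
        / Fintype.card V ^ n := by
  have expand (f : ι → V × V) : (edgeLaw d n f : ℂ) * g f = (∑ a : Fin n → V,
      if degreeVector f = d • fiberCard a then g f / #(typeClass (ι ⊕ ι) (d • fiberCard a)) else 0)
        / Fintype.card V ^ n := by
    rw [← sum_filter, sum_congr rfl fun a ha => by rw [← (mem_filter.1 ha).2], sum_const,
      nsmul_eq_mul, edgeLaw]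
    push_cast
    ring
  simp only [expand]
  rw [← sum_div, sum_comm]
  simp only [sum_div, ← sum_filter]

theorem sum_edgeLaw_mul_degreeVector {d n : ℕ} (hE : 2 * Fintype.card ι = d * n)
    (G : (V → ℕ) → ℂ) :
    ∑ f : ι → V × V, (edgeLaw d n f : ℂ) * G (degreeVector f)
      = (∑ a : Fin n → V, G (d • fiberCard a)) / Fintype.card V ^ n := by
  rw [sum_edgeLaw_mul]
  refine congrArg (· / _) (sum_congr rfl fun a _ => ?_)
  have hcard : ∑ i, (d • fiberCard a) i = Fintype.card (ι ⊕ ι) := by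
    simp only [Pi.smul_apply, smul_eq_mul, ← mul_sum, sum_fiberCard, Fintype.card_fin,
      Fintype.card_sum, ← two_mul, hE]
  rw [sum_congr rfl fun f hf => by rw [(mem_filter.1 hf).2], sum_const,
    card_filter_degreeVector_eq, nsmul_eq_mul,
    mul_div_cancel_left₀ _ (Nat.cast_ne_zero.2 (card_typeClass_pos hcard).ne')]

omit [DecidableEq ι] in
theorem prod_pow_degreeVector {R : Type*} [CommMonoid R] (f : ι → V × V) (y : V → R) :
    ∏ i, y i ^ degreeVector f i = ∏ l, y (f l).1 * y (f l).2 := by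
  simp only [degreeVector, ← prod_comp_eq_prod_pow_fiberCard, Fintype.prod_sum_type, Sum.elim_inl,
    Sum.elim_inr, prod_mul_distrib]

end EdgeLawSums

section EdgePhase

variable {p : ℕ} [NeZero p]

/-- The phase contributed by an edge `z` to `∑ᵢ uᵢ ∑ⱼ j mᵢⱼ`. -/
def edgePhase (u : ZMod p → ZMod p) (z : ZMod p × ZMod p) : ZMod p :=
  u z.1 * z.2 + u z.2 * z.1

variable {ι : Type*} [Fintype ι] [DecidableEq ι]

omit [DecidableEq ι] in
theorem sum_edgePhase (u : ZMod p → ZMod p) (f : ι → ZMod p × ZMod p) :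
    ∑ l, edgePhase u (f l) = ∑ i, u i * ∑ j : ZMod p, j * (edgeMatrix f i j : ZMod p) := by
  rw [sum_comp_eq_sum_fiberCard_mul f (edgePhase u)]
  simp only [edgePhase, edgeMatrix, Nat.cast_add, mul_add, mul_sum, sum_add_distrib,
    Fintype.sum_prod_type]
  congr 1
  · exact sum_congr rfl fun i _ => sum_congr rfl fun j _ => by ring
  · rw [sum_comm]
    exact sum_congr rfl fun i _ => sum_congr rfl fun j _ => by ring

omit [DecidableEq ι] in
theorem sum_prod_stdAddChar_edgePhase (f : ι → ZMod p × ZMod p) :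
    ∑ u : ZMod p → ZMod p, ∏ l, ZMod.stdAddChar (edgePhase u (f l))
      = if ∀ i, ∑ j : ZMod p, j * (edgeMatrix f i j : ZMod p) = 0 then (p : ℂ) ^ p else 0 := by
  simp only [← addChar_sum_eq_prod, sum_edgePhase]
  simp only [addChar_sum_eq_prod, sum_prod_stdAddChar_mul, ZMod.card]

theorem sum_edgeLaw_mul_prod_stdAddChar_of_additive {d n : ℕ}
    (hE : 2 * Fintype.card ι = d * n) (hn : 0 < n) (hg : Nat.gcd p d = 1) {u : ZMod p → ZMod p}
    (hu : ∀ z, edgePhase u z = u 0 * (z.1 + z.2)) :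
    ∑ f : ι → ZMod p × ZMod p,
        (edgeLaw d n f : ℂ) * ∏ l, ZMod.stdAddChar (edgePhase u (f l))
      = if u 0 = 0 then 1 else 0 := by
  have by_degree (f : ι → ZMod p × ZMod p) :
      ∏ l, (ZMod.stdAddChar (edgePhase u (f l)) : ℂ)
        = ∏ i, (ZMod.stdAddChar (u 0 * i) : ℂ) ^ degreeVector f i := by
    simp only [prod_pow_degreeVector, hu, mul_add, AddChar.map_add_eq_mul]
  have by_vertex (a : Fin n → ZMod p) :
      ∏ i, (ZMod.stdAddChar (u 0 * i) : ℂ) ^ (d • fiberCard a) i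
        = ∏ l, ZMod.stdAddChar (a l * (u 0 * (d : ZMod p))) := by
    rw [prod_comp_eq_prod_pow_fiberCard a fun i => (ZMod.stdAddChar (i * (u 0 * (d : ZMod p))) : ℂ)]
    refine prod_congr rfl fun i _ => ?_
    rw [Pi.smul_apply, smul_eq_mul, pow_mul, ← AddChar.map_nsmul_eq_pow, nsmul_eq_mul]
    ring_nf
  have hd : IsUnit (d : ZMod p) := (ZMod.isUnit_iff_coprime d p).2 (Nat.coprime_comm.1 hg)
  have : NeZero n := ⟨hn.ne'⟩
  simp only [by_degree]
  rw [sum_edgeLaw_mul_degreeVector hE fun R => ∏ i, (ZMod.stdAddChar (u 0 * i) : ℂ) ^ R i]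
  simp only [by_vertex, sum_prod_stdAddChar_mul (fun _ : Fin n => u 0 * (d : ZMod p)),
    forall_const, hd.mul_left_eq_zero, Fintype.card_fin, ZMod.card]
  split_ifs
  · exact div_self (pow_ne_zero _ (Nat.cast_ne_zero.2 (NeZero.ne p)))
  · exact zero_div _

theorem four_div_le_norm_stdAddChar_sub_one {a : ZMod p} (ha : a ≠ 0) :
    4 / (p : ℝ) ≤ ‖(ZMod.stdAddChar a : ℂ) - 1‖ := by
  have hp : (0 : ℝ) < p := Nat.cast_pos.2 (NeZero.pos p)
  set x : ℝ := Real.pi * a.valMinAbs / p with hx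
  have hchar : (ZMod.stdAddChar a : ℂ) = Complex.exp (Complex.I * ((2 * x : ℝ) : ℂ)) := by
    rw [← ZMod.coe_valMinAbs a, ZMod.stdAddChar_coe, hx]
    push_cast
    ring_nf
  have hx_abs : |x| = Real.pi * |(a.valMinAbs : ℝ)| / p := by
    rw [hx, abs_div, abs_mul, abs_of_pos Real.pi_pos, abs_of_pos hp]
  have one_le : 1 ≤ |(a.valMinAbs : ℝ)| := by
    exact_mod_cast Int.one_le_abs ((ZMod.valMinAbs_eq_zero a).not.2 ha)
  have le_half : 2 * |(a.valMinAbs : ℝ)| ≤ p := by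
    have := a.natAbs_valMinAbs_le
    rw [← Int.cast_abs, Int.abs_eq_natAbs]
    norm_cast
    omega
  have le_sin : 2 / Real.pi * |x| ≤ |Real.sin x| := by
    refine Real.mul_abs_le_abs_sin ?_
    rw [hx_abs, div_le_div_iff₀ hp two_pos]
    nlinarith [Real.pi_pos]
  calc 4 / (p : ℝ) ≤ 4 * |(a.valMinAbs : ℝ)| / p := by gcongr; linarith
    _ = 2 * (2 / Real.pi * |x|) := by rw [hx_abs]; field_simp; ring
    _ ≤ 2 * |Real.sin x| := by gcongr
    _ = ‖(ZMod.stdAddChar a : ℂ) - 1‖ := by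
      rw [hchar, Complex.norm_exp_I_mul_ofReal_sub_one, mul_div_cancel_left₀ _ two_ne_zero,
        norm_mul, Real.norm_two, Real.norm_eq_abs]

end EdgePhase

section NormGain

theorem norm_sum_le_sum_norm_sub {ι F : Type*} [Fintype ι] [SeminormedAddCommGroup F] (x : ι → F)
    {s t : ι} (hst : s ≠ t) {g : ℝ} (h : ‖x s + x t‖ ≤ ‖x s‖ + ‖x t‖ - g) :
    ‖∑ i, x i‖ ≤ ∑ i, ‖x i‖ - g := by
  classical
  have ht : t ∈ univ.erase s := mem_erase.2 ⟨hst.symm, mem_univ t⟩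
  rw [← add_sum_erase _ x (mem_univ s), ← add_sum_erase _ x ht,
    ← add_sum_erase _ (fun i => ‖x i‖) (mem_univ s), ← add_sum_erase _ (fun i => ‖x i‖) ht,
    ← add_assoc, ← add_assoc]
  linarith [norm_add_le (x s + x t) (∑ i ∈ (univ.erase s).erase t, x i),
    norm_sum_le ((univ.erase s).erase t) x]

theorem norm_smul_add_smul_le_sub {F : Type*} [NormedAddCommGroup F] [InnerProductSpace ℝ F]
    {z w : F} (hz : ‖z‖ = 1) (hw : ‖w‖ = 1) {δ : ℝ} (hδ0 : 0 ≤ δ) (hδ1 : δ ≤ 1)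
    (hzw : 2 * δ ≤ ‖z - w‖) {a b : ℝ} (ha : 1 / 4 ≤ a) (hb : 1 / 4 ≤ b) :
    ‖a • z + b • w‖ ≤ a + b - δ ^ 2 / 4 := by
  have norm_sq : ‖a • z + b • w‖ ^ 2 = a ^ 2 + b ^ 2 + 2 * (a * b) * inner ℝ z w := by
    rw [norm_add_sq_real, norm_smul, norm_smul, hz, hw, real_inner_smul_left,
      real_inner_smul_right, Real.norm_eq_abs, Real.norm_eq_abs, mul_one, mul_one, sq_abs, sq_abs]
    ring
  have inner_le : inner ℝ z w ≤ 1 - 2 * δ ^ 2 := by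
    have := pow_le_pow_left₀ (by positivity) hzw 2
    rw [norm_sub_sq_real, hz, hw] at this
    linarith
  have add_le : a + b ≤ 8 * (a * b) := by nlinarith
  refine le_of_sq_le_sq ?_ (by nlinarith)
  calc ‖a • z + b • w‖ ^ 2 ≤ a ^ 2 + b ^ 2 + 2 * (a * b) * (1 - 2 * δ ^ 2) := by
        rw [norm_sq]; gcongr
    _ = (a + b) ^ 2 - 8 * (a * b) * δ ^ 2 / 2 := by ring
    _ ≤ (a + b) ^ 2 - (a + b) * δ ^ 2 / 2 + (δ ^ 2 / 4) ^ 2 := by nlinarith [sq_nonneg δ]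
    _ = (a + b - δ ^ 2 / 4) ^ 2 := by ring

theorem norm_sum_filter_mul_prod_pow_le {κ Ω : Type*} [Fintype κ] [Fintype Ω]
    (r : Ω → κ → ℕ) (m : κ → ℕ) (F : Ω → ℂ) {ρ : κ → ℝ} (hρ : ∀ j, 0 ≤ ρ j) (C : ℝ)
    (h : ∀ x : κ → ℂ, (∀ j, ‖x j‖ = 1) → ‖∑ ω, F ω * ∏ j, (ρ j * x j) ^ r ω j‖ ≤ C) :
    ‖∑ ω with r ω = m, F ω‖ * ∏ j, ρ j ^ m j ≤ C := by
  have hweighted := norm_sum_filter_le_of_norm_generating_le r m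
    (fun ω => F ω * ∏ j, (ρ j : ℂ) ^ r ω j) C fun x hx => by
      simpa only [mul_assoc, ← prod_mul_distrib, ← mul_pow] using h x hx
  have hnorm : ‖∏ j, (ρ j : ℂ) ^ m j‖ = ∏ j, ρ j ^ m j := by
    simp only [norm_prod, norm_pow, Complex.norm_of_nonneg (hρ _)]
  rwa [sum_congr rfl fun ω hω => by rw [(mem_filter.1 hω).2], ← sum_mul, norm_mul, hnorm]
    at hweighted

end NormGain

section NonadditivePhase

variable {p : ℕ} [NeZero p]

-- `Z(x, x) Z(0, 0) = Z(x, 0)² e(2x(u x - u 0))`, so the three values cannot all be close.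
theorem two_div_le_norm_edgePhase_sub_or {u : ZMod p → ZMod p} {x : ZMod p}
    (hx : 2 * x * (u x - u 0) ≠ 0) {ω : ZMod p → ℂ} (hω : ∀ i, ‖ω i‖ = 1)
    {Z : ZMod p × ZMod p → ℂ}
    (hZ : ∀ z, Z z = ω z.1 * ω z.2 * ZMod.stdAddChar (edgePhase u z)) :
    2 * (1 / (p : ℝ)) ≤ ‖Z (0, 0) - Z (x, 0)‖ ∨ 2 * (1 / (p : ℝ)) ≤ ‖Z (x, x) - Z (x, 0)‖ := by
  have norm_Z (z : ZMod p × ZMod p) : ‖Z z‖ = 1 := by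
    simp only [hZ, norm_mul, hω, AddChar.norm_apply, mul_one]
  have phase : (ZMod.stdAddChar (edgePhase u (x, x)) * ZMod.stdAddChar (edgePhase u (0, 0)) : ℂ)
      = ZMod.stdAddChar (edgePhase u (x, 0)) ^ 2 * ZMod.stdAddChar (2 * x * (u x - u 0)) := by
    rw [pow_two, ← AddChar.map_add_eq_mul, ← AddChar.map_add_eq_mul, ← AddChar.map_add_eq_mul]
    congr 1
    simp only [edgePhase]
    ring
  have defect : Z (x, x) * Z (0, 0) - Z (x, 0) ^ 2
      = Z (x, 0) ^ 2 * (ZMod.stdAddChar (2 * x * (u x - u 0)) - 1) := by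
    simp only [hZ]
    linear_combination (ω x ^ 2 * ω 0 ^ 2) * phase
  by_contra! hlt
  refine absurd (four_div_le_norm_stdAddChar_sub_one hx) (not_le.2 ?_)
  calc ‖(ZMod.stdAddChar (2 * x * (u x - u 0)) : ℂ) - 1‖
      = ‖Z (x, x) * (Z (0, 0) - Z (x, 0)) + Z (x, 0) * (Z (x, x) - Z (x, 0))‖ := by
        rw [← one_mul ‖_ - _‖, ← one_pow 2, ← norm_Z (x, 0), ← norm_pow, ← norm_mul, ← defect]
        ring_nf
    _ ≤ ‖Z (0, 0) - Z (x, 0)‖ + ‖Z (x, x) - Z (x, 0)‖ := by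
        refine (norm_add_le _ _).trans_eq ?_
        rw [norm_mul, norm_mul, norm_Z, norm_Z, one_mul, one_mul]
    _ < 2 * (1 / (p : ℝ)) + 2 * (1 / (p : ℝ)) := add_lt_add hlt.1 hlt.2
    _ = 4 / p := by ring

theorem norm_sum_smul_stdAddChar_edgePhase_le {u : ZMod p → ZMod p} {x : ZMod p}
    (hx : 2 * x * (u x - u 0) ≠ 0) {r : ZMod p → ℝ} (hr : ∀ i, 1 / 2 ≤ r i) (hr_sum : ∑ i, r i = p)
    {ω : ZMod p → ℂ} (hω : ∀ i, ‖ω i‖ = 1) :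
    ‖∑ z : ZMod p × ZMod p,
        (r z.1 * r z.2) • (ω z.1 * ω z.2 * (ZMod.stdAddChar (edgePhase u z) : ℂ))‖
      ≤ (p : ℝ) ^ 2 * (1 - 1 / (4 * (p : ℝ) ^ 4)) := by
  have hp : (1 : ℝ) ≤ p := Nat.one_le_cast.2 (NeZero.pos p)
  set Z : ZMod p × ZMod p → ℂ := fun z => ω z.1 * ω z.2 * ZMod.stdAddChar (edgePhase u z)
  have norm_Z (z : ZMod p × ZMod p) : ‖Z z‖ = 1 := by
    simp only [Z, norm_mul, hω, AddChar.norm_apply, mul_one]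
  have quarter_le (z : ZMod p × ZMod p) : 1 / 4 ≤ r z.1 * r z.2 := by
    nlinarith [hr z.1, hr z.2]
  have norm_smul_Z (z : ZMod p × ZMod p) : ‖(r z.1 * r z.2) • Z z‖ = r z.1 * r z.2 := by
    rw [norm_smul, norm_Z, mul_one, Real.norm_of_nonneg (by linarith [quarter_le z])]
  have sum_norm : ∑ z : ZMod p × ZMod p, ‖(r z.1 * r z.2) • Z z‖ = (p : ℝ) ^ 2 := by
    simp only [norm_smul_Z, Fintype.sum_prod_type, ← mul_sum, ← sum_mul, hr_sum, pow_two]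
  have gain {s t : ZMod p × ZMod p} (hst : s ≠ t) (h : 2 * (1 / (p : ℝ)) ≤ ‖Z s - Z t‖) :
      ‖∑ z : ZMod p × ZMod p, (r z.1 * r z.2) • Z z‖ ≤ (p : ℝ) ^ 2 - (1 / p) ^ 2 / 4 := by
    rw [← sum_norm]
    refine norm_sum_le_sum_norm_sub _ hst ?_
    rw [norm_smul_Z, norm_smul_Z]
    exact norm_smul_add_smul_le_sub (norm_Z s) (norm_Z t) (by positivity)
      (div_le_one_of_le₀ hp (by positivity)) h (quarter_le s) (quarter_le t)
  have hx0 : x ≠ 0 := right_ne_zero_of_mul (left_ne_zero_of_mul hx)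
  have hgain : (p : ℝ) ^ 2 * (1 - 1 / (4 * (p : ℝ) ^ 4)) = (p : ℝ) ^ 2 - (1 / p) ^ 2 / 4 := by
    field_simp
  rw [hgain]
  rcases two_div_le_norm_edgePhase_sub_or hx hω (Z := Z) fun _ => rfl with h | h
  · exact gain (by simp [hx0.symm]) h
  · exact gain (by simp [hx0]) h

theorem one_sub_one_div_four_mul_pow_nonneg : 0 ≤ 1 - 1 / (4 * (p : ℝ) ^ 4) := by
  have : (1 : ℝ) ≤ (p : ℝ) ^ 4 := one_le_pow₀ (Nat.one_le_cast.2 (NeZero.pos p))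
  rw [sub_nonneg]
  exact div_le_one_of_le₀ (by linarith) (by linarith)

variable {ι : Type*} [Fintype ι] [DecidableEq ι]

theorem norm_sum_degreeVector_eq_mul_prod_pow_le {u : ZMod p → ZMod p} {x : ZMod p}
    (hx : 2 * x * (u x - u 0) ≠ 0) {r : ZMod p → ℝ} (hr : ∀ i, 1 / 2 ≤ r i) (hr_sum : ∑ i, r i = p)
    (R : ZMod p → ℕ) :
    ‖∑ f : ι → ZMod p × ZMod p with degreeVector f = R,
        ∏ l, (ZMod.stdAddChar (edgePhase u (f l)) : ℂ)‖ * ∏ i, r i ^ R i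
      ≤ ((p : ℝ) ^ 2 * (1 - 1 / (4 * (p : ℝ) ^ 4))) ^ Fintype.card ι := by
  refine norm_sum_filter_mul_prod_pow_le _ _ _ (fun i => by linarith [hr i]) _ fun ω hω => ?_
  refine le_of_eq_of_le ?_ (pow_le_pow_left₀ (norm_nonneg _)
    (norm_sum_smul_stdAddChar_edgePhase_le hx hr hr_sum hω) (Fintype.card ι))
  rw [← norm_pow, ← card_univ, ← prod_const, Fintype.prod_sum]
  refine congrArg norm (sum_congr rfl fun f _ => ?_)
  rw [prod_pow_degreeVector, ← prod_mul_distrib]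
  refine prod_congr rfl fun l _ => ?_
  rw [Complex.real_smul]
  push_cast
  ring

theorem norm_sum_degreeVector_eq_le [Nonempty ι] {u : ZMod p → ZMod p} {x : ZMod p}
    (hx : 2 * x * (u x - u 0) ≠ 0) {R : ZMod p → ℕ} (hR : ∑ i, R i = 2 * Fintype.card ι)
    (hr : ∀ i, (1 : ℝ) / 2 ≤ p * (R i / (2 * Fintype.card ι : ℕ))) :
    ‖∑ f : ι → ZMod p × ZMod p with degreeVector f = R,
        ∏ l, (ZMod.stdAddChar (edgePhase u (f l)) : ℂ)‖
      ≤ #(typeClass (ι ⊕ ι) R) * (((2 * Fintype.card ι : ℕ) + 1 : ℝ) ^ p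
        * (1 - 1 / (4 * (p : ℝ) ^ 4)) ^ Fintype.card ι) := by
  have hp : (0 : ℝ) < p := Nat.cast_pos.2 (NeZero.pos p)
  have hE : 0 < 2 * Fintype.card ι := Nat.mul_pos two_pos Fintype.card_pos
  set r : ZMod p → ℝ := fun i => p * (R i / (2 * Fintype.card ι : ℕ))
  have hr_sum : ∑ i, r i = p := by
    rw [← mul_sum, ← sum_div, ← Nat.cast_sum, hR, div_self (Nat.cast_ne_zero.2 hE.ne'), mul_one]
  have hr_pow : ∏ i, r i ^ R i = (p : ℝ) ^ (2 * Fintype.card ι)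
      * ∏ i, ((R i : ℝ) / (2 * Fintype.card ι : ℕ)) ^ R i := by
    rw [← hR, ← prod_pow_eq_pow_sum, ← prod_mul_distrib, hR]
    exact prod_congr rfl fun i _ => mul_pow _ _ _
  have type_bound : (p : ℝ) ^ (2 * Fintype.card ι)
      ≤ ((2 * Fintype.card ι : ℕ) + 1 : ℝ) ^ p * (#(typeClass (ι ⊕ ι) R) * ∏ i, r i ^ R i) := by
    have hlower := one_le_mul_card_typeClass_mul_prod_pow (ι := ι ⊕ ι)
      (by rw [Fintype.card_sum, two_mul]) hE hR
    rw [ZMod.card] at hlower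
    rw [hr_pow]
    nlinarith [pow_pos hp (2 * Fintype.card ι)]
  have hP : 0 < ∏ i, r i ^ R i := prod_pos fun i _ => pow_pos (by linarith [hr i]) _
  refine le_of_mul_le_mul_right
    ((norm_sum_degreeVector_eq_mul_prod_pow_le hx hr hr_sum R).trans ?_) hP
  rw [mul_pow, ← pow_mul]
  refine (mul_le_mul_of_nonneg_right type_bound
    (pow_nonneg one_sub_one_div_four_mul_pow_nonneg _)).trans_eq ?_
  ring

end NonadditivePhase

section ConstraintProbability

theorem norm_sum_filter_sub_sum_filter_le {Ω : Type*} [Fintype Ω] {P Q : Ω → Prop}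
    [DecidablePred P] [DecidablePred Q] (hPQ : ∀ ω, P ω → Q ω) {w : Ω → ℝ} (hw : ∀ ω, 0 ≤ w ω)
    {χ : Ω → ℂ} (hχ : ∀ ω, ‖χ ω‖ = 1) :
    ‖∑ ω with P ω, w ω * χ ω - ∑ ω with Q ω, w ω * χ ω‖ ≤ ∑ ω with ¬ P ω, w ω := by
  rw [sum_filter, sum_filter, sum_filter, ← sum_sub_distrib]
  refine (norm_sum_le _ _).trans (sum_le_sum fun ω _ => ?_)
  by_cases hP : P ω
  · simp only [hP, hPQ ω hP, if_true, sub_self, norm_zero, not_true_eq_false, if_false, le_refl]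
  · rw [if_neg hP, if_pos hP, zero_sub, norm_neg]
    split_ifs
    · rw [norm_mul, hχ, mul_one, Complex.norm_of_nonneg (hw ω)]
    · exact norm_zero.trans_le (hw ω)

variable {p : ℕ}

theorem edgePhase_eq_of_additive [NeZero p] {u : ZMod p → ZMod p}
    (hu : p = 2 ∨ ∀ x, u x = u 0) (z : ZMod p × ZMod p) : edgePhase u z = u 0 * (z.1 + z.2) := by
  rcases hu with rfl | hu
  · revert u z
    decide
  · simp only [edgePhase, hu]
    ring

theorem card_zmod_two_fun_zero_eq_zero : #{u : ZMod 2 → ZMod 2 | u 0 = 0} = 2 := by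
  decide

theorem card_additive_eq_zero [NeZero p] :
    #{u : ZMod p → ZMod p | (p = 2 ∨ ∀ x, u x = u 0) ∧ u 0 = 0} = 1 + if p = 2 then 1 else 0 := by
  rcases eq_or_ne p 2 with rfl | hp2
  · simp only [true_or, true_and, if_true]
    exact card_zmod_two_fun_zero_eq_zero
  · rw [if_neg hp2, add_zero, card_eq_one]
    refine ⟨0, ext fun u => ?_⟩
    simp only [mem_filter_univ, hp2, false_or, mem_singleton, funext_iff, Pi.zero_apply]
    exact ⟨fun ⟨hconst, h0⟩ x => (hconst x).trans h0, fun h => ⟨fun x => by rw [h, h], h 0⟩⟩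

variable [Fact p.Prime]

theorem exists_two_mul_sub_ne_zero {u : ZMod p → ZMod p} (hu : ¬ (p = 2 ∨ ∀ x, u x = u 0)) :
    ∃ x, 2 * x * (u x - u 0) ≠ 0 := by
  push Not at hu
  obtain ⟨hp2, x, hx⟩ := hu
  have two_ne_zero : (2 : ZMod p) ≠ 0 := Ring.two_ne_zero (by rwa [ZMod.ringChar_zmod_n])
  exact ⟨x, mul_ne_zero (mul_ne_zero two_ne_zero fun h => hx (by rw [h])) (sub_ne_zero.2 hx)⟩

variable {ι : Type*} [Fintype ι] [DecidableEq ι] {d n : ℕ}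

open Classical in
theorem norm_sum_edgeLaw_mul_stdAddChar_le [Nonempty ι] (hE : 2 * Fintype.card ι = d * n)
    {u : ZMod p → ZMod p} {x : ZMod p} (hx : 2 * x * (u x - u 0) ≠ 0) :
    ‖∑ f : ι → ZMod p × ZMod p with
        ∀ i, (1 : ℝ) / 2 ≤ p * degreeDensity f i,
        (edgeLaw d n f : ℂ) * ∏ l, (ZMod.stdAddChar (edgePhase u (f l)) : ℂ)‖
      ≤ ((2 * Fintype.card ι : ℕ) + 1 : ℝ) ^ p
        * (1 - 1 / (4 * (p : ℝ) ^ 4)) ^ Fintype.card ι := by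
  set B := ((2 * Fintype.card ι : ℕ) + 1 : ℝ) ^ p * (1 - 1 / (4 * (p : ℝ) ^ 4)) ^ Fintype.card ι
  have hB : 0 ≤ B :=
    mul_nonneg (by positivity) (pow_nonneg one_sub_one_div_four_mul_pow_nonneg _)
  simp only [sum_filter, ← mul_ite_zero]
  rw [sum_edgeLaw_mul, norm_div, norm_pow, Complex.norm_natCast,
    div_le_iff₀ (pow_pos (Nat.cast_pos.2 Fintype.card_pos) _)]
  refine (norm_sum_le_of_le (n := fun _ => B) _ fun a _ => ?_).trans_eq ?_
  · have hR : ∑ i, (d • fiberCard a) i = 2 * Fintype.card ι := by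
      simp only [Pi.smul_apply, smul_eq_mul, ← mul_sum, sum_fiberCard, Fintype.card_fin, hE]
    have hpos : 0 < #(typeClass (ι ⊕ ι) (d • fiberCard a)) :=
      card_typeClass_pos (by rw [hR, Fintype.card_sum, two_mul])
    rw [norm_div, Complex.norm_natCast, div_le_iff₀ (Nat.cast_pos.2 hpos), mul_comm B,
      sum_congr rfl fun f hf => by unfold degreeDensity; rw [(mem_filter.1 hf).2]]
    by_cases hr : ∀ i, (1 : ℝ) / 2 ≤ p * ((d • fiberCard a) i / (2 * Fintype.card ι : ℕ))
    · simp only [if_pos hr]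
      exact norm_sum_degreeVector_eq_le hx hR hr
    · simp only [if_neg hr, sum_const_zero, norm_zero]
      positivity
  · rw [sum_const, card_univ, Fintype.card_pi_const, nsmul_eq_mul, Nat.cast_pow, mul_comm]

theorem norm_sum_edgeLaw_mul_stdAddChar_sub_ite_le [Nonempty ι] (hE : 2 * Fintype.card ι = d * n)
    (hg : Nat.gcd p d = 1) {P : (ι → ZMod p × ZMod p) → Prop} [DecidablePred P]
    (hP : ∀ f, P f → ∀ i, (1 : ℝ) / 2 ≤ p * degreeDensity f i)
    (u : ZMod p → ZMod p) [Decidable ((p = 2 ∨ ∀ x, u x = u 0) ∧ u 0 = 0)] :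
    ‖∑ f with P f, (edgeLaw d n f : ℂ) * ∏ l, (ZMod.stdAddChar (edgePhase u (f l)) : ℂ)
        - if (p = 2 ∨ ∀ x, u x = u 0) ∧ u 0 = 0 then 1 else 0‖
      ≤ ∑ f with ¬ P f, edgeLaw d n f + ((2 * Fintype.card ι : ℕ) + 1 : ℝ) ^ p
        * (1 - 1 / (4 * (p : ℝ) ^ 4)) ^ Fintype.card ι := by
  classical
  have hn : 0 < n := Nat.pos_of_ne_zero fun h => by
    rw [h, mul_zero] at hE
    exact absurd hE (Nat.mul_pos two_pos Fintype.card_pos).ne'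
  have restriction {Q : (ι → ZMod p × ZMod p) → Prop} [DecidablePred Q] (hPQ : ∀ f, P f → Q f) :=
    norm_sum_filter_sub_sum_filter_le hPQ (fun f => edgeLaw_nonneg d n f)
      (χ := fun f => ∏ l, (ZMod.stdAddChar (edgePhase u (f l)) : ℂ))
      fun f => by simp only [norm_prod, AddChar.norm_apply, prod_const_one]
  by_cases hu : p = 2 ∨ ∀ x, u x = u 0
  · have additive_sum := sum_edgeLaw_mul_prod_stdAddChar_of_additive hE hn hg
      (edgePhase_eq_of_additive hu)
    have := restriction (Q := fun _ => True) fun _ _ => trivial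
    rw [filter_true, additive_sum] at this
    simp only [hu, true_and]
    exact this.trans (le_add_of_nonneg_right
      (mul_nonneg (by positivity) (pow_nonneg one_sub_one_div_four_mul_pow_nonneg _)))
  · obtain ⟨x, hx⟩ := exists_two_mul_sub_ne_zero hu
    simp only [hu, false_and, if_false, sub_zero]
    exact (norm_le_norm_sub_add _ _).trans
      (add_le_add (restriction hP) (norm_sum_edgeLaw_mul_stdAddChar_le hE hx))

theorem abs_sum_pow_mul_edgeLaw_sub_le [Nonempty ι] (hE : 2 * Fintype.card ι = d * n)
    (hg : Nat.gcd p d = 1) {P : (ι → ZMod p × ZMod p) → Prop} [DecidablePred P]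
    (hP : ∀ f, P f → ∀ i, (1 : ℝ) / 2 ≤ p * degreeDensity f i) :
    |∑ f with (∀ i, ∑ j : ZMod p, j * (edgeMatrix f i j : ZMod p) = 0) ∧ P f,
        (p : ℝ) ^ p * edgeLaw d n f - (1 + if p = 2 then 1 else 0)|
      ≤ (p : ℝ) ^ p * (∑ f with ¬ P f, edgeLaw d n f + ((2 * Fintype.card ι : ℕ) + 1 : ℝ) ^ p
        * (1 - 1 / (4 * (p : ℝ) ^ 4)) ^ Fintype.card ι) := by
  have fourier : ((∑ f with (∀ i, ∑ j : ZMod p, j * (edgeMatrix f i j : ZMod p) = 0) ∧ P f,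
        (p : ℝ) ^ p * edgeLaw d n f : ℝ) : ℂ) = ∑ u : ZMod p → ZMod p, ∑ f with P f,
        (edgeLaw d n f : ℂ) * ∏ l, (ZMod.stdAddChar (edgePhase u (f l)) : ℂ) := by
    rw [sum_comm]
    simp only [← mul_sum, sum_prod_stdAddChar_edgePhase, mul_ite_zero]
    rw [← filter_filter, filter_comm, sum_filter (s := univ.filter P)]
    push_cast
    rw [mul_sum]
    refine sum_congr rfl fun f _ => ?_
    split_ifs
    · exact mul_comm _ _
    · rw [Complex.ofReal_zero, mul_zero]
  have count : ((1 + if p = 2 then 1 else 0 : ℝ) : ℂ) = ∑ u : ZMod p → ZMod p,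
      (if (p = 2 ∨ ∀ x, u x = u 0) ∧ u 0 = 0 then 1 else 0 : ℂ) := by
    rw [sum_boole, card_additive_eq_zero]
    push_cast
    rw [apply_ite Complex.ofReal, Complex.ofReal_one, Complex.ofReal_zero]
  rw [← Real.norm_eq_abs, ← Complex.norm_real, Complex.ofReal_sub, fourier, count,
    ← sum_sub_distrib]
  refine (norm_sum_le_of_le _ fun u _ =>
    norm_sum_edgeLaw_mul_stdAddChar_sub_ite_le hE hg hP u).trans_eq ?_
  rw [sum_const, card_univ, Fintype.card_fun, nsmul_eq_mul, ZMod.card, Nat.cast_pow]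

end ConstraintProbability

/-! ### Entropy -/

section Entropy

open Real InformationTheory

theorem sqrt_sub_one_sq_le_klFun {x : ℝ} (hx : 0 ≤ x) : (√x - 1) ^ 2 ≤ klFun x := by
  rcases hx.eq_or_lt with rfl | hpos
  · simp [klFun]
  have log_le := mul_le_mul_of_nonneg_left (one_sub_inv_le_log_of_pos (sqrt_pos.2 hpos)) hx
  rw [log_sqrt hx, mul_sub, ← div_eq_mul_inv, div_sqrt] at log_le
  rw [klFun, sub_sq, sq_sqrt hx]
  linarith

theorem sub_one_sq_div_le_klFun {x : ℝ} (hx : 0 ≤ x) : (x - 1) ^ 2 / (2 * (x + 1)) ≤ klFun x := by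
  refine (div_le_of_le_mul₀ (by positivity) (sq_nonneg _) ?_).trans (sqrt_sub_one_sq_le_klFun hx)
  have factor : x - 1 = (√x - 1) * (√x + 1) := by linarith [mul_self_sqrt hx]
  rw [factor, mul_pow]
  gcongr
  nlinarith [sq_nonneg (√x - 1), sq_sqrt hx]

variable {κ : Type*} [Fintype κ]

/-- Shannon entropy, in nats, of the probability vector `q`. -/
noncomputable def shannonEntropy (q : κ → ℝ) : ℝ :=
  ∑ j, negMulLog (q j)

theorem pow_eq_exp_neg_mul_negMulLog {x N : ℝ} (hx : 0 ≤ x) {k : ℕ} (hk : (k : ℝ) = N * x) :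
    x ^ k = exp (-(N * negMulLog x)) := by
  rcases hx.eq_or_lt with rfl | hpos
  · rw [mul_zero, Nat.cast_eq_zero] at hk
    rw [hk, pow_zero, negMulLog_zero, mul_zero, neg_zero, exp_zero]
  · rw [negMulLog, neg_mul, mul_neg, neg_neg, ← mul_assoc, ← hk, mul_comm, exp_mul, exp_log hpos,
      rpow_natCast]

theorem prod_pow_eq_exp_neg_mul_shannonEntropy {q : κ → ℝ} (hq : ∀ j, 0 ≤ q j) {m : κ → ℕ} {N : ℝ}
    (hm : ∀ j, (m j : ℝ) = N * q j) : ∏ j, q j ^ m j = exp (-(N * shannonEntropy q)) := by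
  rw [shannonEntropy, mul_sum, ← sum_neg_distrib, exp_sum]
  exact prod_congr rfl fun j _ => pow_eq_exp_neg_mul_negMulLog (hq j) (hm j)

theorem log_card_sub_shannonEntropy_eq [Nonempty κ] {q : κ → ℝ} (hs : ∑ j, q j = 1) :
    log (Fintype.card κ) - shannonEntropy q
      = (∑ j, klFun (Fintype.card κ * q j)) / Fintype.card κ := by
  have hκ : (Fintype.card κ : ℝ) ≠ 0 := Nat.cast_ne_zero.2 Fintype.card_ne_zero
  have expand (j : κ) : klFun (Fintype.card κ * q j)
      = Fintype.card κ * log (Fintype.card κ) * q j - Fintype.card κ * negMulLog (q j)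
        + (1 - Fintype.card κ * q j) := by
    have := negMulLog_mul (Fintype.card κ : ℝ) (q j)
    simp only [negMulLog, klFun] at this ⊢
    linarith
  simp only [expand, sum_add_distrib, sum_sub_distrib, ← mul_sum, hs, sum_const, card_univ,
    nsmul_eq_mul, shannonEntropy]
  field_simp
  ring

theorem card_mul_div_eight_le_log_card_sub_shannonEntropy [Nonempty κ] {q : κ → ℝ}
    (hq : ∀ j, 0 ≤ q j) (hs : ∑ j, q j = 1) {τ : ℝ} (hτ : (Fintype.card κ : ℝ) ^ 2 * τ ≤ 4)
    (h : τ ≤ ∑ j, (q j - 1 / Fintype.card κ) ^ 2) :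
    Fintype.card κ * τ / 8 ≤ log (Fintype.card κ) - shannonEntropy q := by
  have hκ : (0 : ℝ) < Fintype.card κ := Nat.cast_pos.2 Fintype.card_pos
  have nonneg (j : κ) : 0 ≤ Fintype.card κ * q j := mul_nonneg hκ.le (hq j)
  rw [log_card_sub_shannonEntropy_eq hs, le_div_iff₀ hκ]
  by_cases hsmall : ∀ j, Fintype.card κ * q j ≤ 3
  · calc Fintype.card κ * τ / 8 * Fintype.card κ = (Fintype.card κ : ℝ) ^ 2 / 8 * τ := by ring
      _ ≤ (Fintype.card κ : ℝ) ^ 2 / 8 * ∑ j, (q j - 1 / Fintype.card κ) ^ 2 := by gcongr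
      _ = ∑ j, (Fintype.card κ * q j - 1) ^ 2 / 8 := by
        rw [mul_sum]
        refine sum_congr rfl fun j _ => ?_
        field_simp
      _ ≤ ∑ j, klFun (Fintype.card κ * q j) := sum_le_sum fun j _ => by
        refine le_trans ?_ (sub_one_sq_div_le_klFun (nonneg j))
        gcongr
        · linarith [nonneg j]
        · linarith [hsmall j]
  · push Not at hsmall
    obtain ⟨j, hj⟩ := hsmall
    have half_le : 1 / 2 ≤ klFun (Fintype.card κ * q j) := by
      refine le_trans ?_ (sub_one_sq_div_le_klFun (nonneg j))
      rw [div_le_div_iff₀ two_pos (by linarith)]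
      nlinarith
    have := single_le_sum (f := fun j => klFun (Fintype.card κ * q j))
      (fun j _ => klFun_nonneg (nonneg j)) (mem_univ j)
    nlinarith

-- The difference of the two sides is the mutual information of the two coordinates.
theorem shannonEntropy_le_add_marginals {κ' : Type*} [Fintype κ'] {q : κ × κ' → ℝ}
    (hq : ∀ z, 0 ≤ q z) (hs : ∑ z, q z = 1) :
    shannonEntropy q
      ≤ shannonEntropy (fun i => ∑ j, q (i, j)) + shannonEntropy fun j => ∑ i, q (i, j) := by
  set r : κ → ℝ := fun i => ∑ j, q (i, j) with hr
  set s : κ' → ℝ := fun j => ∑ i, q (i, j) with hs'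
  have pointwise (z : κ × κ') :
      negMulLog (q z) ≤ r z.1 * s z.2 - q z - q z * log (r z.1) - q z * log (s z.2) := by
    have hqr : q z ≤ r z.1 :=
      single_le_sum (f := fun j => q (z.1, j)) (fun j _ => hq _) (mem_univ z.2)
    have hqs : q z ≤ s z.2 :=
      single_le_sum (f := fun i => q (i, z.2)) (fun i _ => hq _) (mem_univ z.1)
    rcases (hq z).eq_or_lt with h0 | hpos
    · rw [← h0] at hqr hqs ⊢
      simpa using mul_nonneg hqr hqs
    · have hr_pos := hpos.trans_le hqr
      have hs_pos := hpos.trans_le hqs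
      have hlog := mul_le_mul_of_nonneg_left
        (log_le_sub_one_of_pos (div_pos (mul_pos hr_pos hs_pos) hpos)) hpos.le
      have cancel : q z * (r z.1 * s z.2 / q z - 1) = r z.1 * s z.2 - q z := by
        field_simp
      rw [log_div (mul_pos hr_pos hs_pos).ne' hpos.ne', log_mul hr_pos.ne' hs_pos.ne',
        cancel] at hlog
      rw [negMulLog]
      linarith
  have hr_sum : ∑ i, r i = 1 := by rw [← hs, Fintype.sum_prod_type]
  have hs_sum : ∑ j, s j = 1 := by rw [← hs, Fintype.sum_prod_type_right]
  have fst_sum : ∑ z, q z * log (r z.1) = ∑ i, r i * log (r i) := by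
    simp only [Fintype.sum_prod_type, ← sum_mul, hr]
  have snd_sum : ∑ z, q z * log (s z.2) = ∑ j, s j * log (s j) := by
    simp only [Fintype.sum_prod_type_right, ← sum_mul, hs']
  have mul_sum : ∑ z : κ × κ', r z.1 * s z.2 = 1 := by
    simp only [Fintype.sum_prod_type, ← mul_sum, hs_sum, mul_one, hr_sum]
  refine (sum_le_sum fun z _ => pointwise z).trans_eq ?_
  rw [sum_sub_distrib, sum_sub_distrib, sum_sub_distrib, mul_sum, hs, fst_sum, snd_sum]
  simp only [shannonEntropy, negMulLog, neg_mul, sum_neg_distrib]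
  ring

end Entropy

section EntropyTail

open Real

section TypeClass

variable {κ ι : Type*} [Fintype κ] [DecidableEq κ] [Fintype ι] [DecidableEq ι]

theorem card_typeClass_le_exp {m : κ → ℕ} {q : κ → ℝ} (hq : ∀ j, 0 ≤ q j) (hs : ∑ j, q j = 1)
    {N : ℝ} (hm : ∀ j, (m j : ℝ) = N * q j) : #(typeClass ι m) ≤ exp (N * shannonEntropy q) := by
  have h := card_typeClass_mul_prod_pow_le_one (ι := ι) m hq hs
  rw [prod_pow_eq_exp_neg_mul_shannonEntropy hq hm, exp_neg, ← div_eq_mul_inv] at h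
  exact (div_le_one (exp_pos _)).1 h

theorem exp_le_mul_card_typeClass [Nonempty ι] {m : κ → ℕ} (hm : ∑ j, m j = Fintype.card ι) :
    exp (Fintype.card ι * shannonEntropy fun j => (m j / Fintype.card ι : ℝ))
      ≤ ((Fintype.card ι : ℝ) + 1) ^ Fintype.card κ * #(typeClass ι m) := by
  have h := one_le_mul_card_typeClass_mul_prod_pow rfl Fintype.card_pos hm
  rwa [prod_pow_eq_exp_neg_mul_shannonEntropy (N := Fintype.card ι) (fun _ => by positivity)
    (fun j => by field_simp), ← mul_assoc, exp_neg, ← div_eq_mul_inv, one_le_div (exp_pos _)] at h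

end TypeClass

variable {V ι : Type*} [Fintype V] [DecidableEq V] [Fintype ι]

-- Both orientations of an edge have the same probability, so the square of the probability of a
-- word is the product of the probabilities of all its oriented edges.
theorem card_filter_edgeMatrix_mul_sqrt_le_one [DecidableEq ι] (M : V → V → ℕ) {q : V × V → ℝ}
    (hq : ∀ z, 0 ≤ q z) (hsymm : ∀ z, q z.swap = q z) (hs : ∑ z, q z = 1) :
    #{f : ι → V × V | edgeMatrix f = M} * √(∏ z, q z ^ M z.1 z.2) ≤ 1 := by
  have sqrt_eq (f : ι → V × V) (hf : edgeMatrix f = M) :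
      √(∏ z, q z ^ M z.1 z.2) = ∏ l, q (f l) := by
    rw [sqrt_eq_iff_mul_self_eq (prod_nonneg fun z _ => pow_nonneg (hq z) _)
      (prod_nonneg fun l _ => hq _)]
    have swapped : ∏ z, q z ^ fiberCard f z = ∏ z, q z ^ fiberCard f z.swap := by
      rw [← (Equiv.prodComm V V).prod_comp]
      simp [hsymm]
    nth_rw 1 [prod_comp_eq_prod_pow_fiberCard f q]
    rw [prod_comp_eq_prod_pow_fiberCard f q, swapped, ← hf, ← swapped]
    nth_rw 2 [swapped]
    simp only [← prod_mul_distrib, ← pow_add]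
    rfl
  calc (#{f : ι → V × V | edgeMatrix f = M} : ℝ) * √(∏ z, q z ^ M z.1 z.2)
      = ∑ f : ι → V × V with edgeMatrix f = M, ∏ l, q (f l) := by
        rw [← nsmul_eq_mul, ← sum_const]
        exact sum_congr rfl fun f hf => sqrt_eq f (mem_filter.1 hf).2
    _ ≤ ∑ f : ι → V × V, ∏ l, q (f l) :=
      sum_le_univ_sum_of_nonneg fun f => prod_nonneg fun l _ => hq _
    _ = 1 := by rw [← Fintype.prod_sum fun (_ : ι) => q, hs, prod_const_one]

variable [Nonempty ι]

theorem shannonEntropy_edgeDensity_le (f : ι → V × V) :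
    shannonEntropy (edgeDensity f) ≤ 2 * shannonEntropy (degreeDensity f) := by
  have h := shannonEntropy_le_add_marginals (edgeDensity_nonneg f) (sum_edgeDensity f)
  simp only [sum_edgeDensity_right, sum_edgeDensity_left] at h
  linarith

variable [DecidableEq ι]

theorem card_filter_edgeMatrix_eq_le_exp (f : ι → V × V) :
    #{g : ι → V × V | edgeMatrix g = edgeMatrix f}
      ≤ exp (Fintype.card ι * shannonEntropy (edgeDensity f)) := by
  have h := card_filter_edgeMatrix_mul_sqrt_le_one (ι := ι) (edgeMatrix f) (edgeDensity_nonneg f)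
    (edgeDensity_swap f) (sum_edgeDensity f)
  rw [prod_pow_eq_exp_neg_mul_shannonEntropy (N := (2 * Fintype.card ι : ℕ)) (edgeDensity_nonneg f)
    (fun z => by rw [edgeDensity]; field_simp), ← exp_half, ← le_div_iff₀ (exp_pos _), one_div,
    ← exp_neg] at h
  refine h.trans_eq (congrArg exp ?_)
  push_cast
  ring

variable {d n : ℕ}

theorem edgeLaw_le_exp [Nonempty V] (hE : 2 * Fintype.card ι = d * n) (f : ι → V × V) :
    edgeLaw d n f ≤ ((2 * Fintype.card ι : ℕ) + 1 : ℝ) ^ Fintype.card V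
      * exp (n * shannonEntropy (degreeDensity f)
        - (n * log (Fintype.card V) + d * n * shannonEntropy (degreeDensity f))) := by
  by_cases hf : edgeLaw d n f = 0
  · rw [hf]
    positivity
  have hdn : 0 < d * n := hE ▸ by positivity
  have hd : 0 < d := pos_of_mul_pos_left hdn n.zero_le
  have hdvd := dvd_degreeVector_of_edgeLaw_ne_zero hf
  have hcard : Fintype.card (ι ⊕ ι) = 2 * Fintype.card ι := by rw [Fintype.card_sum]; ring
  have numerator : (#(typeClass (Fin n) fun i => degreeVector f i / d) : ℝ)
      ≤ exp (n * shannonEntropy (degreeDensity f)) := by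
    refine card_typeClass_le_exp (degreeDensity_nonneg f) (sum_degreeDensity f) fun i => ?_
    rw [Nat.cast_div (hdvd i) (by positivity), degreeDensity, hE]
    have : (n : ℝ) ≠ 0 := by exact_mod_cast (pos_of_mul_pos_right hdn d.zero_le).ne'
    push_cast
    field_simp
  have denominator : exp (d * n * shannonEntropy (degreeDensity f))
      ≤ ((2 * Fintype.card ι : ℕ) + 1 : ℝ) ^ Fintype.card V
        * #(typeClass (ι ⊕ ι) (degreeVector f)) := by
    have h := exp_le_mul_card_typeClass (ι := ι ⊕ ι) ((sum_degreeVector f).trans hcard.symm)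
    simp only [hcard] at h
    rw [← Nat.cast_mul, ← hE]
    exact h
  have hW : (0 : ℝ) < #(typeClass (ι ⊕ ι) (degreeVector f)) := by
    exact_mod_cast card_typeClass_pos ((sum_degreeVector f).trans hcard.symm)
  have base : (Fintype.card V : ℝ) ^ n = exp (n * log (Fintype.card V)) := by
    rw [exp_nat_mul, exp_log (by positivity)]
  rw [edgeLaw_eq hd n hdvd, exp_sub, exp_add, base, ← mul_div_assoc,
    div_le_div_iff₀ (by positivity) (by positivity)]
  calc _ ≤ exp (n * shannonEntropy (degreeDensity f)) * (exp (n * log (Fintype.card V))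
        * (((2 * Fintype.card ι : ℕ) + 1 : ℝ) ^ Fintype.card V
          * #(typeClass (ι ⊕ ι) (degreeVector f)))) := by gcongr
    _ = _ := by ring

omit [Nonempty ι] in
theorem edgeLaw_congr {f g : ι → V × V} (h : edgeMatrix f = edgeMatrix g) :
    edgeLaw d n f = edgeLaw d n g := by
  have : degreeVector f = degreeVector g := by
    funext i
    rw [← sum_edgeMatrix, ← sum_edgeMatrix, h]
  rw [edgeLaw, edgeLaw, this]

-- Because `H ≤ 2 * h`, the exponent `d * n / 2 * H + n * h - n * log |V| - d * n * h` is at most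
-- `n / 2 * (H - 2 * log |V|)`.
theorem sum_edgeLaw_filter_edgeMatrix_eq_le [Nonempty V] (hE : 2 * Fintype.card ι = d * n)
    {τ : ℝ} (hτ : (Fintype.card V : ℝ) ^ 4 * τ ≤ 4) {f : ι → V × V}
    (hf : τ ≤ ∑ z, (edgeDensity f z - 1 / (Fintype.card V : ℝ) ^ 2) ^ 2) :
    ∑ g : ι → V × V with edgeMatrix g = edgeMatrix f, edgeLaw d n g
      ≤ ((2 * Fintype.card ι : ℕ) + 1 : ℝ) ^ Fintype.card V
        * exp (-(n * (Fintype.card V : ℝ) ^ 2 * τ / 16)) := by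
  have hd : (1 : ℝ) ≤ d := by
    exact_mod_cast pos_of_mul_pos_left (hE ▸ by positivity : 0 < d * n) n.zero_le
  have hEr : (Fintype.card ι : ℝ) = d * n / 2 := by
    rw [eq_div_iff two_ne_zero, mul_comm]
    exact_mod_cast hE
  have divergence := card_mul_div_eight_le_log_card_sub_shannonEntropy (τ := τ)
    (edgeDensity_nonneg f) (sum_edgeDensity f)
    (by rw [Fintype.card_prod]; push_cast; linarith)
    (by rw [Fintype.card_prod]; push_cast; rwa [← sq])
  rw [Fintype.card_prod, Nat.cast_mul, ← sq, log_pow] at divergence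
  have subadditive := shannonEntropy_edgeDensity_le f
  set H := shannonEntropy (edgeDensity f)
  set h := shannonEntropy (degreeDensity f)
  set l := log (Fintype.card V)
  have exponent : Fintype.card ι * H + (n * h - (n * l + d * n * h))
      ≤ -(n * (Fintype.card V : ℝ) ^ 2 * τ / 16) := by
    rw [hEr]
    have gap : 0 ≤ (n : ℝ) * ((d - 1) * (2 * h - H)) :=
      mul_nonneg n.cast_nonneg (mul_nonneg (by linarith) (by linarith))
    have := mul_le_mul_of_nonneg_left divergence (n.cast_nonneg (α := ℝ))
    push_cast at this
    linarith
  rw [sum_congr rfl fun g hg => edgeLaw_congr (mem_filter.1 hg).2, sum_const, nsmul_eq_mul]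
  calc _ ≤ exp (Fintype.card ι * H) * (((2 * Fintype.card ι : ℕ) + 1 : ℝ) ^ Fintype.card V
        * exp (n * h - (n * l + d * n * h))) :=
        mul_le_mul (card_filter_edgeMatrix_eq_le_exp f) (edgeLaw_le_exp hE f)
          (edgeLaw_nonneg d n f) (exp_pos _).le
    _ = ((2 * Fintype.card ι : ℕ) + 1 : ℝ) ^ Fintype.card V
        * exp (Fintype.card ι * H + (n * h - (n * l + d * n * h))) := by
      rw [exp_add (Fintype.card ι * H)]
      ring
    _ ≤ _ := by gcongr

omit [Nonempty ι] [DecidableEq ι] in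
theorem card_image_edgeMatrix_le (s : Finset (ι → V × V)) :
    #(s.image edgeMatrix) ≤ (2 * Fintype.card ι + 1) ^ Fintype.card V ^ 2 := by
  have entry_le (f : ι → V × V) (i j : V) : edgeMatrix f i j ≤ 2 * Fintype.card ι := by
    rw [← sum_degreeVector f]
    refine le_trans ?_ (single_le_sum (fun _ _ => Nat.zero_le _) (mem_univ i))
    rw [← sum_edgeMatrix]
    exact single_le_sum (f := edgeMatrix f i) (fun _ _ => Nat.zero_le _) (mem_univ j)
  have subset : s.image edgeMatrix ⊆ Fintype.piFinset fun _ : V =>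
      Fintype.piFinset fun _ : V => range (2 * Fintype.card ι + 1) := by
    intro M hM
    obtain ⟨f, -, rfl⟩ := mem_image.1 hM
    simpa [Nat.lt_succ_iff] using entry_le f
  refine (card_le_card subset).trans_eq ?_
  simp [← pow_mul, sq]

theorem sum_edgeLaw_filter_not_le [Nonempty V] (hE : 2 * Fintype.card ι = d * n) {τ : ℝ}
    (hτ : (Fintype.card V : ℝ) ^ 4 * τ ≤ 4) :
    ∑ f : ι → V × V with ¬ ∑ z, (edgeDensity f z - 1 / (Fintype.card V : ℝ) ^ 2) ^ 2 ≤ τ,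
        edgeLaw d n f
      ≤ ((2 * Fintype.card ι : ℕ) + 1 : ℝ) ^ (Fintype.card V ^ 2 + Fintype.card V)
        * exp (-(n * (Fintype.card V : ℝ) ^ 2 * τ / 16)) := by
  classical
  set S : Finset (ι → V × V) :=
    {f | ¬ ∑ z, (edgeDensity f z - 1 / (Fintype.card V : ℝ) ^ 2) ^ 2 ≤ τ}
  rw [← sum_fiberwise_of_maps_to fun f hf => mem_image_of_mem edgeMatrix hf]
  have fiber_le (M : V → V → ℕ) (hM : M ∈ S.image edgeMatrix) :
      ∑ f ∈ S with edgeMatrix f = M, edgeLaw d n f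
        ≤ ((2 * Fintype.card ι : ℕ) + 1 : ℝ) ^ Fintype.card V
          * exp (-(n * (Fintype.card V : ℝ) ^ 2 * τ / 16)) := by
    obtain ⟨f, hf, rfl⟩ := mem_image.1 hM
    refine le_trans ?_ (sum_edgeLaw_filter_edgeMatrix_eq_le hE hτ
      (le_of_not_ge (mem_filter.1 hf).2))
    exact sum_le_sum_of_subset_of_nonneg (filter_subset_filter _ (subset_univ _))
      fun g _ _ => edgeLaw_nonneg d n g
  refine (sum_le_card_nsmul _ _ _ fiber_le).trans ?_
  rw [nsmul_eq_mul, pow_add, mul_assoc (_ ^ Fintype.card V ^ 2)]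
  gcongr
  exact_mod_cast card_image_edgeMatrix_le S

end EntropyTail

/-! ### Uniform estimates -/

section ChiSqGeometry

variable {κ : Type*} [Fintype κ]

theorem chiSq_div (q : κ → ℝ) {c : ℝ} (hc : c ≠ 0) : chiSq (fun j => q j / c) = chiSq q := by
  simp only [chiSq, ← sum_div, div_div_div_cancel_right₀ hc]

theorem sum_sq_mul_chiSq_le {q : κ → ℝ} (hq : ∑ j, q j ≠ 0) (c : ℝ) :
    (∑ j, q j) ^ 2 * chiSq q ≤ Fintype.card κ * ∑ j, (q j - c) ^ 2 := by
  have hexpand (c : ℝ) : ∑ j, (q j - c) ^ 2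
      = ∑ j, q j ^ 2 - 2 * (∑ j, q j) * c + Fintype.card κ * c ^ 2 := by
    simp only [sub_sq, sum_add_distrib, sum_sub_distrib, ← sum_mul, ← mul_sum, sum_const,
      card_univ, nsmul_eq_mul]
  have hκ : (Fintype.card κ : ℝ) ≠ 0 := by
    obtain ⟨j, -, -⟩ := exists_ne_zero_of_sum_ne_zero hq
    exact_mod_cast (Fintype.card_pos_iff.2 ⟨j⟩).ne'
  have hchi : (∑ j, q j) ^ 2 * chiSq q
      = Fintype.card κ * ∑ j, (q j - (∑ i, q i) / Fintype.card κ) ^ 2 := by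
    rw [chiSq, mul_left_comm, mul_sum]
    congr 1
    refine sum_congr rfl fun j _ => ?_
    rw [← mul_pow]
    field_simp
  rw [hchi, hexpand, hexpand c]
  have : 0 ≤ (∑ j, q j - Fintype.card κ * c) ^ 2 := sq_nonneg _
  field_simp
  linarith

variable [Nonempty κ] {q : κ → ℝ}

theorem one_div_two_mul_card_le_sum
    (hq : 4 * (Fintype.card κ : ℝ) ^ 3 * ∑ j, (q j - 1 / (Fintype.card κ : ℝ) ^ 2) ^ 2 ≤ 1) :
    1 / (2 * (Fintype.card κ : ℝ)) ≤ ∑ j, q j := by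
  have hκ : (0 : ℝ) < Fintype.card κ := by exact_mod_cast Fintype.card_pos
  set k : ℝ := (Fintype.card κ : ℝ)
  have hcauchy : (∑ j, q j - 1 / k) ^ 2 ≤ k * ∑ j, (q j - 1 / k ^ 2) ^ 2 := by
    calc (∑ j, q j - 1 / k) ^ 2 = (∑ j, (q j - 1 / k ^ 2)) ^ 2 := by
          rw [sum_sub_distrib, sum_const, card_univ, nsmul_eq_mul, mul_one_div, sq k,
            div_mul_cancel_left₀ hκ.ne', one_div]
      _ ≤ k * ∑ j, (q j - 1 / k ^ 2) ^ 2 := sq_sum_le_card_mul_sum_sq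
  have hsq : (∑ j, q j - 1 / k) ^ 2 ≤ (1 / (2 * k)) ^ 2 := by
    refine hcauchy.trans ?_
    rw [div_pow, le_div_iff₀ (by positivity)]
    linarith
  have hlow := (abs_le.1 (abs_le_of_sq_le_sq hsq (by positivity))).1
  have hhalf : 1 / k = 2 * (1 / (2 * k)) := by field_simp
  linarith

theorem sum_mul_chiSq_le
    (hq : 4 * (Fintype.card κ : ℝ) ^ 3 * ∑ j, (q j - 1 / (Fintype.card κ : ℝ) ^ 2) ^ 2 ≤ 1) :
    (∑ j, q j) * chiSq q
      ≤ 2 * (Fintype.card κ : ℝ) ^ 2 * ∑ j, (q j - 1 / (Fintype.card κ : ℝ) ^ 2) ^ 2 := by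
  have : (0 : ℝ) < Fintype.card κ := by exact_mod_cast Fintype.card_pos
  have hlow := one_div_two_mul_card_le_sum hq
  have hr : 0 < ∑ j, q j := (by positivity : (0 : ℝ) < _).trans_le hlow
  have hvar := sum_sq_mul_chiSq_le hr.ne' (1 / (Fintype.card κ : ℝ) ^ 2)
  have hchi : 0 ≤ (∑ j, q j) * chiSq q := mul_nonneg hr.le (chiSq_nonneg q)
  calc (∑ j, q j) * chiSq q
      = 2 * Fintype.card κ * (1 / (2 * Fintype.card κ) * ((∑ j, q j) * chiSq q)) := by field_simp
    _ ≤ 2 * Fintype.card κ * ((∑ j, q j) * ((∑ j, q j) * chiSq q)) := by gcongr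
    _ ≤ 2 * Fintype.card κ * (Fintype.card κ * _) := by
        rw [← mul_assoc (∑ j, q j), ← sq]; gcongr
    _ = _ := by ring

theorem chiSq_le
    (hq : 4 * (Fintype.card κ : ℝ) ^ 3 * ∑ j, (q j - 1 / (Fintype.card κ : ℝ) ^ 2) ^ 2 ≤ 1) :
    chiSq q ≤ 4 * (Fintype.card κ : ℝ) ^ 3 * ∑ j, (q j - 1 / (Fintype.card κ : ℝ) ^ 2) ^ 2 := by
  have : (0 : ℝ) < Fintype.card κ := by exact_mod_cast Fintype.card_pos
  have := chiSq_nonneg q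
  calc chiSq q = 2 * Fintype.card κ * (1 / (2 * Fintype.card κ) * chiSq q) := by field_simp
    _ ≤ 2 * Fintype.card κ * ((∑ j, q j) * chiSq q) := by
        gcongr; exact one_div_two_mul_card_le_sum hq
    _ ≤ 2 * Fintype.card κ * (2 * (Fintype.card κ : ℝ) ^ 2 *
          ∑ j, (q j - 1 / (Fintype.card κ : ℝ) ^ 2) ^ 2) := by
        grw [sum_mul_chiSq_le hq]
    _ = _ := by ring

end ChiSqGeometry

theorem abs_prod_sub_one_le {ι : Type*} [Fintype ι] {x ε : ι → ℝ} (hx : ∀ i, |x i - 1| ≤ ε i)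
    (hε : ∑ i, ε i ≤ 1) : |∏ i, x i - 1| ≤ 2 * ∑ i, ε i := by
  have hε0 : 0 ≤ ∑ i, ε i := sum_nonneg fun i _ => (abs_nonneg _).trans (hx i)
  calc |∏ i, x i - 1| = ‖∏ i, (1 + (x i - 1)) - 1‖ := by
        simp only [add_sub_cancel, Real.norm_eq_abs]
    _ ≤ Real.exp (∑ i, ‖x i - 1‖) - 1 := univ.norm_prod_one_add_sub_one_le _
    _ ≤ Real.exp (∑ i, ε i) - 1 := by gcongr with i; exact hx i
    _ ≤ |Real.exp (∑ i, ε i) - 1| := le_abs_self _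
    _ ≤ 2 * |∑ i, ε i| := Real.abs_exp_sub_one_le (by rwa [abs_of_nonneg hε0])
    _ = _ := by rw [abs_of_nonneg hε0]

theorem sqrt_one_add_pow_le_exp {N : ℕ} {x y : ℝ} (hx : 0 ≤ x) (hxy : N * x ≤ 2 * y) :
    √((1 + x) ^ N) ≤ Real.exp y := by
  rw [Real.sqrt_le_left (Real.exp_pos _).le, ← Real.exp_nat_mul]
  calc (1 + x) ^ N ≤ Real.exp x ^ N := by gcongr; linarith [Real.add_one_le_exp x]
    _ = Real.exp (N * x) := (Real.exp_nat_mul _ _).symm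
    _ ≤ _ := Real.exp_le_exp.2 (by exact_mod_cast hxy)

theorem sqrt_one_half_pow_le_exp (K : ℕ) : √((1 / 2 : ℝ) ^ K) ≤ Real.exp (-(K / 4)) := by
  rw [Real.sqrt_le_left (Real.exp_pos _).le, ← Real.exp_nat_mul]
  calc (1 / 2 : ℝ) ^ K ≤ Real.exp (-(1 / 2)) ^ K := by
        gcongr; linarith [Real.add_one_le_exp (-(1 / 2 : ℝ))]
    _ = Real.exp (K * (-(1 / 2))) := (Real.exp_nat_mul _ _).symm
    _ ≤ _ := by apply Real.exp_le_exp.2; push_cast; linarith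

theorem farError_le {p : ℕ} [NeZero p] {d N n K : ℕ} {m : ZMod p → ℕ} {t : ℝ} (hd : 0 < d)
    (hdn : d < n) (hNn : N ≤ n) (hchi : N * chiSq (fun j => (m j : ℝ)) ≤ 2 * (p : ℝ) ^ 2 * t)
    (hK : 4 * (p : ℝ) ^ 2 * (6 * Real.log n + d * t) ≤ K) : farError d N K m ≤ 1 / (n : ℝ) ^ 2 := by
  have hp : (1 : ℝ) ≤ p := by exact_mod_cast Nat.pos_of_ne_zero (NeZero.ne p)
  have hn : (0 : ℝ) < n := by exact_mod_cast (by omega : 0 < n)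
  have hL : 0 ≤ Real.log n := Real.log_natCast_nonneg n
  have hexp : Real.exp (2 * Real.log n) = (n : ℝ) ^ 2 := by
    rw [← Nat.cast_ofNat, Real.exp_nat_mul, Real.exp_log hn]
  have hdN : ((d * N : ℕ) + 1 : ℝ) ≤ Real.exp (2 * Real.log n) := by
    rw [hexp]; exact_mod_cast (by nlinarith : d * N + 1 ≤ n ^ 2)
  have hN : (N + 1 : ℝ) ≤ Real.exp (2 * Real.log n) := by
    rw [hexp]; exact_mod_cast (by nlinarith : N + 1 ≤ n ^ 2)
  calc farError d N K m
      ≤ Real.exp (2 * Real.log n) ^ p * Real.exp (2 * Real.log n) ^ p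
          * Real.exp (p ^ 2 * t) ^ d * Real.exp (-(K / 4)) := by
        unfold farError
        gcongr
        · exact sqrt_one_add_pow_le_exp (chiSq_nonneg _) (by rwa [← mul_assoc])
        · exact sqrt_one_half_pow_le_exp K
    _ = Real.exp (p * (2 * Real.log n) + p * (2 * Real.log n) + d * (p ^ 2 * t) + -(K / 4)) := by
        simp only [← Real.exp_nat_mul, Real.exp_add]
    _ ≤ Real.exp (-(2 * Real.log n)) := by
        have hp1 : p * Real.log n ≤ p ^ 2 * Real.log n := by gcongr; nlinarith
        have hp2 : Real.log n ≤ p ^ 2 * Real.log n := le_mul_of_one_le_left hL (one_le_pow₀ hp)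
        gcongr
        linarith
    _ = _ := by rw [Real.exp_neg, hexp, one_div]

section RowDeviation

variable {p : ℕ} [NeZero p]

/-- The squared distance of the row `m`, divided by the total `d * n` of its matrix, from the row
of the uniform matrix. -/
noncomputable def rowDeviation (d n : ℕ) (m : ZMod p → ℕ) : ℝ :=
  ∑ j, ((m j : ℝ) / (d * n) - 1 / (p : ℝ) ^ 2) ^ 2

theorem rowDeviation_nonneg (d n : ℕ) (m : ZMod p → ℕ) : 0 ≤ rowDeviation d n m :=
  sum_nonneg fun _ _ => sq_nonneg _

variable {d n N : ℕ} {m : ZMod p → ℕ}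

theorem one_div_two_mul_le_sum_div (hdev : 4 * (p : ℝ) ^ 3 * rowDeviation d n m ≤ 1) :
    1 / (2 * (p : ℝ)) ≤ (∑ j, m j : ℕ) / (d * n) := by
  have := one_div_two_mul_card_le_sum (q := fun j => (m j : ℝ) / (d * n))
    (by rwa [ZMod.card])
  rwa [← sum_div, ← Nat.cast_sum, ZMod.card] at this

theorem chiSq_le_rowDeviation (hd : 0 < d) (hn : 0 < n)
    (hdev : 4 * (p : ℝ) ^ 3 * rowDeviation d n m ≤ 1) :
    chiSq (fun j => (m j : ℝ)) ≤ 4 * (p : ℝ) ^ 3 * rowDeviation d n m := by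
  have := chiSq_le (q := fun j => (m j : ℝ) / (d * n)) (by rwa [ZMod.card])
  rwa [chiSq_div _ (by positivity), ZMod.card] at this

variable (hm : ∑ j, m j = d * N)
include hm

theorem le_two_mul_mul_of_rowDeviation_le (hd : 0 < d) (hn : 0 < n)
    (hdev : 4 * (p : ℝ) ^ 3 * rowDeviation d n m ≤ 1) : (n : ℝ) ≤ 2 * p * N := by
  have hp : (0 : ℝ) < p := by exact_mod_cast Nat.pos_of_ne_zero (NeZero.ne p)
  have hlow := one_div_two_mul_le_sum_div hdev
  rw [hm, Nat.cast_mul, mul_div_mul_left _ _ (by positivity),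
    div_le_div_iff₀ (by positivity) (by positivity)] at hlow
  linarith

theorem mul_chiSq_le_rowDeviation (hd : 0 < d) (hn : 0 < n)
    (hdev : 4 * (p : ℝ) ^ 3 * rowDeviation d n m ≤ 1) :
    N * chiSq (fun j => (m j : ℝ)) ≤ 2 * (p : ℝ) ^ 2 * (n * rowDeviation d n m) := by
  have hle := sum_mul_chiSq_le (q := fun j => (m j : ℝ) / (d * n)) (by rwa [ZMod.card])
  rw [chiSq_div _ (by positivity), ← sum_div, ← Nat.cast_sum, hm, Nat.cast_mul,
    mul_div_mul_left _ _ (by positivity), ZMod.card, div_mul_eq_mul_div,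
    div_le_iff₀ (by positivity)] at hle
  exact hle.trans_eq (by rw [rowDeviation]; ring)

end RowDeviation

/-- The scale `p^{7/2} t^{3/2} / n^{1/2}` of all error terms, where matrices may deviate from
the uniform one by `t / n` in squared distance. -/
noncomputable def errorScale (p n : ℕ) (t : ℝ) : ℝ :=
  √((p : ℝ) ^ 7 * t ^ 3 / n)

/-- The number of exceptional letters up to which a word counts as nearly constant in the row
estimate; beyond it the factor `2 ^ (-K / 2)` of `farError` beats the other ones. -/
noncomputable def rowCutoff (d n p : ℕ) (t : ℝ) : ℕ :=
  ⌈4 * (p : ℝ) ^ 2 * (6 * Real.log n + d * t)⌉₊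

/-- The range of parameters in which all error terms are controlled by `errorScale p n t`: the
squared distance `t / n` is large enough for the matrices beyond it to be negligible, and `n` is
large enough in terms of `p` and `t`. -/
structure AdmissibleScale (d n p : ℕ) (t : ℝ) : Prop where
  one_le_log : 1 ≤ Real.log n
  log_le : 100 * Real.log n ≤ t
  cube_le : 3072 ^ 2 * (p : ℝ) ^ 7 * t ^ 3 ≤ n
  cutoff_le : 768 ^ 2 * 10 * (p : ℝ) ^ 5 * (6 * Real.log n + d * t) ≤ n

namespace AdmissibleScale

variable {d n p : ℕ} {t : ℝ} (h : AdmissibleScale d n p t)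
include h

theorem hundred_le : 100 ≤ t := by linarith [h.one_le_log, h.log_le]

theorem pos : 0 < n :=
  Nat.pos_of_ne_zero fun hn => by simpa [hn, not_le.2 one_pos] using h.one_le_log

variable [NeZero p]

theorem pow_mul_log_add_le {k : ℕ} (hk : k ≤ 5) :
    (p : ℝ) ^ k * (6 * Real.log n + d * t) ≤ n / (768 ^ 2 * 10) := by
  have hL := h.one_le_log
  have ht := h.hundred_le
  rw [le_div_iff₀ (by norm_num)]
  calc _ ≤ (p : ℝ) ^ 5 * (6 * Real.log n + d * t) * (768 ^ 2 * 10) := by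
        gcongr; exact Nat.one_le_cast.2 NeZero.one_le
    _ ≤ _ := by linarith [h.cutoff_le]

theorem lt : d < n := by
  have hle := h.pow_mul_log_add_le (Nat.zero_le 5)
  have hdt : (d : ℝ) * 1 ≤ d * t := by gcongr; linarith [h.hundred_le]
  have hn : (0 : ℝ) < n := by exact_mod_cast h.pos
  have : (d : ℝ) < n := by linarith [h.one_le_log]
  exact_mod_cast this

theorem le : p ≤ n := by
  have hle := h.pow_mul_log_add_le (by norm_num : 1 ≤ 5)
  have hdt : 0 ≤ (d : ℝ) * t := mul_nonneg (Nat.cast_nonneg d) (by linarith [h.hundred_le])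
  have hp : (p : ℝ) * 1 ≤ p * (6 * Real.log n + d * t) := by gcongr; linarith [h.one_le_log]
  have : (0 : ℝ) ≤ n := Nat.cast_nonneg n
  have : (p : ℝ) ≤ n := by linarith
  exact_mod_cast this

theorem sixteen_mul_pow_mul_log_le : 16 * (p : ℝ) ^ 5 * Real.log n ≤ n := by
  have hle := h.pow_mul_log_add_le le_rfl
  have hdt : 0 ≤ (p : ℝ) ^ 5 * (d * t) := by have := h.hundred_le; positivity
  have : (0 : ℝ) ≤ n := Nat.cast_nonneg n
  linarith

theorem four_mul_pow_mul_le {k : ℕ} (hk : k ≤ 7) : 4 * (p : ℝ) ^ k * (t / n) ≤ 1 := by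
  have hn : (0 : ℝ) < n := by exact_mod_cast h.pos
  have ht := h.hundred_le
  rw [mul_div_assoc', div_le_one hn]
  calc 4 * (p : ℝ) ^ k * t ≤ 3072 ^ 2 * (p : ℝ) ^ 7 * t ^ 3 := by
        gcongr
        · norm_num
        · exact Nat.one_le_cast.2 NeZero.one_le
        · exact le_self_pow₀ (by linarith) (by norm_num)
    _ ≤ n := h.cube_le

theorem mul_rowCutoff_le : (768 * (p : ℝ)) ^ 2 * rowCutoff d n p t * (2 * p) ≤ n := by
  have hL := h.one_le_log
  have ht := h.hundred_le
  have hp : (1 : ℝ) ≤ (p : ℝ) ^ 2 := one_le_pow₀ (Nat.one_le_cast.2 NeZero.one_le)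
  have hS : 1 ≤ (p : ℝ) ^ 2 * (6 * Real.log n + d * t) :=
    one_le_mul_of_one_le_of_one_le hp (by linarith [mul_nonneg d.cast_nonneg (by linarith : 0 ≤ t)])
  have hceil : (rowCutoff d n p t : ℝ) ≤ 5 * (p : ℝ) ^ 2 * (6 * Real.log n + d * t) :=
    (Nat.ceil_lt_add_one (by positivity)).le.trans (by linarith)
  calc _ ≤ (768 * (p : ℝ)) ^ 2 * (5 * (p : ℝ) ^ 2 * (6 * Real.log n + d * t)) * (2 * p) := by gcongr
    _ = 768 ^ 2 * 10 * (p : ℝ) ^ 5 * (6 * Real.log n + d * t) := by ring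
    _ ≤ n := h.cutoff_le

omit [NeZero p] in
theorem errorScale_le : 3072 * errorScale p n t ≤ 1 := by
  have hn : (0 : ℝ) < n := by exact_mod_cast h.pos
  rw [← Real.sqrt_one, errorScale, ← Real.sqrt_sq (by norm_num : (0 : ℝ) ≤ 3072),
    ← Real.sqrt_mul (by norm_num)]
  apply Real.sqrt_le_sqrt
  rw [mul_div_assoc', div_le_one hn, ← mul_assoc]
  exact h.cube_le

theorem pow_le_pow_mul_cube {k : ℕ} (hk : k ≤ 7) : (p : ℝ) ^ k ≤ (p : ℝ) ^ 7 * t ^ 3 :=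
  (pow_le_pow_right₀ (Nat.one_le_cast.2 NeZero.one_le) hk).trans
    (le_mul_of_one_le_right (by positivity) (one_le_pow₀ (by linarith [h.hundred_le])))

theorem one_div_le_errorScale : 1 / (n : ℝ) ≤ errorScale p n t := by
  have hn : (1 : ℝ) ≤ n := by exact_mod_cast h.pos
  refine Real.le_sqrt_of_sq_le ?_
  rw [sq, div_mul_div_comm, one_mul, ← div_div]
  gcongr
  exact (div_le_one_of_le₀ hn (by positivity)).trans
    ((pow_zero (p : ℝ)).symm.trans_le (h.pow_le_pow_mul_cube (Nat.zero_le 7)))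

theorem div_sq_le_errorScale : p / (n : ℝ) ^ 2 ≤ errorScale p n t := by
  have hn : (0 : ℝ) < n := by exact_mod_cast h.pos
  refine le_trans ?_ h.one_div_le_errorScale
  rw [div_le_div_iff₀ (by positivity) hn, one_mul, sq]
  gcongr
  exact h.le

theorem mul_sqrt_le_errorScale : p * √(2 * (p : ℝ) ^ 3 / n) ≤ 2 * errorScale p n t := by
  rw [← div_le_iff₀' two_pos]
  refine Real.le_sqrt_of_sq_le ?_
  rw [div_pow, mul_pow, Real.sq_sqrt (by positivity), mul_div_assoc', div_right_comm]
  gcongr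
  have := h.pow_le_pow_mul_cube (by norm_num : 5 ≤ 7)
  have : (0 : ℝ) ≤ (p : ℝ) ^ 5 := by positivity
  linarith

omit [NeZero p] in
theorem mul_sqrt_eq_errorScale :
    2 * (p : ℝ) ^ 2 * t * √(4 * (p : ℝ) ^ 3 * (t / n)) = 4 * errorScale p n t := by
  have ht : 0 ≤ 2 * (p : ℝ) ^ 2 * t := by have := h.hundred_le; positivity
  rw [errorScale, ← Real.sqrt_sq ht, ← Real.sqrt_mul (sq_nonneg _),
    ← Real.sqrt_sq (zero_le_four (α := ℝ)), ← Real.sqrt_mul (sq_nonneg _)]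
  congr 1
  ring

end AdmissibleScale

namespace AdmissibleScale

section Rows

variable {p : ℕ} [NeZero p] {d n : ℕ} {t : ℝ} (h : AdmissibleScale d n p t)
include h

theorem four_mul_pow_mul_rowDeviation_le {m : ZMod p → ℕ} (hdev : rowDeviation d n m ≤ t / n) :
    4 * (p : ℝ) ^ 3 * rowDeviation d n m ≤ 1 := by
  grw [hdev]
  exact h.four_mul_pow_mul_le (by norm_num)

theorem mul_sqrt_chiSq_cube_le (hd : 0 < d) {N : ℕ} {m : ZMod p → ℕ} (hm : ∑ j, m j = d * N)
    (hdev : rowDeviation d n m ≤ t / n) :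
    N * √(chiSq fun j => (m j : ℝ)) ^ 3
      ≤ 2 * (p : ℝ) ^ 2 * (n * rowDeviation d n m) * √(4 * (p : ℝ) ^ 3 * (t / n)) := by
  have hdev' := h.four_mul_pow_mul_rowDeviation_le hdev
  have := rowDeviation_nonneg d n m
  calc N * √(chiSq fun j => (m j : ℝ)) ^ 3
      = N * chiSq (fun j => (m j : ℝ)) * √(chiSq fun j => (m j : ℝ)) := by
        rw [pow_succ, Real.sq_sqrt (chiSq_nonneg _), mul_assoc]
    _ ≤ _ := mul_le_mul (mul_chiSq_le_rowDeviation hm hd h.pos hdev')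
        (Real.sqrt_le_sqrt ((chiSq_le_rowDeviation hd h.pos hdev').trans (by gcongr)))
        (Real.sqrt_nonneg _) (by positivity)

theorem abs_pow_mul_rowCount_div_sub_one_le (hd : 3 ≤ d) {N : ℕ} (hNn : N ≤ n) {m : ZMod p → ℕ}
    (hm : ∑ j, m j = d * N) (hc : ∑ j : ZMod p, j * (m j : ZMod p) = 0)
    (hdev : rowDeviation d n m ≤ t / n) :
    |(p : ℝ) ^ N * rowCount d N m / (p * #(typeClass (Fin N × Fin d) m)) - 1|
      ≤ 192 * (2 * (p : ℝ) ^ 2 * (n * rowDeviation d n m) * √(4 * (p : ℝ) ^ 3 * (t / n))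
          + √(2 * (p : ℝ) ^ 3 / n)) + 1 / (n : ℝ) ^ 2 := by
  have hd0 : 0 < d := by omega
  have hn : (0 : ℝ) < n := by exact_mod_cast h.pos
  have hp : (0 : ℝ) < p := by exact_mod_cast Nat.pos_of_ne_zero (NeZero.ne p)
  have hdev' := h.four_mul_pow_mul_rowDeviation_le hdev
  have hndev : n * rowDeviation d n m ≤ t := by rwa [mul_comm, ← le_div_iff₀ hn]
  have hnN : (n : ℝ) ≤ 2 * p * N := le_two_mul_mul_of_rowDeviation_le hm hd0 h.pos hdev'
  have hN : (0 : ℝ) < N := pos_of_mul_pos_right (hn.trans_le hnN) (by positivity)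
  have hcube := h.mul_sqrt_chiSq_cube_le hd0 hm hdev
  have hsmall : 768 * (N * √(chiSq fun j => (m j : ℝ)) ^ 3) ≤ 1 := by
    have : 2 * (p : ℝ) ^ 2 * (n * rowDeviation d n m) * √(4 * (p : ℝ) ^ 3 * (t / n))
        ≤ 2 * (p : ℝ) ^ 2 * t * √(4 * (p : ℝ) ^ 3 * (t / n)) := by gcongr
    linarith [h.mul_sqrt_eq_errorScale, h.errorScale_le]
  have hsqrt : p / √N ≤ √(2 * (p : ℝ) ^ 3 / n) := by
    refine Real.le_sqrt_of_sq_le ?_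
    rw [div_pow, Real.sq_sqrt hN.le, div_le_div_iff₀ hN hn]
    calc (p : ℝ) ^ 2 * n ≤ (p : ℝ) ^ 2 * (2 * p * N) := by gcongr
      _ = 2 * (p : ℝ) ^ 3 * N := by ring
  have hcutoff : (768 * (p : ℝ)) ^ 2 * rowCutoff d n p t ≤ N :=
    le_of_mul_le_mul_right (h.mul_rowCutoff_le.trans (hnN.trans_eq (mul_comm _ _))) (by positivity)
  have hfar : farError d N (rowCutoff d n p t) m ≤ 1 / (n : ℝ) ^ 2 :=
    farError_le hd0 h.lt hNn
      ((mul_chiSq_le_rowDeviation hm hd0 h.pos hdev').trans (by gcongr)) (Nat.le_ceil _)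
  refine (_root_.abs_pow_mul_rowCount_div_sub_one_le hd (by exact_mod_cast hN) hm hc hsmall
    hcutoff).trans ?_
  gcongr

theorem abs_prod_rowFactor_sub_one_le (hd : 3 ≤ d) {M : ZMod p → ZMod p → ℕ}
    (htotal : ∑ i, ∑ j, M i j = d * n) (hdvd : ∀ i, d ∣ ∑ j, M i j)
    (hc : ∀ i, ∑ j : ZMod p, j * (M i j : ZMod p) = 0)
    (hdev : ∑ i, rowDeviation d n (M i) ≤ t / n) :
    |∏ i, rowFactor d M i - 1| ≤ 2306 * errorScale p n t := by
  have hn : (0 : ℝ) < n := by exact_mod_cast h.pos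
  have hrow (i : ZMod p) : rowDeviation d n (M i) ≤ t / n :=
    (single_le_sum (fun i _ => rowDeviation_nonneg d n (M i)) (mem_univ i)).trans hdev
  have hle (i : ZMod p) : (∑ j, M i j) / d ≤ n :=
    Nat.div_le_of_le_mul (htotal ▸ single_le_sum (f := fun i => ∑ j, M i j)
      (fun _ _ => Nat.zero_le _) (mem_univ i))
  have hsum : ∑ i, (192 * (2 * (p : ℝ) ^ 2 * (n * rowDeviation d n (M i))
        * √(4 * (p : ℝ) ^ 3 * (t / n)) + √(2 * (p : ℝ) ^ 3 / n)) + 1 / (n : ℝ) ^ 2)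
      ≤ 1153 * errorScale p n t := by
    calc _ = 192 * (2 * (p : ℝ) ^ 2 * (n * ∑ i, rowDeviation d n (M i))
          * √(4 * (p : ℝ) ^ 3 * (t / n)) + p * √(2 * (p : ℝ) ^ 3 / n)) + p / (n : ℝ) ^ 2 := by
          simp only [sum_add_distrib, ← mul_sum, ← sum_mul, sum_const, card_univ, ZMod.card,
            nsmul_eq_mul, mul_one_div]
      _ ≤ 192 * (2 * (p : ℝ) ^ 2 * t * √(4 * (p : ℝ) ^ 3 * (t / n)) + 2 * errorScale p n t)
          + errorScale p n t := by
          have hndev : n * ∑ i, rowDeviation d n (M i) ≤ t := by rwa [mul_comm, ← le_div_iff₀ hn]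
          grw [hndev, h.mul_sqrt_le_errorScale, h.div_sq_le_errorScale]
      _ = _ := by rw [h.mul_sqrt_eq_errorScale]; ring
  refine (abs_prod_sub_one_le (fun i => h.abs_pow_mul_rowCount_div_sub_one_le hd (hle i)
    (Nat.mul_div_cancel' (hdvd i)).symm (hc i) (hrow i)) ?_).trans ?_ <;>
  linarith [h.errorScale_le, h.one_div_le_errorScale, one_div_pos.2 hn]

end Rows

end AdmissibleScale

section MainTerm

theorem sum_edgeDensity_sub_sq_eq_sum_rowDeviation {p : ℕ} [NeZero p] {ι : Type*} [Fintype ι]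
    {d n : ℕ} (hE : 2 * Fintype.card ι = d * n) (f : ι → ZMod p × ZMod p) :
    ∑ z, (edgeDensity f z - 1 / (p : ℝ) ^ 2) ^ 2 = ∑ i, rowDeviation d n (edgeMatrix f i) := by
  simp only [Fintype.sum_prod_type, edgeDensity, rowDeviation, hE, Nat.cast_mul]

namespace AdmissibleScale

variable {p : ℕ} {d n E : ℕ} {t : ℝ} (h : AdmissibleScale d n p t)
include h

theorem one_div_eq_exp : 1 / (n : ℝ) = Real.exp (-Real.log n) := by
  rw [Real.exp_neg, Real.exp_log (by exact_mod_cast h.pos), one_div]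

variable [NeZero p]

theorem pow_self_le_exp : (p : ℝ) ^ p ≤ Real.exp (p * Real.log n) := by
  rw [Real.exp_nat_mul, Real.exp_log (by exact_mod_cast h.pos)]
  gcongr
  exact h.le

theorem two_mul_add_one_pow_le_exp (hE : 2 * E = d * n) (k : ℕ) :
    ((2 * E : ℕ) + 1 : ℝ) ^ k ≤ Real.exp (k * (2 * Real.log n)) := by
  rw [Real.exp_nat_mul]
  gcongr
  rw [hE, ← Nat.cast_ofNat, Real.exp_nat_mul, Real.exp_log (by exact_mod_cast h.pos)]
  have := h.lt
  exact_mod_cast (by nlinarith : d * n + 1 ≤ n ^ 2)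

theorem pow_self_mul_exp_neg_le (hE : 2 * E = d * n) :
    (p : ℝ) ^ p * (((2 * E : ℕ) + 1 : ℝ) ^ (p ^ 2 + p) * Real.exp (-(n * p ^ 2 * (t / n) / 16)))
      ≤ 1 / n := by
  have hp : (1 : ℝ) ≤ p := Nat.one_le_cast.2 NeZero.one_le
  have hn : (n : ℝ) ≠ 0 := by exact_mod_cast h.pos.ne'
  grw [h.pow_self_le_exp, h.two_mul_add_one_pow_le_exp hE, h.one_div_eq_exp]
  rw [← Real.exp_add, ← Real.exp_add, Real.exp_le_exp, mul_right_comm, mul_div_cancel₀ _ hn]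
  push_cast
  have hlog : (p : ℝ) ^ 2 * (100 * Real.log n) ≤ p ^ 2 * t := by gcongr; exact h.log_le
  have : 0 ≤ (17 / 4 * (p : ℝ) ^ 2 - 3 * p - 1) * Real.log n :=
    mul_nonneg (by nlinarith) (Real.log_natCast_nonneg n)
  linarith

theorem pow_self_mul_one_sub_pow_le (hd : 2 ≤ d) (hE : 2 * E = d * n) :
    (p : ℝ) ^ p * (((2 * E : ℕ) + 1 : ℝ) ^ p * (1 - 1 / (4 * (p : ℝ) ^ 4)) ^ E) ≤ 1 / n := by
  have hp : (1 : ℝ) ≤ p := Nat.one_le_cast.2 NeZero.one_le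
  have hEn : (n : ℝ) ≤ E := by exact_mod_cast (by nlinarith : n ≤ E)
  have hgap_nonneg : 0 ≤ (1 - 1 / (4 * (p : ℝ) ^ 4)) ^ E :=
    pow_nonneg one_sub_one_div_four_mul_pow_nonneg E
  have hgap : (1 - 1 / (4 * (p : ℝ) ^ 4)) ^ E ≤ Real.exp (E * -(1 / (4 * (p : ℝ) ^ 4))) := by
    rw [Real.exp_nat_mul]
    exact pow_le_pow_left₀ one_sub_one_div_four_mul_pow_nonneg (Real.one_sub_le_exp_neg _) E
  grw [h.pow_self_le_exp, h.two_mul_add_one_pow_le_exp hE, hgap, h.one_div_eq_exp]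
  rw [← Real.exp_add, ← Real.exp_add, Real.exp_le_exp]
  have hfour : 4 * (p * Real.log n) ≤ E * (1 / (4 * (p : ℝ) ^ 4)) := by
    rw [mul_one_div, le_div_iff₀ (by positivity)]
    linarith [h.sixteen_mul_pow_mul_log_le]
  have : Real.log n ≤ p * Real.log n := le_mul_of_one_le_left (Real.log_natCast_nonneg n) hp
  linarith

end AdmissibleScale

variable {p : ℕ} [Fact p.Prime] {d n E : ℕ} {t : ℝ}

theorem AdmissibleScale.abs_sum_pow_mul_edgeLaw_sub_le_errorScale (h : AdmissibleScale d n p t)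
    (hd : 2 ≤ d) (hE : 2 * E = d * n) (hg : Nat.gcd p d = 1) :
    |∑ f : Fin E → ZMod p × ZMod p with (∀ i, ∑ j : ZMod p, j * (edgeMatrix f i j : ZMod p) = 0) ∧
          ∑ i, rowDeviation d n (edgeMatrix f i) ≤ t / n, (p : ℝ) ^ p * edgeLaw d n f
        - (1 + if p = 2 then 1 else 0)| ≤ 2 * errorScale p n t := by
  have hn := h.pos
  have : NeZero E := ⟨by nlinarith⟩
  have hE' : 2 * Fintype.card (Fin E) = d * n := by rwa [Fintype.card_fin]
  have hτ : (Fintype.card (ZMod p) : ℝ) ^ 4 * (t / n) ≤ 4 := by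
    rw [ZMod.card]; linarith [h.four_mul_pow_mul_le (by norm_num : 4 ≤ 7)]
  have hdegree (f : Fin E → ZMod p × ZMod p) (hf : ∑ i, rowDeviation d n (edgeMatrix f i) ≤ t / n)
      (i : ZMod p) : (1 : ℝ) / 2 ≤ p * degreeDensity f i := by
    have hlow := one_div_two_mul_le_sum_div (h.four_mul_pow_mul_rowDeviation_le
      ((single_le_sum (fun i _ => rowDeviation_nonneg d n (edgeMatrix f i)) (mem_univ i)).trans hf))
    rw [sum_edgeMatrix, div_mul_eq_div_div, div_le_iff₀' (by simp [NeZero.pos])] at hlow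
    rwa [degreeDensity, hE', Nat.cast_mul]
  have htail := sum_edgeLaw_filter_not_le hE' hτ
  simp only [ZMod.card, sum_edgeDensity_sub_sq_eq_sum_rowDeviation hE', Fintype.card_fin] at htail
  refine (abs_sum_pow_mul_edgeLaw_sub_le hE' hg hdegree).trans ?_
  grw [htail]
  rw [Fintype.card_fin, mul_add]
  linarith [h.pow_self_mul_exp_neg_le hE, h.pow_self_mul_one_sub_pow_le hd hE,
    h.one_div_le_errorScale]

theorem AdmissibleScale.abs_sum_edgeLaw_mul_prod_rowFactor_sub_le (h : AdmissibleScale d n p t)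
    (hd : 3 ≤ d) (hE : 2 * E = d * n) (hg : Nat.gcd p d = 1) :
    |∑ f : Fin E → ZMod p × ZMod p with (∀ i, ∑ j : ZMod p, j * (edgeMatrix f i j : ZMod p) = 0) ∧
          ∑ i, rowDeviation d n (edgeMatrix f i) ≤ t / n,
        (p : ℝ) ^ p * edgeLaw d n f * ∏ i, rowFactor d (edgeMatrix f) i
      - (1 + if p = 2 then 1 else 0)| ≤ 9226 * errorScale p n t := by
  have hmain := h.abs_sum_pow_mul_edgeLaw_sub_le_errorScale (by omega) hE hg
  set F : Finset (Fin E → ZMod p × ZMod p) := {f |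
    (∀ i, ∑ j : ZMod p, j * (edgeMatrix f i j : ZMod p) = 0) ∧
      ∑ i, rowDeviation d n (edgeMatrix f i) ≤ t / n}
  have hfour : ∑ f ∈ F, (p : ℝ) ^ p * edgeLaw d n f ≤ 4 := by
    have : (1 + if p = 2 then 1 else 0 : ℝ) ≤ 2 := by split_ifs <;> norm_num
    linarith [(abs_le.1 hmain).2, h.errorScale_le]
  have hfactor (f) (hf : f ∈ F) :
      |(p : ℝ) ^ p * edgeLaw d n f * ∏ i, rowFactor d (edgeMatrix f) i - p ^ p * edgeLaw d n f|
        ≤ p ^ p * edgeLaw d n f * (2306 * errorScale p n t) := by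
    have hlaw := edgeLaw_nonneg d n f
    rw [← mul_sub_one, abs_mul, abs_of_nonneg (by positivity)]
    rcases eq_or_ne (edgeLaw d n f) 0 with h0 | h0
    · simp [h0]
    obtain ⟨hc, hdev⟩ := (mem_filter.1 hf).2
    gcongr
    refine h.abs_prod_rowFactor_sub_one_le hd ?_ (fun i => ?_) hc hdev
    · simp only [sum_edgeMatrix, sum_degreeVector, Fintype.card_fin, hE]
    · exact sum_edgeMatrix f i ▸ dvd_degreeVector_of_edgeLaw_ne_zero h0 i
  have hprod : |∑ f ∈ F, (p : ℝ) ^ p * edgeLaw d n f * ∏ i, rowFactor d (edgeMatrix f) i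
      - ∑ f ∈ F, (p : ℝ) ^ p * edgeLaw d n f| ≤ 4 * (2306 * errorScale p n t) := by
    have hscale : 0 ≤ errorScale p n t := Real.sqrt_nonneg _
    rw [← sum_sub_distrib]
    refine (abs_sum_le_sum_abs _ _).trans ((sum_le_sum hfactor).trans ?_)
    rw [← sum_mul]
    gcongr
  refine (abs_sub_le _ _ _).trans ((add_le_add hprod hmain).trans_eq ?_)
  ring

end MainTerm

section Parameters

theorem eventually_mul_log_pow_le_rpow {A : ℝ} (hA : 0 < A) (k : ℕ) {s : ℝ} (hs : 0 < s) :
    ∀ᶠ n : ℕ in Filter.atTop, A * Real.log n ^ k ≤ (n : ℝ) ^ s := by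
  have hlog := ((isLittleO_log_rpow_rpow_atTop k hs).def (inv_pos.2 hA)).natCast_atTop
  filter_upwards [hlog, Filter.eventually_ge_atTop 1] with n hn hn1
  rw [Real.rpow_natCast, Real.norm_of_nonneg (by positivity),
    Real.norm_of_nonneg (by positivity)] at hn
  rwa [← le_inv_mul_iff₀ hA]

theorem eventually_admissibleScale (d : ℕ) {b : ℝ} (hb : 100 ≤ b) :
    ∀ᶠ n : ℕ in Filter.atTop, ∀ p : ℕ, 1 ≤ p → (p : ℝ) ≤ (n : ℝ) ^ ((1 : ℝ) / 8) →
      AdmissibleScale d n p (b * Real.log n) := by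
  have hlarge := eventually_mul_log_pow_le_rpow
    (by positivity : 0 < 3072 ^ 2 * b ^ 3 + 768 ^ 2 * 10 * (6 + d * b)) 3
    (by norm_num : (0 : ℝ) < 1 / 8)
  have hlog := (Real.tendsto_log_atTop.comp tendsto_natCast_atTop_atTop).eventually_ge_atTop 1
  filter_upwards [hlarge, hlog] with n hA (hL : 1 ≤ Real.log n) p hp hpn
  have hp : (1 : ℝ) ≤ p := by exact_mod_cast hp
  have hL3 : Real.log n ≤ Real.log n ^ 3 := le_self_pow₀ hL (by norm_num)
  have hmul : (p : ℝ) ^ 7 * ((3072 ^ 2 * b ^ 3 + 768 ^ 2 * 10 * (6 + d * b)) * Real.log n ^ 3)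
      ≤ n := by
    grw [hA, hpn, ← pow_succ, ← Real.rpow_natCast, ← Real.rpow_mul n.cast_nonneg]
    norm_num
  refine ⟨hL, by gcongr, ?_, ?_⟩
  · refine le_trans ?_ hmul
    have : 0 ≤ (p : ℝ) ^ 7 * (768 ^ 2 * 10 * (6 + d * b) * Real.log n ^ 3) := by positivity
    linarith
  · refine le_trans ?_ hmul
    calc 768 ^ 2 * 10 * (p : ℝ) ^ 5 * (6 * Real.log n + d * (b * Real.log n))
        = p ^ 5 * (768 ^ 2 * 10 * (6 + d * b) * Real.log n) := by ring
      _ ≤ _ := by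
        gcongr
        · norm_num
        · linarith [(by positivity : 0 ≤ 3072 ^ 2 * b ^ 3)]

theorem errorScale_mul_log_le {b : ℝ} (hb : 0 ≤ b) (p n : ℕ) [NeZero p] :
    errorScale p n (b * Real.log n)
      ≤ √(b ^ 3) * (p ^ 4 * Real.log n ^ ((3 : ℝ) / 2) / √n) := by
  have hL := Real.log_natCast_nonneg n
  have hp : (1 : ℝ) ≤ p := Nat.one_le_cast.2 NeZero.one_le
  calc errorScale p n (b * Real.log n)
      ≤ √(b ^ 3 * (((p : ℝ) ^ 4) ^ 2 * Real.log n ^ 3 / n)) := by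
        rw [errorScale, mul_pow, ← pow_mul, ← mul_assoc, mul_comm (_ ^ 7), mul_assoc, mul_div_assoc]
        gcongr
        norm_num
    _ = _ := by
      rw [Real.sqrt_mul (by positivity), Real.sqrt_div (by positivity),
        Real.sqrt_mul (by positivity), Real.sqrt_sq (by positivity),
        Real.sqrt_eq_rpow (Real.log n ^ 3), ← Real.rpow_natCast (Real.log n), ← Real.rpow_mul hL]
      norm_num

end Parameters

section Assembly

variable {p : ℕ} [Fact p.Prime] {d n : ℕ} {t : ℝ}

theorem AdmissibleScale.sum_div_lt (h : AdmissibleScale d n p t) (hd : 0 < d)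
    {M : ZMod p → ZMod p → ℕ} (hM : ∑ i, ∑ j, M i j = d * n)
    (hdev : ∑ i, rowDeviation d n (M i) ≤ t / n) (i : ZMod p) : (∑ j, M i j) / d < n := by
  have hlow := one_div_two_mul_le_sum_div (h.four_mul_pow_mul_rowDeviation_le
    ((single_le_sum (fun i _ => rowDeviation_nonneg d n (M i)) (mem_univ (i + 1))).trans hdev))
  have hpos : 0 < ∑ j, M (i + 1) j := by
    refine Nat.pos_of_ne_zero fun hzero => hlow.not_gt ?_
    rw [hzero, Nat.cast_zero, zero_div]
    have : (0 : ℝ) < p := by exact_mod_cast NeZero.pos p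
    positivity
  have hpair : ∑ j, M i j + ∑ j, M (i + 1) j ≤ ∑ i, ∑ j, M i j := by
    rw [← sum_pair (f := fun i => ∑ j, M i j) (by simp : i ≠ i + 1)]
    exact sum_le_sum_of_subset (subset_univ _)
  rw [Nat.div_lt_iff_lt_mul hd, mul_comm]
  omega

theorem AdmissibleScale.abs_mul_finsum_matrixWeight_sub_le (h : AdmissibleScale d n p t)
    (hd : 3 ≤ d) (hn : Even (d * n)) (hg : Nat.gcd p d = 1) :
    |2 ^ (d * n / 2) * (d * n / 2).factorial / (d * n).factorial *
        (∑ᶠ M ∈ {M : ZMod p → ZMod p → ℕ | (∀ i j, M i j = M j i) ∧ (∀ i, Even (M i i)) ∧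
          ∑ i, ∑ j, M i j = d * n ∧ (∀ i, d ∣ ∑ j, M i j) ∧ (∑ j, M 0 j) / d < n ∧
          (∀ i, ∑ j : ZMod p, j * (M i j : ZMod p) = 0) ∧ ∑ i, rowDeviation d n (M i) ≤ t / n},
          matrixWeight d n M) - (1 + if p = 2 then 1 else 0)| ≤ 9226 * errorScale p n t := by
  classical
  have hE : 2 * (d * n / 2) = d * n := Nat.two_mul_div_two_of_even hn
  have hregroup := mul_finsum_matrixWeight_eq_sum (by omega) hE
    fun M : ZMod p → ZMod p → ℕ =>
      (∀ i, ∑ j : ZMod p, j * (M i j : ZMod p) = 0) ∧ ∑ i, rowDeviation d n (M i) ≤ t / n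
  convert h.abs_sum_edgeLaw_mul_prod_rowFactor_sub_le hd hE hg using 3
  rw [← hregroup]
  congr! 4 with M
  have : ∑ i, ∑ j, M i j = d * n → ∑ i, rowDeviation d n (M i) ≤ t / n → (∑ j, M 0 j) / d < n :=
    fun hM hdev => h.sum_div_lt (by omega) hM hdev 0
  simp only [Set.mem_ofPred_eq]
  tauto

end Assembly

/-- Local CLT estimate (undirected case): for `d ≥ 3` there is `𝔟₀ > 0` so that for every
`𝔟 ≥ 𝔟₀` there are `C, c, N > 0` such that for all `n ≥ N` with `nd` even and primes `p`
with `gcd(p,d) = 1` and `p ≤ c n^{1/8}`, the normalized sum over equidistributed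
symmetric matrices `M ∈ ℰ_𝔟` of the matching/walk weights is within
`C p⁴ (ln n)^{3/2}/√n` of `1 + 1_{p=2}`. -/
theorem undirected_lclt_estimate (d : ℕ) (hd : 3 ≤ d) :
    ∃ b₀ : ℝ, 0 < b₀ ∧ ∀ b : ℝ, b₀ ≤ b →
      ∃ C c : ℝ, ∃ N : ℕ, 0 < C ∧ 0 < c ∧ 0 < N ∧
        ∀ n : ℕ, N ≤ n → Even (n * d) → ∀ (p : ℕ) [Fact p.Prime], Nat.gcd p d = 1 →
          (p : ℝ) ≤ c * (n : ℝ) ^ ((1 : ℝ) / 8) →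
          |((2 : ℝ) ^ (n * d / 2) * ((n * d / 2).factorial : ℝ) / ((n * d).factorial : ℝ)) *
            (∑ᶠ M ∈ {M : ZMod p → ZMod p → ℕ |
                (∀ i j, M i j = M j i) ∧ (∀ i, Even (M i i)) ∧
                (∑ i : ZMod p, ∑ j : ZMod p, M i j) = d * n ∧
                (∀ i, d ∣ ∑ j, M i j) ∧
                (∑ j : ZMod p, M 0 j) / d < n ∧
                (∀ i, (∑ j : ZMod p, j * (M i j : ZMod p)) = 0) ∧
                (∑ i : ZMod p, ∑ j : ZMod p,
                  ((M i j : ℝ) / (d * n) - 1 / (p : ℝ) ^ 2) ^ 2) ≤ b * Real.log n / n},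
              ((n.factorial : ℝ) / ∏ i : ZMod p, (((∑ j, M i j) / d).factorial : ℝ)) *
              (∏ q ∈ Finset.univ.filter (fun q : ZMod p × ZMod p => q.1.val < q.2.val),
                  ((M q.1 q.2).factorial : ℝ)) *
              (∏ i : ZMod p,
                  ((M i i).factorial : ℝ) /
                    (2 ^ (M i i / 2) * ((M i i / 2).factorial : ℝ))) *
              (∏ i : ZMod p,
                ((Finset.univ.filter (fun a : Fin ((∑ j, M i j) / d) → Fin d → ZMod p =>
                  (∀ k, ∑ r, a k r = 0) ∧
                  (∀ j : ZMod p, (∑ k, Phi (a k) j) = M i j))).card : ℝ)))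
            - (1 + if p = 2 then 1 else 0)|
          ≤ C * (p : ℝ) ^ 4 * (Real.log n) ^ ((3 : ℝ) / 2) / Real.sqrt n := by
  refine ⟨100, by norm_num, fun b hb => ?_⟩
  obtain ⟨N, hN⟩ := Filter.eventually_atTop.1 (eventually_admissibleScale d hb)
  refine ⟨9226 * √(b ^ 3), 1, N + 1, by positivity, one_pos, N.succ_pos,
    fun n hn heven p _ hg hp => ?_⟩
  rw [one_mul] at hp
  rw [mul_comm n d] at heven ⊢
  have h : AdmissibleScale d n p (b * Real.log n) := hN n (by omega) p NeZero.one_le hp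
  calc _ ≤ 9226 * errorScale p n (b * Real.log n) :=
        h.abs_mul_finsum_matrixWeight_sub_le hd heven hg
    _ ≤ 9226 * (√(b ^ 3) * (p ^ 4 * Real.log n ^ ((3 : ℝ) / 2) / √n)) := by
        grw [errorScale_mul_log_le (by linarith) p n]
    _ = _ := by ring
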